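/- arXiv:1312.6023 — 2 statements merged into one kernel-verified Lean document; each statement's English description precedes it below -/
import Mathlib

section
/- Let A be a unital complex Banach algebra, let S = Σ_{i=1}^n M_{a_i,b_i} be a spectrally bounded elementary operator of length n on A, and let ρ be an irreducible representation of A on a complex Banach space E. Suppose dim V'_{S_ρ} = lDim V'_{S_ρ}, where V'_{S_ρ} = span{ρ(b_i a_j) : 1 ≤ i,j ≤ n} + ℂ·I. Then either (a) for every ζ ∈ E and every x ∈ A with ρ(x)ρ(b_i a_j)ζ ∈ ℂζ for all i, j, the operator Σ_{i=1}^n ρ(a_i)ρ(x)ρ(b_i) maps span{ρ(a_1)ζ,…,ρ(a_n)ζ} into itself and its restriction to this subspace is nilpotent; or (b) there exist u, v ∈ A and an elementary operator S₂ of length n−1 such that S = M_{u,v} + S₂ and ρ(vu) is a nonzero scalar multiple of the identity operator on E. -/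
open scoped ENNReal NNReal

/-- A map between complex algebras is spectrally bounded if `r(Tx) ≤ M·r(x)`
for some constant `M ≥ 0` and all `x`. -/
def SpectrallyBounded {A B : Type*} [Ring A] [Algebra ℂ A] [Ring B] [Algebra ℂ B]
    (T : A → B) : Prop :=
  ∃ M : ℝ≥0, ∀ x : A, spectralRadius ℂ (T x) ≤ (M : ℝ≥0∞) * spectralRadius ℂ x

/-- Evaluation of continuous linear operators at a vector, as a linear map. -/
def evalCLM {E : Type*} [NormedAddCommGroup E] [NormedSpace ℂ E] (ζ : E) :
    (E →L[ℂ] E) →ₗ[ℂ] E where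
  toFun v := v ζ
  map_add' _ _ := rfl
  map_smul' _ _ := rfl

/-- The local dimension `lDim V = max {dim V ζ : ζ ∈ E}` of a space `V` of
continuous linear operators on `E`. -/
noncomputable def localDim {E : Type*} [NormedAddCommGroup E] [NormedSpace ℂ E]
    (V : Submodule ℂ (E →L[ℂ] E)) : ℕ :=
  sSup {n : ℕ | ∃ ζ : E, n = Module.finrank ℂ (V.map (evalCLM ζ))}

/-!
If the restriction in (a) is not nilpotent, it has an eigenvalue `l ≠ 0`, with an eigenvector of
the form `u ζ`, where `u = ∑ t_i a_i` and `x b_i u ζ = l t_i ζ`. The dimension hypothesis supplies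
a vector `ζ₀` that no nonzero operator in `V'` annihilates.

Suppose that some functional `g` satisfies `g ζ₀ = 0` and `g (b_i u ζ₀) = t_i` for all `i`. By
Jacobson density some `y` acts on `ζ₀` and the vectors `b_i u ζ₀` like `g ⊗ ζ₀`, and some unit `h`
fixes `ζ₀` and dilates a complement of `ζ₀` by `r > 1` on these vectors. Then `u ζ₀` is an
eigenvector of `S (h⁻ᵏ y hᵏ)` for the eigenvalue `rᵏ`, while all the conjugates `h⁻ᵏ y hᵏ` have the
same spectral radius, which contradicts spectral boundedness.

So there is no such `g`, and the Fredholm alternative gives `v = ∑ s_i b_i` with `∑ s_i t_i = 1` and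
`v u ζ₀ ∈ ℂ ζ₀`, say `v u ζ₀ = μ ζ₀`. By the choice of `ζ₀` then `ρ(vu) = μ`, and `μ` is
nonzero because `x v u ζ = l ζ`. Finally `∑ s_i t_i = 1` makes `S - M_{u,v}` one term shorter.
-/

section LinearAlgebra

variable {K V : Type*} [Field K] [AddCommGroup V] [Module K V]

theorem exists_dual_apply_eq_or_exists_sum_smul_mem {ι : Type*} [Fintype ι]
    (W : Submodule K V) (z : ι → V) (t : ι → K) :
    (∃ g : Module.Dual K V, (∀ w ∈ W, g w = 0) ∧ ∀ i, g (z i) = t i) ∨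
      ∃ s : ι → K, ∑ i, s i • z i ∈ W ∧ ∑ i, s i * t i = 1 := by
  classical
  let f : (ι → K) →ₗ[K] V ⧸ W := W.mkQ ∘ₗ Fintype.linearCombination K z
  let τ : Module.Dual K (ι → K) := Fintype.linearCombination K t
  by_cases hτ : τ ∈ f.ker.dualAnnihilator
  · rw [← f.range_dualMap_eq_dualAnnihilator_ker] at hτ
    obtain ⟨g, hg⟩ := hτ
    refine .inl ⟨g ∘ₗ W.mkQ, fun w hw => by simp [(Submodule.Quotient.mk_eq_zero W).mpr hw],
      fun i => ?_⟩
    simpa [f, τ] using LinearMap.congr_fun hg (Pi.single i 1)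
  · obtain ⟨s, hs, hst⟩ : ∃ s, f s = 0 ∧ τ s ≠ 0 := by
      simpa [Submodule.mem_dualAnnihilator] using hτ
    refine .inr ⟨(τ s)⁻¹ • s, ?_, ?_⟩
    · have hsW : ∑ i, s i • z i ∈ W := by
        rw [← Submodule.Quotient.mk_eq_zero]
        simpa [f, Fintype.linearCombination_apply, ← Submodule.mkQ_apply] using hs
      simpa [Finset.smul_sum, smul_smul] using W.smul_mem (τ s)⁻¹ hsW
    · have hτs : τ s = ∑ i, s i * t i := by simp [τ, Fintype.linearCombination_apply]
      simp only [Pi.smul_apply, smul_eq_mul, mul_assoc, ← Finset.mul_sum, ← hτs]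
      exact inv_mul_cancel₀ hst

theorem exists_ne_zero_hasEigenvalue_of_not_isNilpotent [IsAlgClosed K] [FiniteDimensional K V]
    {φ : Module.End K V} (hφ : ¬ IsNilpotent φ) : ∃ l ≠ 0, φ.HasEigenvalue l := by
  contrapose! hφ
  have htop : φ.maxGenEigenspace 0 = ⊤ := by
    rw [eq_top_iff, ← Module.End.iSup_maxGenEigenspace_eq_top φ]
    refine iSup_le fun l => ?_
    rcases eq_or_ne l 0 with rfl | hl
    · exact le_rfl
    · by_contra hle
      have hne : φ.maxGenEigenspace l ≠ ⊥ := fun h => hle (h ▸ bot_le)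
      exact hφ l hl (Module.End.HasUnifEigenvalue.lt zero_lt_one hne)
  refine ((φ.charpoly_nilpotent_tfae).out 0 2).mpr fun m => ?_
  simpa using (φ.mem_maxGenEigenspace 0 m).mp (htop ▸ Submodule.mem_top)

end LinearAlgebra

section ElementaryOperators

variable {A : Type*} [Ring A]

/-- `S` is an elementary operator of length at most `m`, that is, a sum of `m` two-sided
multiplications `x ↦ c i * x * d i`, some of which may vanish. -/
def IsSumOfTwoSidedMul (m : ℕ) (S : A → A) : Prop :=
  ∃ c d : Fin m → A, ∀ x : A, S x = ∑ i, c i * x * d i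

theorem IsSumOfTwoSidedMul.succ_of_sub {m : ℕ} {S : A → A} {u v : A}
    (h : IsSumOfTwoSidedMul m fun x => S x - u * x * v) : IsSumOfTwoSidedMul (m + 1) S := by
  obtain ⟨c, d, hcd⟩ := h
  refine ⟨Fin.cons u c, Fin.cons v d, fun x => ?_⟩
  simp [Fin.sum_univ_succ, ← hcd]

variable {K : Type*} [Field K] [Algebra K A] {n : ℕ}

theorem isSumOfTwoSidedMul_pred_of_sum_smul_eq_zero {a : Fin n → A} {t : Fin n → K}
    (ht : t ≠ 0) (hat : ∑ i, t i • a i = 0) (b : Fin n → A) :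
    IsSumOfTwoSidedMul (n - 1) fun x => ∑ i, a i * x * b i := by
  obtain ⟨k, hk⟩ := Function.ne_iff.mp ht
  obtain _ | m := n
  · exact k.elim0
  have hak : a k = ∑ i, -((t k)⁻¹ * t (k.succAbove i)) • a (k.succAbove i) := by
    rw [Fin.sum_univ_succAbove _ k, add_eq_zero_iff_eq_neg] at hat
    rw [← inv_smul_smul₀ hk (a k), hat]
    simp [Finset.smul_sum, smul_smul]
  refine ⟨fun i => a (k.succAbove i),
    fun i => b (k.succAbove i) - ((t k)⁻¹ * t (k.succAbove i)) • b k, fun x => ?_⟩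
  beta_reduce
  rw [Fin.sum_univ_succAbove _ k]
  nth_rw 1 [hak]
  simp only [Finset.sum_mul, mul_sub, Finset.sum_sub_distrib, neg_smul, neg_mul, smul_mul_assoc,
    mul_smul_comm, Finset.sum_neg_distrib]
  exact neg_add_eq_sub _ _

theorem isSumOfTwoSidedMul_pred_sub (a b : Fin n → A) {s t : Fin n → K}
    (hst : ∑ i, s i * t i = 1) :
    IsSumOfTwoSidedMul (n - 1) fun x =>
      ∑ i, a i * x * b i - (∑ i, t i • a i) * x * ∑ i, s i • b i := by
  set u := ∑ i, t i • a i
  have ht : t ≠ 0 := by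
    rintro rfl
    simp at hst
  -- Subtracting `u x v` replaces `a i` by `a i - s i • u`, and these are linearly dependent.
  have hu : ∑ i, t i • (a i - s i • u) = 0 := by
    simp only [smul_sub, smul_smul, Finset.sum_sub_distrib, ← Finset.sum_smul]
    simp [mul_comm (t _), hst, u]
  convert isSumOfTwoSidedMul_pred_of_sum_smul_eq_zero ht hu b using 2 with x
  simp [sub_mul, Finset.mul_sum]

end ElementaryOperators

theorem sum_smul_mul_sum_smul_mem_span {R A ι κ : Type*} [CommSemiring R] [Semiring A]
    [Algebra R A] [Fintype ι] [Fintype κ] (b : ι → A) (a : κ → A) (s : ι → R) (t : κ → R) :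
    (∑ i, s i • b i) * ∑ j, t j • a j ∈
      Submodule.span R (Set.range fun p : ι × κ => b p.1 * a p.2) := by
  simp only [Finset.sum_mul_sum, smul_mul_smul_comm]
  exact Submodule.sum_mem _ fun i _ => Submodule.sum_mem _ fun j _ =>
    Submodule.smul_mem _ _ (Submodule.subset_span ⟨(i, j), rfl⟩)

theorem mem_spectrum_of_smul_eq {R A E : Type*} [CommRing R] [Ring A] [Algebra R A]
    [AddCommGroup E] [Module R E] [Module A E] [IsScalarTower R A E] {c : R} {x : A} {e : E}
    (he : e ≠ 0) (h : x • e = c • e) : c ∈ spectrum R x := by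
  intro hu
  refine he (hu.smul_eq_zero.mp ?_)
  rw [sub_smul, algebraMap_smul, h, sub_self]

theorem pow_smul_eq_pow_smul {M N α : Type*} [Monoid M] [Monoid N] [MulAction M α] [MulAction N α]
    [SMulCommClass M N α] {g : M} {r : N} {e : α} (h : g • e = r • e) (k : ℕ) :
    g ^ k • e = r ^ k • e := by
  induction k with
  | zero => simp
  | succ k ih => rw [pow_succ, mul_smul, h, smul_comm, ih, smul_smul, pow_succ']

theorem spectralRadius_ne_top {A : Type*} [NormedRing A] [NormedAlgebra ℂ A] [CompleteSpace A]
    (x : A) : spectralRadius ℂ x ≠ ⊤ := by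
  refine ne_top_of_le_ne_top ?_ (spectrum.spectralRadius_le_pow_nnnorm_pow_one_div ℂ x 0)
  simp [ENNReal.mul_eq_top]

section InvariantSubspace

variable {K A E ι : Type*} [Field K] [Ring A] [Algebra K A] [AddCommGroup E] [Module K E]
  [Module A E] [IsScalarTower K A E] {a b : ι → A} {x : A} {ζ : E}

theorem smul_smul_mem_span_singleton (hx : ∀ i j, ∃ c : K, x • (b i * a j) • ζ = c • ζ) (i : ι)
    {w : E} (hw : w ∈ Submodule.span K (Set.range fun j => a j • ζ)) : x • b i • w ∈ K ∙ ζ := by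
  have hle : Submodule.span K (Set.range fun j => a j • ζ) ≤
      (K ∙ ζ).comap (Algebra.lsmul K K E (x * b i)) := by
    rw [Submodule.span_le]
    rintro _ ⟨j, rfl⟩
    obtain ⟨c, hc⟩ := hx i j
    exact Submodule.mem_span_singleton.mpr ⟨c, by simpa [mul_smul] using hc.symm⟩
  simpa [mul_smul] using hle hw

variable [Fintype ι]

theorem sum_mul_mul_smul_mem_span (hx : ∀ i j, ∃ c : K, x • (b i * a j) • ζ = c • ζ)
    {w : E} (hw : w ∈ Submodule.span K (Set.range fun j => a j • ζ)) :
    (∑ i, a i * x * b i) • w ∈ Submodule.span K (Set.range fun j => a j • ζ) := by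
  rw [Finset.sum_smul]
  refine Submodule.sum_mem _ fun i _ => ?_
  obtain ⟨c, hc⟩ := Submodule.mem_span_singleton.mp (smul_smul_mem_span_singleton hx i hw)
  rw [mul_smul, mul_smul, ← hc, smul_comm]
  exact Submodule.smul_mem _ _ (Submodule.subset_span ⟨i, rfl⟩)

theorem exists_smul_smul_sum_eq_of_pow_smul_ne_zero [IsAlgClosed K]
    (hx : ∀ i j, ∃ c : K, x • (b i * a j) • ζ = c • ζ)
    (hnil : ∀ k : ℕ, ∃ w ∈ Submodule.span K (Set.range fun j => a j • ζ),
      (∑ i, a i * x * b i) ^ k • w ≠ 0) :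
    ∃ (l : K) (t : ι → K), l ≠ 0 ∧ ∑ j, t j • a j • ζ ≠ 0 ∧
      ∀ i, x • b i • ∑ j, t j • a j • ζ = (l * t i) • ζ := by
  set W := Submodule.span K (Set.range fun j => a j • ζ)
  have : FiniteDimensional K W := .span_of_finite K (Set.finite_range _)
  let T : Module.End K E := Algebra.lsmul K K E (∑ i, a i * x * b i)
  let φ : Module.End K W := T.restrict fun _ => sum_mul_mul_smul_mem_span hx
  have hφ : ¬ IsNilpotent φ := by
    rintro ⟨k, hk⟩
    obtain ⟨w, hw, hne⟩ := hnil k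
    have hTk : (T ^ k) w = 0 := congrArg Subtype.val
      (LinearMap.congr_fun ((Module.End.pow_restrict k _).symm.trans hk) ⟨w, hw⟩)
    exact hne ((LinearMap.congr_fun (map_pow (Algebra.lsmul K K E) _ k) w).trans hTk)
  obtain ⟨l, hl, hφl⟩ := exists_ne_zero_hasEigenvalue_of_not_isNilpotent hφ
  obtain ⟨⟨w, hwW⟩, hw⟩ := hφl.exists_hasEigenvector
  have hw0 : w ≠ 0 := fun h => hw.2 (Subtype.ext h)
  have hTw : (∑ i, a i * x * b i) • w = l • w := congrArg Subtype.val hw.apply_eq_smul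
  choose c hc using fun i =>
    Submodule.mem_span_singleton.mp (smul_smul_mem_span_singleton hx i hwW)
  have hsum : ∑ j, (l⁻¹ * c j) • a j • ζ = w := by
    rw [← inv_smul_smul₀ hl w, ← hTw, Finset.sum_smul, Finset.smul_sum]
    refine Finset.sum_congr rfl fun j _ => ?_
    rw [mul_smul (a j * x), mul_smul (a j), ← hc, smul_comm (a j), smul_smul]
  refine ⟨l, fun j => l⁻¹ * c j, hl, hsum ▸ hw0, fun i => ?_⟩
  rw [hsum, mul_inv_cancel_left₀ hl, hc]

end InvariantSubspace

section SimpleModule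

variable {A : Type*} [NormedRing A] [NormedAlgebra ℂ A] [CompleteSpace A]

theorem exists_forall_apply_eq_smul_quotient (I : Ideal A) [I.IsMaximal]
    (φ : Module.End A (A ⧸ I)) : ∃ c : ℂ, ∀ e, φ e = c • e := by
  have hI : IsSimpleModule A (A ⧸ I) := isSimpleModule_iff_quot_maximal.mpr
    ⟨I, ‹_›, ⟨.refl A _⟩⟩
  have := IsSimpleModule.nontrivial A (A ⧸ I)
  have hcont : Continuous φ := by
    obtain ⟨z, hz⟩ := I.mkQ_surjective (φ (I.mkQ 1))
    have hφ : φ ∘ I.mkQ = fun y => I.mkQ (y * z) := by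
      ext y
      calc φ (I.mkQ y) = y • φ (I.mkQ 1) := by rw [← map_smul, ← map_smul, smul_eq_mul, mul_one]
        _ = I.mkQ (y * z) := by rw [← hz, ← map_smul, smul_eq_mul]
    refine I.isOpenQuotientMap_mkQ.isQuotientMap.continuous_iff.mpr ?_
    rw [hφ]
    exact I.isOpenQuotientMap_mkQ.continuous.comp (continuous_id.mul continuous_const)
  let Φ : (A ⧸ I) →L[ℂ] (A ⧸ I) := ⟨φ.restrictScalars ℂ, hcont⟩
  obtain ⟨c, hc⟩ := spectrum.nonempty Φ
  refine ⟨c, fun e => ?_⟩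
  have hnot : ¬ Function.Bijective (algebraMap ℂ (Module.End A (A ⧸ I)) c - φ) := fun h =>
    hc (ContinuousLinearMap.isUnit_iff_bijective.mpr h)
  have h0 := (LinearMap.bijective_or_eq_zero _).resolve_left hnot
  simpa using (LinearMap.congr_fun (sub_eq_zero.mp h0) e).symm

variable {E : Type*} [AddCommGroup E] [Module ℂ E] [Module A E] [IsScalarTower ℂ A E]
  [IsSimpleModule A E]

theorem exists_forall_apply_eq_smul (φ : Module.End A E) : ∃ c : ℂ, ∀ e, φ e = c • e := by
  obtain ⟨I, _, ⟨ψ⟩⟩ := isSimpleModule_iff_quot_maximal.mp ‹IsSimpleModule A E›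
  obtain ⟨c, hc⟩ := exists_forall_apply_eq_smul_quotient I (ψ.conjRingEquiv φ)
  refine ⟨c, fun e => ψ.injective ?_⟩
  calc ψ (φ e) = c • ψ e := by simpa using hc (ψ e)
    _ = ψ (c • e) := (ψ.toLinearMap.map_smul_of_tower c e).symm

theorem exists_forall_smul_eq_apply (F : Module.End ℂ E) (s : Finset E) :
    ∃ y : A, ∀ e ∈ s, y • e = F e := by
  let F' : Module.End (Module.End A E) E :=
    { toFun := F
      map_add' := map_add F
      map_smul' := fun φ e => by
        obtain ⟨c, hc⟩ := exists_forall_apply_eq_smul φ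
        simp [hc] }
  obtain ⟨y, hy⟩ := jacobson_density (R := A) F' s
  exact ⟨y, fun e he => (hy e he).symm⟩

theorem exists_units_smul_eq_add_smul (F : Module.End ℂ E) (s : Finset E) :
    ∃ c : ℝ, 0 < c ∧ ∃ g : Aˣ, ∀ e ∈ s, g • e = e + (c : ℂ) • F e := by
  obtain ⟨h, hh⟩ := exists_forall_smul_eq_apply (A := A) F s
  have hc : 0 < (‖h‖ + 1)⁻¹ := by positivity
  have hnorm : ‖-(((‖h‖ + 1)⁻¹ : ℝ) : ℂ) • h‖ < 1 := by
    rw [norm_smul, norm_neg, Complex.norm_real, Real.norm_of_nonneg hc.le, inv_mul_lt_one₀]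
    · exact lt_add_one _
    · positivity
  refine ⟨_, hc, Units.oneSub _ hnorm, fun e he => ?_⟩
  rw [Units.smul_def, Units.val_oneSub, neg_smul, sub_neg_eq_add, add_smul, one_smul, smul_assoc,
    hh e he]

variable (A) in
theorem exists_units_conj_pow_smul_eq {ζ : E} (hζ : ζ ≠ 0) (s : Finset E) :
    ∃ r : ℝ, 1 < r ∧ ∃ g : Aˣ, ∀ x : A, x • ζ = 0 → ∀ e ∈ s, x • e ∈ ℂ ∙ ζ → ∀ k : ℕ,
      (↑(g ^ k)⁻¹ * x * ↑(g ^ k)) • e = ((r : ℂ) ^ k) • x • e := by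
  classical
  -- `F` projects along `ζ`; the unit `g` fixes `ζ` and dilates the range of `F` by `1 + c`, and
  -- `x` only sees the component in that range.
  obtain ⟨p, hp⟩ := Module.Projective.exists_dual_eq_one ℂ hζ
  let F : Module.End ℂ E := 1 - p.smulRight ζ
  have hF : ∀ e, F e = e - p e • ζ := fun e => rfl
  have hFζ : F ζ = 0 := by simp [hF, hp]
  have hFF : ∀ e, F (F e) = F e := fun e => by
    rw [hF e, map_sub, map_smul, hFζ, smul_zero, sub_zero, hF]
  obtain ⟨c, hc, g, hg⟩ := exists_units_smul_eq_add_smul (A := A) F (insert ζ (s.image F))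
  have hgζ : g • ζ = ζ := by simpa [hFζ] using hg ζ (by simp)
  refine ⟨1 + c, by simpa using hc, g, fun x hx e he hxe k => ?_⟩
  have hgF : g • F e = ((1 + c : ℝ) : ℂ) • F e := by
    rw [hg _ (Finset.mem_insert_of_mem (Finset.mem_image_of_mem F he)), hFF]
    simp [add_smul]
  have hgkζ : g ^ k • ζ = ζ := by simpa using pow_smul_eq_pow_smul (r := (1 : ℂ)) (by simpa) k
  have hxF : x • F e = x • e := by rw [hF, smul_sub, smul_comm, hx, smul_zero, sub_zero]
  obtain ⟨d, hd⟩ := Submodule.mem_span_singleton.mp hxe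
  have hgke : g ^ k • e = p e • ζ + ((1 + c : ℝ) : ℂ) ^ k • F e := by
    nth_rw 1 [← add_sub_cancel (p e • ζ) e]
    rw [← hF, smul_add, smul_comm, hgkζ, pow_smul_eq_pow_smul hgF]
  rw [mul_smul, mul_smul, ← Units.smul_def, ← Units.smul_def, hgke, smul_add, smul_comm x, hx,
    smul_zero, zero_add, smul_comm x, hxF, ← hd, smul_comm, smul_comm _ d,
    inv_smul_eq_iff.mpr hgkζ.symm]

variable {ι : Type*} [Fintype ι] {a b : ι → A} {S : A → A}

theorem not_spectrallyBounded_of_smul_smul_eq (hSrep : ∀ x, S x = ∑ i, a i * x * b i) {x : A}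
    {ζ : E} {t : ι → ℂ} (hw : ∑ j, t j • a j • ζ ≠ 0) (hxζ : x • ζ = 0)
    (hxb : ∀ i, x • b i • ∑ j, t j • a j • ζ = t i • ζ) : ¬ SpectrallyBounded S := by
  classical
  rintro ⟨M, hM⟩
  set w := ∑ j, t j • a j • ζ with hwdef
  have hζ : ζ ≠ 0 := by
    rintro rfl
    simp [hwdef] at hw
  obtain ⟨r, hr, g, hg⟩ :=
    exists_units_conj_pow_smul_eq A hζ (Finset.univ.image fun i => b i • w)
  have heig (k : ℕ) : S (↑(g ^ k)⁻¹ * x * ↑(g ^ k)) • w = (r : ℂ) ^ k • w := by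
    have hgb (i : ι) : (↑(g ^ k)⁻¹ * x * ↑(g ^ k)) • b i • w = (r : ℂ) ^ k • t i • ζ := by
      rw [hg x hxζ _ (by simp) (hxb i ▸ Submodule.mem_span_singleton.mpr ⟨_, rfl⟩), hxb]
    simp only [hSrep, Finset.sum_smul, mul_smul (a _ * _), mul_smul (a _), hgb]
    simp only [smul_comm (a _), ← Finset.smul_sum, ← hwdef]
  have hle (k : ℕ) : ENNReal.ofReal (r ^ k) ≤ M * spectralRadius ℂ x := calc
    ENNReal.ofReal (r ^ k) = ‖(r : ℂ) ^ k‖₊ := by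
      rw [← enorm_eq_nnnorm, ← Complex.ofReal_pow, ← ofReal_norm, Complex.norm_real,
        Real.norm_of_nonneg (by positivity)]
    _ ≤ spectralRadius ℂ (S (↑(g ^ k)⁻¹ * x * ↑(g ^ k))) :=
      le_iSup₂ (α := ℝ≥0∞) _ (mem_spectrum_of_smul_eq hw (heig k))
    _ ≤ M * spectralRadius ℂ (↑(g ^ k)⁻¹ * x * ↑(g ^ k)) := hM _
    _ = M * spectralRadius ℂ x := by simp only [spectralRadius, spectrum.units_conjugate']
  have hfin : M * spectralRadius ℂ x ≠ ⊤ :=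
    ENNReal.mul_ne_top ENNReal.coe_ne_top (spectralRadius_ne_top x)
  obtain ⟨k, hk⟩ := pow_unbounded_of_one_lt (M * spectralRadius ℂ x).toReal hr
  exact hk.not_ge ((ENNReal.ofReal_le_iff_le_toReal hfin).mp (hle k))

theorem eq_zero_of_spectrallyBounded (hSrep : ∀ x, S x = ∑ i, a i * x * b i)
    (hS : SpectrallyBounded S) {ζ : E} {g : Module.Dual ℂ E} (hgζ : g ζ = 0) {t : ι → ℂ}
    (hg : ∀ i, g (b i • ∑ j, t j • a j • ζ) = t i) : t = 0 := by
  classical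
  by_contra ht
  set w := ∑ j, t j • a j • ζ
  have hw : w ≠ 0 := fun h => ht (funext fun i => by simpa [h] using (hg i).symm)
  obtain ⟨x, hx⟩ := exists_forall_smul_eq_apply (A := A) (g.smulRight ζ)
    (insert ζ (Finset.univ.image fun i => b i • w))
  have hxζ : x • ζ = 0 := by simpa [hgζ] using hx ζ (by simp)
  have hxb (i : ι) : x • b i • w = t i • ζ := by simpa [hg] using hx (b i • w) (by simp)
  exact not_spectrallyBounded_of_smul_smul_eq hSrep hw hxζ hxb hS

theorem exists_sum_smul_mul_sum_smul_smul_mem_span (hSrep : ∀ x, S x = ∑ i, a i * x * b i)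
    (hS : SpectrallyBounded S) {t : ι → ℂ} (ht : t ≠ 0) (ζ₀ : E) :
    ∃ s : ι → ℂ, ∑ i, s i * t i = 1 ∧
      ((∑ i, s i • b i) * ∑ j, t j • a j) • ζ₀ ∈ ℂ ∙ ζ₀ := by
  obtain ⟨g, hg, hgt⟩ | ⟨s, hs, hst⟩ := exists_dual_apply_eq_or_exists_sum_smul_mem
    (ℂ ∙ ζ₀) (fun i => b i • ∑ j, t j • a j • ζ₀) t
  · exact absurd (eq_zero_of_spectrallyBounded hSrep hS
      (hg _ (Submodule.mem_span_singleton_self _)) hgt) ht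
  · exact ⟨s, hst, by simpa only [mul_smul, Finset.sum_smul, smul_assoc] using hs⟩

theorem exists_sum_smul_mul_sum_smul_smul_eq_smul (hSrep : ∀ x, S x = ∑ i, a i * x * b i)
    (hS : SpectrallyBounded S) {ζ₀ : E}
    (hsep : ∀ y ∈ Submodule.span ℂ ({1} ∪ Set.range fun p : ι × ι => b p.1 * a p.2),
      y • ζ₀ = 0 → ∀ e : E, y • e = 0)
    {x : A} {ζ : E} {l : ℂ} {t : ι → ℂ} (hl : l ≠ 0) (hw : ∑ j, t j • a j • ζ ≠ 0)
    (hxb : ∀ i, x • b i • ∑ j, t j • a j • ζ = (l * t i) • ζ) :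
    ∃ (s : ι → ℂ) (μ : ℂ), ∑ i, s i * t i = 1 ∧ μ ≠ 0 ∧
      ∀ e : E, ((∑ i, s i • b i) * ∑ j, t j • a j) • e = μ • e := by
  have ht : t ≠ 0 := by
    rintro rfl
    simp at hw
  have hζ : ζ ≠ 0 := by
    rintro rfl
    simp at hw
  obtain ⟨s, hst, hs⟩ := exists_sum_smul_mul_sum_smul_smul_mem_span hSrep hS ht ζ₀
  obtain ⟨μ, hμ⟩ := Submodule.mem_span_singleton.mp hs
  have hmem : (∑ i, s i • b i) * ∑ j, t j • a j - μ • 1 ∈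
      Submodule.span ℂ ({1} ∪ Set.range fun p : ι × ι => b p.1 * a p.2) :=
    Submodule.sub_mem _
      (Submodule.span_mono Set.subset_union_right (sum_smul_mul_sum_smul_mem_span b a s t))
      (Submodule.smul_mem _ _ (Submodule.subset_span (by simp)))
  have hvu (e : E) : ((∑ i, s i • b i) * ∑ j, t j • a j) • e = μ • e := by
    have hsub := hsep _ hmem (by rw [sub_smul, smul_assoc, one_smul, hμ, sub_self]) e
    rwa [sub_smul, smul_assoc, one_smul, sub_eq_zero] at hsub
  refine ⟨s, μ, hst, ?_, hvu⟩
  rintro rfl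
  refine smul_ne_zero hl hζ ?_
  calc l • ζ = (l * ∑ i, s i * t i) • ζ := by rw [hst, mul_one]
    _ = ∑ i, s i • (l * t i) • ζ := by
      simp only [smul_smul, ← Finset.sum_smul, Finset.mul_sum, mul_left_comm]
    _ = x • ((∑ i, s i • b i) * ∑ j, t j • a j) • ζ := by
      simp only [← hxb, smul_comm _ x, mul_smul, Finset.sum_smul, Finset.smul_sum, smul_assoc]
      exact Finset.sum_comm
    _ = 0 := by rw [hvu, zero_smul, smul_zero]

theorem exists_isSumOfTwoSidedMul_pred_sub {n : ℕ} {a b : Fin n → A}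
    (hSrep : ∀ x, S x = ∑ i, a i * x * b i) (hS : SpectrallyBounded S) {ζ₀ : E}
    (hsep : ∀ y ∈ Submodule.span ℂ ({1} ∪ Set.range fun p : Fin n × Fin n => b p.1 * a p.2),
      y • ζ₀ = 0 → ∀ e : E, y • e = 0)
    {x : A} {ζ : E} (hx : ∀ i j, ∃ c : ℂ, x • (b i * a j) • ζ = c • ζ)
    (hnil : ∀ k : ℕ, ∃ w ∈ Submodule.span ℂ (Set.range fun j => a j • ζ),
      (∑ i, a i * x * b i) ^ k • w ≠ 0) :
    ∃ (u v : A) (μ : ℂ), IsSumOfTwoSidedMul (n - 1) (fun y => S y - u * y * v) ∧ μ ≠ 0 ∧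
      ∀ e : E, (v * u) • e = μ • e := by
  obtain ⟨l, t, hl, hw, hxb⟩ := exists_smul_smul_sum_eq_of_pow_smul_ne_zero hx hnil
  obtain ⟨s, μ, hst, hμ, hvu⟩ :=
    exists_sum_smul_mul_sum_smul_smul_eq_smul hSrep hS hsep hl hw hxb
  refine ⟨∑ j, t j • a j, ∑ i, s i • b i, μ, ?_, hμ, hvu⟩
  simpa only [hSrep] using isSumOfTwoSidedMul_pred_sub a b hst

end SimpleModule

section LocalDimension

variable {E : Type*} [NormedAddCommGroup E] [NormedSpace ℂ E]

theorem exists_forall_apply_eq_zero_imp_of_finrank_eq_localDim {V : Submodule ℂ (E →L[ℂ] E)}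
    [FiniteDimensional ℂ V] (hV : Module.finrank ℂ V = localDim V) :
    ∃ ζ : E, ∀ v ∈ V, v ζ = 0 → v = 0 := by
  have hbdd : BddAbove {n : ℕ | ∃ ζ : E, n = Module.finrank ℂ (V.map (evalCLM ζ))} := by
    refine ⟨Module.finrank ℂ V, ?_⟩
    rintro _ ⟨ζ, rfl⟩
    exact Submodule.finrank_map_le _ _
  obtain ⟨ζ, hζ⟩ : ∃ ζ : E, localDim V = Module.finrank ℂ (V.map (evalCLM ζ)) := by
    refine Nat.sSup_mem ?_ hbdd
    exact ⟨_, 0, rfl⟩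
  let ev := (evalCLM ζ).domRestrict V
  have hker : ev.ker = ⊥ := by
    have hrange : ev.range = V.map (evalCLM ζ) := LinearMap.range_domRestrict _ _
    have := ev.finrank_range_add_finrank_ker
    rw [hrange, ← hζ, hV] at this
    rw [← Submodule.finrank_eq_zero]
    lia
  refine ⟨ζ, fun v hv hvζ => ?_⟩
  exact congrArg Subtype.val (LinearMap.ker_eq_bot'.mp hker ⟨v, hv⟩ hvζ)

theorem exists_forall_map_apply_eq_zero_imp_of_finrank_eq_localDim {M : Type*} [AddCommGroup M]
    [Module ℂ M] (f : M →ₗ[ℂ] (E →L[ℂ] E)) {s : Set M} (hs : s.Finite)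
    (hV : Module.finrank ℂ (Submodule.span ℂ (f '' s)) = localDim (Submodule.span ℂ (f '' s))) :
    ∃ ζ : E, ∀ y ∈ Submodule.span ℂ s, f y ζ = 0 → f y = 0 := by
  have : FiniteDimensional ℂ (Submodule.span ℂ (f '' s)) := .span_of_finite ℂ (hs.image f)
  obtain ⟨ζ, hζ⟩ := exists_forall_apply_eq_zero_imp_of_finrank_eq_localDim hV
  refine ⟨ζ, fun y hy => hζ (f y) ?_⟩
  rw [← Submodule.map_span]
  exact Submodule.mem_map_of_mem hy

end LocalDimension

section Representation

variable {A E : Type*} [NormedRing A] [NormedAlgebra ℂ A] [CompleteSpace A]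
  [NormedAddCommGroup E] [NormedSpace ℂ E]

theorem exists_isSumOfTwoSidedMul_pred_sub_of_irreducible [Nontrivial E] {n : ℕ} {a b : Fin n → A}
    {S : A → A} (hSrep : ∀ x, S x = ∑ i, a i * x * b i) (hS : SpectrallyBounded S)
    (ρ : A →ₐ[ℂ] (E →L[ℂ] E)) (hρirr : ∀ ζ : E, ζ ≠ 0 → ∀ η : E, ∃ y : A, ρ y ζ = η) {ζ₀ : E}
    (hsep : ∀ y ∈ Submodule.span ℂ ({1} ∪ Set.range fun p : Fin n × Fin n => b p.1 * a p.2),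
      ρ y ζ₀ = 0 → ρ y = 0)
    {x : A} {ζ : E} (hx : ∀ i j, ∃ c : ℂ, ρ x (ρ (b i * a j) ζ) = c • ζ)
    (hnot : ¬ ((∀ w ∈ Submodule.span ℂ (Set.range fun i => ρ (a i) ζ),
        ρ (∑ i, a i * x * b i) w ∈ Submodule.span ℂ (Set.range fun i => ρ (a i) ζ)) ∧
      ∃ k : ℕ, ∀ w ∈ Submodule.span ℂ (Set.range fun i => ρ (a i) ζ),
        ρ ((∑ i, a i * x * b i) ^ k) w = 0)) :
    ∃ (u v : A) (μ : ℂ), IsSumOfTwoSidedMul (n - 1) (fun y => S y - u * y * v) ∧ μ ≠ 0 ∧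
      ρ (v * u) = μ • (1 : E →L[ℂ] E) := by
  let _ : Module A E := Module.compHom E (ρ : A →+* (E →L[ℂ] E))
  have : IsScalarTower ℂ A E :=
    ⟨fun c y e => ContinuousLinearMap.ext_iff.mp (map_smul ρ c y) e⟩
  have : IsSimpleModule A E := isSimpleModule_iff_toSpanSingleton_surjective.mpr ⟨‹_›, hρirr⟩
  push Not at hnot
  have hnil := hnot fun w hw =>
    sum_mul_mul_smul_mem_span (K := ℂ) (a := a) (b := b) (x := x) (ζ := ζ) hx hw
  obtain ⟨u, v, μ, hlen, hμ, hvu⟩ := exists_isSumOfTwoSidedMul_pred_sub hSrep hS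
    (fun y hy hyζ => ContinuousLinearMap.ext_iff.mp (hsep y hy hyζ)) hx hnil
  exact ⟨u, v, μ, hlen, hμ, ContinuousLinearMap.ext hvu⟩

end Representation

theorem spectrally_bounded_elementary_operator_nilpotent_or_split_general
    {A : Type*} [NormedRing A] [NormedAlgebra ℂ A] [CompleteSpace A]
    {E : Type*} [NormedAddCommGroup E] [NormedSpace ℂ E]
    {n : ℕ} (a b : Fin n → A) (S : A → A)
    (hSrep : ∀ x : A, S x = ∑ i, a i * x * b i)
    (hSlen : ∀ m : ℕ, (∃ c d : Fin m → A, ∀ x : A, S x = ∑ i, c i * x * d i) → n ≤ m)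
    (hS : SpectrallyBounded S)
    (ρ : A →ₐ[ℂ] (E →L[ℂ] E))
    (hρirr : ∀ ζ : E, ζ ≠ 0 → ∀ η : E, ∃ y : A, ρ y ζ = η)
    (hV' : Module.finrank ℂ
        (Submodule.span ℂ ({(1 : E →L[ℂ] E)} ∪
          Set.range fun p : Fin n × Fin n => ρ (b p.1 * a p.2))) =
      localDim (Submodule.span ℂ ({(1 : E →L[ℂ] E)} ∪
          Set.range fun p : Fin n × Fin n => ρ (b p.1 * a p.2)))) :
    (∀ (ζ : E) (x : A), (∀ i j : Fin n, ∃ c : ℂ, ρ x (ρ (b i * a j) ζ) = c • ζ) →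
        (∀ w ∈ Submodule.span ℂ (Set.range fun i => ρ (a i) ζ),
            (∑ i, ρ (a i) * ρ x * ρ (b i)) w ∈
              Submodule.span ℂ (Set.range fun i => ρ (a i) ζ)) ∧
          ∃ k : ℕ, ∀ w ∈ Submodule.span ℂ (Set.range fun i => ρ (a i) ζ),
            ((∑ i, ρ (a i) * ρ x * ρ (b i)) ^ k) w = 0) ∨
      (∃ (u v : A) (c d : Fin (n - 1) → A) (μ : ℂ),
        (∀ x : A, S x = u * x * v + ∑ i, c i * x * d i) ∧
        (∀ m : ℕ, (∃ c' d' : Fin m → A, ∀ x : A,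
            S x - u * x * v = ∑ i, c' i * x * d' i) → n - 1 ≤ m) ∧
        μ ≠ 0 ∧ ρ (v * u) = μ • (1 : E →L[ℂ] E)) := by
  rcases subsingleton_or_nontrivial E with _ | _
  · exact .inl fun ζ x _ => ⟨fun w hw => by convert hw, 0, fun w _ => Subsingleton.elim _ _⟩
  have hspan : {1} ∪ Set.range (fun p : Fin n × Fin n => ρ (b p.1 * a p.2)) =
      ρ.toLinearMap '' ({1} ∪ Set.range fun p : Fin n × Fin n => b p.1 * a p.2) := by
    rw [Set.image_union, Set.image_singleton, ← Set.range_comp, AlgHom.toLinearMap_apply, map_one]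
    rfl
  rw [hspan] at hV'
  obtain ⟨ζ₀, hsep⟩ := exists_forall_map_apply_eq_zero_imp_of_finrank_eq_localDim _
    ((Set.finite_singleton 1).union (Set.finite_range _)) hV'
  refine or_iff_not_imp_left.mpr fun hnot => ?_
  have hT (x : A) : ∑ i, ρ (a i) * ρ x * ρ (b i) = ρ (∑ i, a i * x * b i) := by simp
  simp only [hT, ← map_pow] at hnot
  simp only [not_forall] at hnot
  obtain ⟨ζ, x, hx, hnot⟩ := hnot
  obtain ⟨u, v, μ, ⟨c, d, hcd⟩, hμ, hvu⟩ :=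
    exists_isSumOfTwoSidedMul_pred_sub_of_irreducible hSrep hS ρ hρirr hsep hx hnot
  refine ⟨u, v, c, d, μ, fun x => ?_, fun m hm => ?_, hμ, hvu⟩
  · rw [← hcd, add_sub_cancel]
  · exact Nat.sub_le_of_le_add (hSlen (m + 1) (IsSumOfTwoSidedMul.succ_of_sub hm))

/-- **Proposition 3.5.** Let `A` be a unital complex Banach algebra, let
`S = Σ_{i=1}^n M_{a_i,b_i}` be a spectrally bounded elementary operator of
length `n` on `A`, and let `ρ` be an irreducible representation of `A` on a
complex Banach space `E`.  Suppose `dim V'_{S_ρ} = lDim V'_{S_ρ}`, where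
`V'_{S_ρ} = span{ρ(b_i a_j)} + ℂ·I`.  Then either (a) for every `ζ ∈ E` and
`x ∈ A` with `ρ(x)ρ(b_i a_j)ζ ∈ ℂζ` for all `i, j`, the operator
`Σ ρ(a_i)ρ(x)ρ(b_i)` leaves `span{ρ(a_1)ζ,…,ρ(a_n)ζ}` invariant and its
restriction thereto is nilpotent; or (b) there exist `u, v ∈ A` and an
elementary operator `S₂` of length `n−1` with `S = M_{u,v} + S₂` and `ρ(vu)` a
nonzero scalar multiple of the identity. -/
theorem spectrally_bounded_elementary_operator_nilpotent_or_split
    {A : Type*} [NormedRing A] [NormedAlgebra ℂ A] [CompleteSpace A]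
    {E : Type*} [NormedAddCommGroup E] [NormedSpace ℂ E] [CompleteSpace E]
    {n : ℕ} (a b : Fin n → A) (S : A → A)
    (hSrep : ∀ x : A, S x = ∑ i, a i * x * b i)
    (hSlen : ∀ m : ℕ, (∃ c d : Fin m → A, ∀ x : A, S x = ∑ i, c i * x * d i) → n ≤ m)
    (hS : SpectrallyBounded S)
    (ρ : A →ₐ[ℂ] (E →L[ℂ] E)) (hρcont : Continuous ρ)
    (hρirr : ∀ ζ : E, ζ ≠ 0 → ∀ η : E, ∃ y : A, ρ y ζ = η)
    (hV' : Module.finrank ℂ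
        (Submodule.span ℂ ({(1 : E →L[ℂ] E)} ∪
          Set.range fun p : Fin n × Fin n => ρ (b p.1 * a p.2))) =
      localDim (Submodule.span ℂ ({(1 : E →L[ℂ] E)} ∪
          Set.range fun p : Fin n × Fin n => ρ (b p.1 * a p.2)))) :
    (∀ (ζ : E) (x : A), (∀ i j : Fin n, ∃ c : ℂ, ρ x (ρ (b i * a j) ζ) = c • ζ) →
        (∀ w ∈ Submodule.span ℂ (Set.range fun i => ρ (a i) ζ),
            (∑ i, ρ (a i) * ρ x * ρ (b i)) w ∈
              Submodule.span ℂ (Set.range fun i => ρ (a i) ζ)) ∧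
          ∃ k : ℕ, ∀ w ∈ Submodule.span ℂ (Set.range fun i => ρ (a i) ζ),
            ((∑ i, ρ (a i) * ρ x * ρ (b i)) ^ k) w = 0) ∨
      (∃ (u v : A) (c d : Fin (n - 1) → A) (μ : ℂ),
        (∀ x : A, S x = u * x * v + ∑ i, c i * x * d i) ∧
        (∀ m : ℕ, (∃ c' d' : Fin m → A, ∀ x : A,
            S x - u * x * v = ∑ i, c' i * x * d' i) → n - 1 ≤ m) ∧
        μ ≠ 0 ∧ ρ (v * u) = μ • (1 : E →L[ℂ] E)) :=
  spectrally_bounded_elementary_operator_nilpotent_or_split_general a b S hSrep hSlen hS ρ hρirr hV'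
end

section
/- Let E be a complex Banach space with dim E ≥ 4 and let A be a closed subalgebra of B(E) acting irreducibly on E (i.e. {aζ : a ∈ A} = E for every nonzero ζ ∈ E). Let S : A → B(E) be an elementary operator of length 3. Then S is spectrally bounded if and only if there exist u_1, u_2, u_3, v_1, v_2, v_3 ∈ B(E) with Sx = Σ_{i=1}^3 u_i x v_i for all x ∈ A such that one of the following three cases occurs: (i) v_i u_j = 0 for all i > j and each v_i u_i is a scalar multiple of the identity; (ii) there exist λ ∈ ℂ, ζ₀, ζ₁ ∈ E and f ∈ E* with v_1u_1 = v_2u_2 = v_3u_3 = λI, v_1u_2 = ζ₁⊗f, v_1u_3 = 0, v_2u_1 = ζ₀⊗f, v_2u_3 = ζ₁⊗f, v_3u_1 = 0 and v_3u_2 = −ζ₀⊗f; (iii) there exist λ ∈ ℂ, ζ₀ ∈ E and f, g ∈ E* with v_1u_1 = v_2u_2 = v_3u_3 = λI, v_1u_2 = ζ₀⊗g, v_1u_3 = 0, v_2u_1 = ζ₀⊗f, v_2u_3 = ζ₀⊗g, v_3u_1 = 0 and v_3u_2 = −ζ₀⊗f. -/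
open scoped ENNReal NNReal

/-!
The matrices `N f θ = (f (v i (u j θ)))`, for functionals `f` and vectors `θ`, contain all products
`v i * u j`. By the density theorem and conjugation by exponentials of elements of `A`, elements of
`A` with a prescribed action on finitely many vectors can be rescaled by transvections of arbitrary
parameter without changing their spectral radius. Choosing the action so that `N f θ`, `N g θ`,
`N f η`, `N g η` become the blocks of a matrix whose eigenvalues lie in the spectrum of the value of
the elementary operator, the traces of the powers of this matrix are bounded polynomials in the
parameter. Their coefficients vanish, which gives trace identities for `N`. In particular every
`N f θ` with `f θ = 0` is nilpotent.

For `3 × 3` matrices these identities force a dichotomy. Either certain words in the `N f θ` vanish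
both for `N` and for its dual, and then the `N f θ` are simultaneously triangular in some basis; or
some pair of them has the multiplication table of the exceptional cases, and since the dimension
exceeds three this table spreads to the whole family. A change of basis on the matrices is a change
of the representation `∑ i, u i * x * v i`.

Conversely, given `x`, the spectral radius of `∑ i, u i * x * v i` is read off the matrix
`(v i * u j * x)`, which differs from a diagonal one by a nilpotent perturbation.
-/

namespace ElementaryOperator

open Matrix

section Sufficiency

section Ring
variable {R : Type*} [Ring R] {m n : Type*} [Fintype m] [DecidableEq m] [Fintype n] [DecidableEq n]

lemma isUnit_one_sub_mul_swap (U : Matrix m n R) (V : Matrix n m R)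
    (h : IsUnit (1 - V * U)) : IsUnit (1 - U * V) := by
  obtain ⟨⟨a, r, har, hra⟩, rfl⟩ := h
  rw [isUnit_iff_exists]
  refine ⟨1 + U * r * V, ?_, ?_⟩
  · calc (1 - U * V) * (1 + U * r * V) = 1 + U * ((1 - V * U) * r - 1) * V := by
          simp only [Matrix.mul_sub, Matrix.sub_mul, Matrix.mul_add, Matrix.one_mul,
            Matrix.mul_one, Matrix.mul_assoc]
          abel
      _ = 1 := by simp [har]
  · calc (1 + U * r * V) * (1 - U * V) = 1 + U * (r * (1 - V * U) - 1) * V := by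
          simp only [Matrix.mul_sub, Matrix.sub_mul, Matrix.add_mul, Matrix.one_mul,
            Matrix.mul_one, Matrix.mul_assoc]
          abel
      _ = 1 := by simp [hra]

lemma isUnit_one_sub_dotProduct (u v : n → R) (h : IsUnit (1 - vecMulVec v u)) :
    IsUnit (1 - u ⬝ᵥ v) := by
  rw [vecMulVec_eq Unit] at h
  have h' := (isUnit_one_sub_mul_swap _ _ h).map (uniqueRingEquiv (m := Unit) (A := R))
  simpa [dotProduct, Matrix.mul_apply] using h'

lemma isNilpotent_of_strictly_upper {k : ℕ} (T : Matrix (Fin k) (Fin k) R)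
    (hT : ∀ i j, j ≤ i → T i j = 0) : IsNilpotent T := by
  have hpow : ∀ (r : ℕ) (i j : Fin k), (j : ℕ) < i + r → (T ^ r) i j = 0 := by
    intro r
    induction r with
    | zero => exact fun i j hij => by simp [one_apply, (show i ≠ j by rintro rfl; simp at hij)]
    | succ r ih =>
      intro i j hij
      rw [pow_succ, Matrix.mul_apply]
      refine Finset.sum_eq_zero fun l _ => ?_
      rcases le_or_gt j l with hjl | hlj
      · rw [hT l j hjl, mul_zero]
      · rw [ih i l (by have : (l : ℕ) < j := hlj; omega), zero_mul]
  exact ⟨k, by ext i j; exact hpow k i j (by omega)⟩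

/-- The multiplication table `v i * u j` common to the last two cases of the theorem; the two
differ only in the rank one elements `P` and `Q`. -/
def exceptionalTable (lam P Q : R) : Matrix (Fin 3) (Fin 3) R :=
  !![lam, Q, 0; P, lam, Q; 0, -P, lam]

lemma eq_exceptionalTable_iff {a p q : R} {X : Matrix (Fin 3) (Fin 3) R} :
    X = exceptionalTable a p q ↔
      X 0 0 = a ∧ X 1 1 = a ∧ X 2 2 = a ∧ X 0 1 = q ∧ X 0 2 = 0 ∧ X 1 0 = p ∧ X 1 2 = q ∧
        X 2 0 = 0 ∧ X 2 1 = -p := by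
  refine ⟨fun h => by simp [h, exceptionalTable], fun h => ?_⟩
  ext i j
  fin_cases i <;> fin_cases j <;> simp [h, exceptionalTable]

lemma isNilpotent_exceptionalTable {p q : R}
    (h : (p * (p * q - q * p) = 0 ∧ q * (p * q - q * p) = 0) ∨
      ((p * q - q * p) * p = 0 ∧ (p * q - q * p) * q = 0)) :
    IsNilpotent (exceptionalTable 0 p q) := by
  have hsq : exceptionalTable 0 p q ^ 2 =
      !![q * p, 0, q * q; 0, p * q - q * p, 0; -(p * p), 0, -(p * q)] := by
    ext i j
    fin_cases i <;> fin_cases j <;>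
      simp [exceptionalTable, pow_two, Matrix.mul_apply, Fin.sum_univ_three, sub_eq_add_neg]
  refine ⟨4, ?_⟩
  rw [show 4 = 2 * 2 by rfl, pow_mul, hsq, pow_two]
  ext i j
  rcases h with ⟨hp, hq⟩ | ⟨hp, hq⟩
  · have hp' : p * (p * q) = p * (q * p) := by rwa [mul_sub, sub_eq_zero] at hp
    have hq' : q * (p * q) = q * (q * p) := by rwa [mul_sub, sub_eq_zero] at hq
    have hpr (r : R) : p * (p * (q * r)) = p * (q * (p * r)) := by
      simpa only [mul_assoc] using congrArg (· * r) hp'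
    have hqr (r : R) : q * (p * (q * r)) = q * (q * (p * r)) := by
      simpa only [mul_assoc] using congrArg (· * r) hq'
    fin_cases i <;> fin_cases j <;>
      simp [Matrix.mul_apply, Fin.sum_univ_three, mul_assoc, hp', hq', hpr, hqr, mul_sub, sub_mul]
  · have hp' : p * q * p = q * p * p := by rwa [sub_mul, sub_eq_zero] at hp
    have hq' : p * q * q = q * p * q := by rwa [sub_mul, sub_eq_zero] at hq
    have hpr (r : R) : r * p * q * p = r * q * p * p := by
      simpa only [mul_assoc] using congrArg (r * ·) hp'
    have hqr (r : R) : r * p * q * q = r * q * p * q := by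
      simpa only [mul_assoc] using congrArg (r * ·) hq'
    fin_cases i <;> fin_cases j <;>
      simp [Matrix.mul_apply, Fin.sum_univ_three, ← mul_assoc, hp', hq', hpr, hqr, mul_sub, sub_mul]

end Ring

section SpectralRadius
variable {𝕜 R : Type*} [NormedField 𝕜] [Ring R] [Algebra 𝕜 R]

lemma isUnit_algebraMap_sub_smul {x : R} {c k : 𝕜}
    (h : (‖c‖₊ : ℝ≥0∞) * spectralRadius 𝕜 x < ‖k‖₊) :
    IsUnit (algebraMap 𝕜 R k - c • x) := by
  have hk : k ≠ 0 := by rintro rfl; simp at h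
  rcases eq_or_ne c 0 with rfl | hc
  · simpa using (IsUnit.mk0 k hk).map (algebraMap 𝕜 R)
  have hlt : spectralRadius 𝕜 x < ‖k / c‖₊ := by
    rw [nnnorm_div, ENNReal.coe_div (by simpa using hc),
      ENNReal.lt_div_iff_mul_lt (by simp [hc]) (by simp)]
    rwa [mul_comm]
  have hsmul : algebraMap 𝕜 R k - c • x = c • (algebraMap 𝕜 R (k / c) - x) := by
    rw [smul_sub, Algebra.algebraMap_eq_smul_one, Algebra.algebraMap_eq_smul_one, smul_smul,
      mul_div_cancel₀ _ hc]
  rw [hsmul]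
  exact (spectrum.mem_resolventSet_of_spectralRadius_lt hlt).smul (Units.mk0 c hc)

-- With `d i = k - c i • x`, the matrix `k - vecMulVec v (u x)` factors as `diagonal d` times `1`
-- minus the nilpotent matrix `(d i)⁻¹ * w i j * x`.
lemma spectralRadius_sum_le {n : Type*} [Fintype n] [DecidableEq n] {u v : n → R} {c : n → 𝕜}
    {w : Matrix n n R} {M : ℝ≥0}
    (huv : vecMulVec v u = diagonal (fun i => algebraMap 𝕜 R (c i)) + w)
    (hw : ∀ (y : 𝕜 → R) (x : R), IsNilpotent (of fun i j => y (c i) * w i j * x))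
    (hM : ∀ i, ‖c i‖₊ ≤ M) (x : R) :
    spectralRadius 𝕜 (∑ i, u i * x * v i) ≤ M * spectralRadius 𝕜 x := by
  refine iSup₂_le fun k hkmem => le_of_not_gt fun hk => hkmem ?_
  have hk0 : k ≠ 0 := by rintro rfl; simp at hk
  have hd : ∀ i, IsUnit (algebraMap 𝕜 R k - c i • x) := fun i =>
    isUnit_algebraMap_sub_smul (lt_of_le_of_lt (by gcongr; exact hM i) hk)
  let y : 𝕜 → R := fun a => Ring.inverse (algebraMap 𝕜 R k - a • x)
  have hfactor : (1 : Matrix n n R) - vecMulVec v (fun j => k⁻¹ • (u j * x)) =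
      k⁻¹ • (diagonal (fun i => algebraMap 𝕜 R k - c i • x) *
        (1 - of fun i j => y (c i) * w i j * x)) := by
    ext i j
    have hij : v i * u j = diagonal (fun i => algebraMap 𝕜 R (c i)) i j + w i j :=
      congrFun₂ huv i j
    have hinv := Ring.mul_inverse_cancel _ (hd i)
    rw [Matrix.sub_apply, Matrix.smul_apply, diagonal_mul, Matrix.sub_apply, mul_sub, of_apply,
      mul_assoc (y _), ← mul_assoc _ (y _), hinv, one_mul, vecMulVec_apply, mul_smul_comm,
      ← mul_assoc, hij]
    rcases eq_or_ne i j with rfl | hne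
    · simp [add_mul, smul_sub, Algebra.algebraMap_eq_smul_one, smul_smul, inv_mul_cancel₀ hk0]
      abel
    · simp [hne]
  have hunit : IsUnit ((1 : R) - (fun j => k⁻¹ • (u j * x)) ⬝ᵥ v) := by
    apply isUnit_one_sub_dotProduct
    rw [hfactor]
    refine IsUnit.smul (Units.mk0 _ (inv_ne_zero hk0))
      (((Pi.isUnit_iff.2 hd).map (diagonalRingHom n R)).mul (hw y x).isUnit_one_sub)
  have hsum : algebraMap 𝕜 R k - ∑ i, u i * x * v i =
      k • ((1 : R) - (fun j => k⁻¹ • (u j * x)) ⬝ᵥ v) := by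
    simp [dotProduct, smul_sub, Finset.smul_sum, smul_smul, mul_inv_cancel₀ hk0,
      Algebra.algebraMap_eq_smul_one]
  rw [spectrum.mem_resolventSet_iff, hsum]
  exact hunit.smul (Units.mk0 k hk0)

lemma spectralRadius_sum_le_of_triangular {n : ℕ} {u v : Fin n → R} {c : Fin n → 𝕜}
    (hlt : ∀ i j, j < i → v i * u j = 0) (hc : ∀ i, v i * u i = c i • (1 : R)) (x : R) :
    spectralRadius 𝕜 (∑ i, u i * x * v i) ≤ (∑ i, ‖c i‖₊ : ℝ≥0) * spectralRadius 𝕜 x := by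
  refine spectralRadius_sum_le (w := of fun i j => if i < j then v i * u j else 0) ?_
    (fun y x => isNilpotent_of_strictly_upper _ fun i j hji => by simp [hji.not_gt])
    (fun i => Finset.single_le_sum_of_canonicallyOrdered (f := fun i => ‖c i‖₊)
      (Finset.mem_univ i)) x
  ext i j
  rcases lt_trichotomy i j with hij | rfl | hij
  · simp [vecMulVec_apply, hij, hij.ne]
  · simp [vecMulVec_apply, hc, Algebra.algebraMap_eq_smul_one]
  · simp [vecMulVec_apply, hlt i j hij, hij.ne', hij.not_gt]

end SpectralRadius

section RankOne
variable {𝕜 E : Type*} [NontriviallyNormedField 𝕜] [NormedAddCommGroup E] [NormedSpace 𝕜 E]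

lemma isNilpotent_exceptionalTable_smulRight {ζ₀ ζ₁ : E} {f g : E →L[𝕜] 𝕜}
    (h : f = g ∨ ζ₀ = ζ₁) (a x : E →L[𝕜] E) :
    IsNilpotent (exceptionalTable 0 (a * f.smulRight ζ₀ * x) (a * g.smulRight ζ₁ * x)) := by
  refine isNilpotent_exceptionalTable (h.imp ?_ ?_)
  · rintro rfl
    constructor <;> ext z <;> simp [smul_smul, mul_comm, mul_left_comm]
  · rintro rfl
    constructor <;> ext z <;> simp [smul_smul, mul_comm]

lemma spectralRadius_sum_le_of_exceptional {u v : Fin 3 → E →L[𝕜] E} {lam : 𝕜} {ζ₀ ζ₁ : E}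
    {f g : E →L[𝕜] 𝕜} (h : f = g ∨ ζ₀ = ζ₁)
    (huv : vecMulVec v u = exceptionalTable (lam • 1) (f.smulRight ζ₀) (g.smulRight ζ₁))
    (x : E →L[𝕜] E) :
    spectralRadius 𝕜 (∑ i, u i * x * v i) ≤ ‖lam‖₊ * spectralRadius 𝕜 x := by
  refine spectralRadius_sum_le (c := fun _ => lam)
    (w := exceptionalTable 0 (f.smulRight ζ₀) (g.smulRight ζ₁)) ?_ (fun y x => ?_)
    (fun _ => le_rfl) x
  · rw [huv]
    ext i j : 2
    fin_cases i <;> fin_cases j <;>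
      simp [exceptionalTable, Algebra.algebraMap_eq_smul_one]
  · convert isNilpotent_exceptionalTable_smulRight h (y lam) x using 1
    ext i j : 2
    fin_cases i <;> fin_cases j <;> simp [exceptionalTable]

end RankOne

end Sufficiency

section Density
variable {E : Type*} [NormedAddCommGroup E]

lemma continuous_of_isSimpleModule {𝕜 : Type*} [NontriviallyNormedField 𝕜]
    [NormedSpace 𝕜 E] [CompleteSpace E] {A : Subalgebra 𝕜 (E →L[𝕜] E)}
    (hA : IsClosed (A : Set (E →L[𝕜] E))) [IsSimpleModule A E] (T : E →ₗ[A] E) :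
    Continuous T := by
  obtain ⟨ζ, hζ⟩ := @exists_ne E (IsSimpleModule.nontrivial A E) 0
  have : CompleteSpace A.toSubmodule := hA.completeSpace_coe
  let π : A.toSubmodule →L[𝕜] E :=
    (ContinuousLinearMap.apply 𝕜 E ζ).comp A.toSubmodule.subtypeL
  have hπ : Topology.IsQuotientMap π :=
    π.isQuotientMap (IsSimpleModule.toSpanSingleton_surjective A hζ)
  have hT : T ∘ π = fun a : A.toSubmodule => (a : E →L[𝕜] E) (T ζ) :=
    funext fun a => T.map_smul (⟨a.1, a.2⟩ : A) ζ
  rw [hπ.continuous_iff, hT]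
  fun_prop

variable [NormedSpace ℂ E] [CompleteSpace E] {A : Subalgebra ℂ (E →L[ℂ] E)}

lemma exists_forall_apply_eq_smul (hA : IsClosed (A : Set (E →L[ℂ] E))) [IsSimpleModule A E]
    (T : E →ₗ[A] E) : ∃ c : ℂ, ∀ z, T z = c • z := by
  have := IsSimpleModule.nontrivial A E
  have : IsScalarTower ℂ A E := ⟨fun _ _ _ => rfl⟩
  have : SMulCommClass A ℂ E := ⟨fun a => map_smul a.1⟩
  let Tc : E →L[ℂ] E := ⟨T.restrictScalars ℂ, continuous_of_isSimpleModule hA T⟩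
  obtain ⟨c, hc⟩ := spectrum.nonempty (A := E →L[ℂ] E) Tc
  refine ⟨c, ?_⟩
  rcases LinearMap.bijective_or_eq_zero (c • (1 : Module.End A E) - T) with h | h
  · refine absurd ?_ hc
    rw [spectrum.mem_resolventSet_iff, ContinuousLinearMap.isUnit_iff_bijective,
      Algebra.algebraMap_eq_smul_one]
    exact h
  · exact fun z => (sub_eq_zero.1 (LinearMap.congr_fun h z)).symm

lemma exists_mem_eqOn_of_finite (hA : IsClosed (A : Set (E →L[ℂ] E)))
    (hirr : ∀ ζ : E, ζ ≠ 0 → ∀ η : E, ∃ a ∈ A, a ζ = η) {s : Set E} (hs : s.Finite)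
    (L : E →ₗ[ℂ] E) : ∃ x ∈ A, Set.EqOn x L s := by
  rcases subsingleton_or_nontrivial E with hE | hE
  · exact ⟨0, A.zero_mem, fun _ _ => Subsingleton.elim _ _⟩
  have : IsSimpleModule A E := isSimpleModule_iff_toSpanSingleton_surjective.2
    ⟨hE, fun ζ hζ η => let ⟨a, ha, h⟩ := hirr ζ hζ η; ⟨⟨a, ha⟩, h⟩⟩
  have hL (T : Module.End A E) (z : E) : L (T z) = T (L z) := by
    obtain ⟨c, hc⟩ := exists_forall_apply_eq_smul hA T
    rw [hc, hc, L.map_smul]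
  let f : Module.End (Module.End A E) E := { L with map_smul' := hL }
  obtain ⟨r, hr⟩ := jacobson_density f hs.toFinset
  exact ⟨r, r.2, fun z hz => (hr z (by simpa using hz)).symm⟩

end Density

section Conjugation
variable {E : Type*} [NormedAddCommGroup E] [NormedSpace ℂ E] [CompleteSpace E]

lemma exp_apply_of_apply_eq_smul {y : E →L[ℂ] E} {w : E} {c : ℂ} (h : y w = c • w) :
    NormedSpace.exp y w = Complex.exp c • w := by
  have hpow (n : ℕ) : (y ^ n) w = c ^ n • w := by
    induction n with
    | zero => simp
    | succ n ih => rw [pow_succ', mul_apply_eq_comp, ih, map_smul, h, smul_smul, pow_succ]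
  have hy := (NormedSpace.exp_series_hasSum_exp' (𝕂 := ℂ) y).mapL
    (ContinuousLinearMap.apply ℂ E w)
  have hc := (NormedSpace.exp_series_hasSum_exp' (𝕂 := ℂ) c).smul_const w
  rw [← Complex.exp_eq_exp_ℂ] at hc
  refine hy.unique ?_
  convert hc using 2 with n
  simp [hpow, smul_smul]

lemma exp_smul_apply_of_apply_eq_smul {y : E →L[ℂ] E} {ρ w : E} {a : ℂ} (hρ : y ρ = ρ)
    (hw : y w = a • ρ) (t : ℂ) :
    NormedSpace.exp (t • y) w = w + ((Complex.exp t - 1) * a) • ρ := by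
  have h₁ : NormedSpace.exp (t • y) ρ = Complex.exp t • ρ :=
    exp_apply_of_apply_eq_smul (by simp [hρ])
  have h₀ : NormedSpace.exp (t • y) (w - a • ρ) = Complex.exp 0 • (w - a • ρ) :=
    exp_apply_of_apply_eq_smul (by simp [hρ, hw])
  rw [map_sub, map_smul, h₁, Complex.exp_zero, one_smul, sub_eq_iff_eq_add] at h₀
  rw [h₀]
  module

open LinearMap (transvection)

lemma exists_unit_eqOn_transvection {A : Subalgebra ℂ (E →L[ℂ] E)}
    (hA : IsClosed (A : Set (E →L[ℂ] E)))
    (hirr : ∀ ζ : E, ζ ≠ 0 → ∀ η : E, ∃ a ∈ A, a ζ = η) {S : Set E} (hS : S.Finite)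
    {h : Module.Dual ℂ E} {ρ : E} (hρ : h ρ = 1) {s : ℂ} (hs : s ≠ 0) :
    ∃ U : (E →L[ℂ] E)ˣ, ↑U ∈ A ∧ ↑U⁻¹ ∈ A ∧
      Set.EqOn (U : E →L[ℂ] E) (transvection ((s - 1) • h) ρ) S ∧
      Set.EqOn (↑U⁻¹ : E →L[ℂ] E) (transvection ((s⁻¹ - 1) • h) ρ) S := by
  obtain ⟨y, hyA, hy⟩ := exists_mem_eqOn_of_finite hA hirr (hS.insert ρ) (h.smulRight ρ)
  have hyρ : y ρ = ρ := by simpa [hρ] using hy (Set.mem_insert ρ S)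
  have hyS {w : E} (hw : w ∈ S) : y w = h w • ρ := hy (Set.mem_insert_of_mem ρ hw)
  let _ : NormedAlgebra ℚ (E →L[ℂ] E) := NormedAlgebra.restrictScalars ℚ ℂ _
  have : IsScalarTower ℚ ℂ (E →L[ℂ] E) := IsScalarTower.of_algebraMap_smul fun _ _ => rfl
  have hmul (t : ℂ) : NormedSpace.exp (t • y) * NormedSpace.exp (-t • y) = 1 := by
    rw [← NormedSpace.exp_add_of_commute (by simp), ← add_smul, add_neg_cancel, zero_smul,
      NormedSpace.exp_zero]
  let t := Complex.log s
  have ht : Complex.exp t = s := Complex.exp_log hs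
  refine ⟨⟨_, _, hmul t, by simpa using hmul (-t)⟩,
    NormedSpace.exp_mem (R := ℂ) hA (A.smul_mem hyA _),
    NormedSpace.exp_mem (R := ℂ) hA (A.smul_mem hyA _), fun w hw => ?_, fun w hw => ?_⟩
  · rw [Units.val_mk, exp_smul_apply_of_apply_eq_smul hyρ (hyS hw), ht]
    simp [LinearMap.transvection]
  · rw [Units.inv_mk, Units.val_mk, exp_smul_apply_of_apply_eq_smul hyρ (hyS hw), Complex.exp_neg,
      ht]
    simp [LinearMap.transvection]

-- `x` is a conjugate of `x₀`, so it has the same spectral radius, yet on `S` it acts like the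
-- conjugate of `L` by a transvection scaling `ρ` by `s`.
lemma exists_spectralRadius_eq_eqOn_conj {A : Subalgebra ℂ (E →L[ℂ] E)}
    (hA : IsClosed (A : Set (E →L[ℂ] E)))
    (hirr : ∀ ζ : E, ζ ≠ 0 → ∀ η : E, ∃ a ∈ A, a ζ = η) {S : Set E} (hS : S.Finite)
    (L : E →ₗ[ℂ] E) {h : Module.Dual ℂ E} {ρ : E} (hρ : h ρ = 1) :
    ∃ r ≠ ∞, ∀ s : ℂ, s ≠ 0 → ∃ x ∈ A, spectralRadius ℂ x = r ∧
      Set.EqOn x (transvection ((s - 1) • h) ρ ∘ₗ L ∘ₗ transvection ((s⁻¹ - 1) • h) ρ) S := by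
  obtain ⟨x₀, hx₀A, hx₀⟩ := exists_mem_eqOn_of_finite hA hirr (hS.insert ρ) L
  have : Nontrivial E := ⟨ρ, 0, fun h0 => by simp [h0] at hρ⟩
  refine ⟨spectralRadius ℂ x₀,
    ne_top_of_le_ne_top ENNReal.coe_ne_top (spectrum.spectralRadius_le_nnnorm x₀), fun s hs => ?_⟩
  let D := transvection ((s⁻¹ - 1) • h) ρ
  obtain ⟨U, hUA, hUA', hU, hU'⟩ :=
    exists_unit_eqOn_transvection hA hirr (hS.union (hS.image (L ∘ₗ D))) hρ hs
  refine ⟨U * x₀ * ↑U⁻¹, A.mul_mem (A.mul_mem hUA hx₀A) hUA', ?_, fun w hw => ?_⟩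
  · simp only [spectralRadius, spectrum.units_conjugate]
  · have hx₀D : x₀ (D w) = L (D w) := by
      simp only [D, LinearMap.transvection.apply, map_add, map_smul,
        hx₀ (Set.mem_insert ρ S), hx₀ (Set.mem_insert_of_mem ρ hw)]
    change U.val (x₀ ((↑U⁻¹ : E →L[ℂ] E) w)) = _
    rw [hU' (Or.inl hw), hx₀D]
    exact hU (Or.inr ⟨w, hw, rfl⟩)

end Conjugation

section TraceIdentities

lemma hasEigenvalue_of_mem_spectrum_matrix {K V ι : Type*} [Field K] [AddCommGroup V] [Module K V]
    [Fintype ι] [DecidableEq ι] {T : Module.End K V} {p : ι → V} {q : ι → Module.Dual K V}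
    (hT : ∀ k, T (p k) = ∑ l, q l (p k) • p l) {μ : K} (hμ₀ : μ ≠ 0)
    (hμ : μ ∈ spectrum K (Matrix.of fun l k => q l (p k))) : T.HasEigenvalue μ := by
  rw [← spectrum_toLin', ← Module.End.hasEigenvalue_iff_mem_spectrum] at hμ
  obtain ⟨c, hc⟩ := hμ.exists_hasEigenvector
  have hq (l : ι) : q l (∑ k, c k • p k) = μ * c l := by
    simpa [mulVec, dotProduct, mul_comm] using congrFun hc.apply_eq_smul l
  refine Module.End.hasEigenvalue_of_hasEigenvector (x := ∑ k, c k • p k)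
    ⟨Module.End.mem_eigenspace_iff.2 ?_, fun h0 => hc.2 (funext fun l => ?_)⟩
  · calc T (∑ k, c k • p k) = ∑ l, q l (∑ k, c k • p k) • p l := by
          simp only [map_sum, map_smul, hT, Finset.smul_sum, Finset.sum_smul, smul_eq_mul, mul_smul]
          exact Finset.sum_comm
      _ = μ • ∑ k, c k • p k := by simp only [hq, mul_smul, Finset.smul_sum]
  · simpa [h0, hμ₀] using (hq l).symm

lemma norm_trace_pow_le {n : Type*} [Fintype n] [DecidableEq n] {M : Matrix n n ℂ} {R : ℝ}
    (h : ∀ μ ∈ spectrum ℂ M, ‖μ‖ ≤ R) {k : ℕ} (hk : 0 < k) :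
    ‖(M ^ k).trace‖ ≤ Fintype.card n * R ^ k := by
  have hroots : ∀ r ∈ (M ^ k).charpoly.roots.map norm, r ≤ R ^ k := by
    simp only [Multiset.mem_map, forall_exists_index, and_imp]
    rintro _ r hr rfl
    obtain ⟨μ, hμ, rfl⟩ := (spectrum.map_pow_of_pos M hk).subset
      (mem_spectrum_of_isRoot_charpoly (Polynomial.isRoot_of_mem_roots hr))
    simpa only [norm_pow] using pow_le_pow_left₀ (norm_nonneg μ) (h μ hμ) k
  calc ‖(M ^ k).trace‖ ≤ ((M ^ k).charpoly.roots.map norm).sum := by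
        rw [trace_eq_sum_roots_charpoly]
        exact norm_multiset_sum_le _
    _ ≤ Fintype.card n * R ^ k := by
        refine (Multiset.sum_le_card_nsmul _ _ hroots).trans_eq ?_
        rw [nsmul_eq_mul, Multiset.card_map, Polynomial.splits_iff_card_roots.1
          (IsAlgClosed.splits _), charpoly_natDegree_eq_dim]

lemma natDegree_eq_zero_of_forall_norm_eval_le {p : Polynomial ℂ} {C : ℝ}
    (h : ∀ s ≠ 0, ‖p.eval s‖ ≤ C) : p.natDegree = 0 := by
  have hbdd : Bornology.IsBounded (Set.range fun s => p.eval s) := by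
    refine isBounded_iff_forall_norm_le.2 ⟨max C ‖p.eval 0‖, ?_⟩
    rintro _ ⟨s, rfl⟩
    rcases eq_or_ne s 0 with rfl | hs
    · exact le_max_right _ _
    · exact (h s hs).trans (le_max_left _ _)
  have hconst : p = .C (p.eval 0) := Polynomial.funext fun s => by
    rw [p.differentiable.apply_eq_apply_of_bounded hbdd s 0, Polynomial.eval_C]
  rw [hconst, Polynomial.natDegree_C]

lemma coeff_eq_zero_of_forall_norm_sum_le {n : ℕ} (c : Fin (n + 1) → ℂ) {C : ℝ}
    (h : ∀ s : ℂ, s ≠ 0 → ‖∑ i : Fin (n + 1), s ^ i.val * c i‖ ≤ C) : ∀ i ≠ 0, c i = 0 := by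
  intro i hi
  have hdeg := natDegree_eq_zero_of_forall_norm_eval_le (C := C)
    (p := ∑ i : Fin (n + 1), Polynomial.C (c i) * Polynomial.X ^ i.val)
    fun s hs => by
      simpa only [Polynomial.eval_finsetSum, Polynomial.eval_mul, Polynomial.eval_C,
        Polynomial.eval_pow, Polynomial.eval_X, mul_comm] using h s hs
  simpa [Polynomial.finsetSum_coeff, Polynomial.coeff_C_mul, Polynomial.coeff_X_pow, Fin.val_inj]
    using Polynomial.coeff_eq_zero_of_natDegree_lt (hdeg.trans_lt (Fin.pos_iff_ne_zero.2 hi))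

section Blocks
variable {n : Type*} [Fintype n] (X Y Z W : Matrix n n ℂ) (s : ℂ)

lemma trace_fromBlocks : (fromBlocks X Y Z W).trace = X.trace + W.trace := by
  simp [trace]

variable [DecidableEq n]

lemma trace_fromBlocks_smul_pow_two : (fromBlocks Z (s • X) W (s • Y) ^ 2).trace =
    (Z * Z).trace + s * (2 * (X * W).trace) + s ^ 2 * (Y * Y).trace := by
  simp only [pow_two, fromBlocks_multiply, trace_fromBlocks, smul_mul, Matrix.mul_smul, trace_add,
    trace_smul, smul_eq_mul, trace_mul_comm W X]
  ring

lemma fromBlocks_smul_pow_two : fromBlocks Z (s • X) W (s • Y) ^ 2 =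
    fromBlocks (Z * Z + s • (X * W)) (s • (Z * X + s • (X * Y)))
      (W * Z + s • (Y * W)) (s • (W * X + s • (Y * Y))) := by
  simp only [pow_two, fromBlocks_multiply, smul_mul, Matrix.mul_smul, smul_add]

lemma trace_fromBlocks_smul_pow_three : (fromBlocks Z (s • X) W (s • Y) ^ 3).trace =
    (Z * Z * Z).trace + s * (3 * (Z * X * W).trace) + s ^ 2 * (3 * (X * Y * W).trace) +
      s ^ 3 * (Y * Y * Y).trace := by
  rw [pow_succ, fromBlocks_smul_pow_two]
  simp only [fromBlocks_multiply, trace_fromBlocks, smul_mul, Matrix.mul_smul, trace_add, smul_add,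
    trace_smul, smul_eq_mul, add_mul]
  rw [trace_mul_cycle X W Z, trace_mul_cycle W Z X, trace_mul_cycle X W Z,
    trace_mul_cycle Y W X, trace_mul_cycle W X Y, trace_mul_cycle Y W X]
  ring

lemma trace_fromBlocks_smul_pow_four : (fromBlocks Z (s • X) W (s • Y) ^ 4).trace =
    (Z * Z * Z * Z).trace + s * (4 * (Z * Z * X * W).trace) +
      s ^ 2 * (2 * ((X * W * X * W).trace + 2 * (Z * X * Y * W).trace)) +
      s ^ 3 * (4 * (X * Y * Y * W).trace) + s ^ 4 * (Y * Y * Y * Y).trace := by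
  have cyc (a b c d : Matrix n n ℂ) : (a * b * c * d).trace = (d * a * b * c).trace := by
    rw [trace_mul_comm (a * b * c) d, ← mul_assoc, ← mul_assoc]
  rw [show 4 = 2 * 2 from rfl, pow_mul, fromBlocks_smul_pow_two, trace_fromBlocks_smul_pow_two]
  simp only [smul_mul, Matrix.mul_smul, trace_add, trace_smul, smul_eq_mul, add_mul,
    mul_add, ← mul_assoc]
  rw [cyc X W Z Z, cyc Z X W Z, cyc W X W X, cyc X Y W Z, cyc Y Y W X, cyc X Y Y W]
  ring

end Blocks

/-- The trace identities that boundedness in `s` of the traces of the powers of the block matrix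
`[Z, sX; W, sY]` forces on its blocks. -/
def CrossTraces {n : Type*} [Fintype n] (X Y Z W : Matrix n n ℂ) : Prop :=
  (X * W).trace = 0 ∧ (Z * X * W).trace = 0 ∧ (X * Y * W).trace = 0 ∧
    (X * W * X * W).trace + 2 * (Z * X * Y * W).trace = 0

section CrossTraces
variable {n : Type*} [Fintype n]

lemma trace_eq_zero_and_crossTraces [DecidableEq n] {X Y Z W : Matrix n n ℂ}
    (h : ∀ k > 0, ∃ C : ℝ, ∀ s : ℂ, s ≠ 0 → ‖(fromBlocks Z (s • X) W (s • Y) ^ k).trace‖ ≤ C) :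
    Y.trace = 0 ∧ CrossTraces X Y Z W := by
  obtain ⟨C₁, h₁⟩ := h 1 one_pos
  obtain ⟨C₂, h₂⟩ := h 2 two_pos
  obtain ⟨C₃, h₃⟩ := h 3 three_pos
  obtain ⟨C₄, h₄⟩ := h 4 four_pos
  simp only [pow_one, trace_fromBlocks, trace_smul, smul_eq_mul] at h₁
  simp only [trace_fromBlocks_smul_pow_two] at h₂
  simp only [trace_fromBlocks_smul_pow_three] at h₃
  simp only [trace_fromBlocks_smul_pow_four] at h₄
  have k₁ := coeff_eq_zero_of_forall_norm_sum_le ![Z.trace, Y.trace] (C := C₁)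
    (by simpa [Fin.sum_univ_succ] using h₁) 1 (by decide)
  have k₂ := coeff_eq_zero_of_forall_norm_sum_le ![(Z * Z).trace, 2 * (X * W).trace,
    (Y * Y).trace] (C := C₂) (by simpa [Fin.sum_univ_succ, add_assoc] using h₂) 1
    (by decide)
  have k₃ := coeff_eq_zero_of_forall_norm_sum_le ![(Z * Z * Z).trace, 3 * (Z * X * W).trace,
    3 * (X * Y * W).trace, (Y * Y * Y).trace] (C := C₃)
    (by simpa [Fin.sum_univ_succ, add_assoc] using h₃)
  have k₄ := coeff_eq_zero_of_forall_norm_sum_le ![(Z * Z * Z * Z).trace,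
    4 * (Z * Z * X * W).trace, 2 * ((X * W * X * W).trace + 2 * (Z * X * Y * W).trace),
    4 * (X * Y * Y * W).trace, (Y * Y * Y * Y).trace] (C := C₄)
    (by simpa [Fin.sum_univ_succ, add_assoc] using h₄) 2 (by decide)
  have k₃₁ := k₃ 1 (by decide)
  have k₃₂ := k₃ 2 (by decide)
  exact ⟨by simpa using k₁, by simpa using k₂, by simpa using k₃₁, by simpa using k₃₂,
    by simpa using k₄⟩

lemma CrossTraces.of_continuous {X Y Z W : ℂ → Matrix n n ℂ} (hX : Continuous X)
    (hY : Continuous Y) (hZ : Continuous Z) (hW : Continuous W)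
    (h : ∀ ε ≠ 0, CrossTraces (X ε) (Y ε) (Z ε) (W ε)) : CrossTraces (X 0) (Y 0) (Z 0) (W 0) := by
  have hclosed : IsClosed {ε | CrossTraces (X ε) (Y ε) (Z ε) (W ε)} := by
    refine .inter ?_ (.inter ?_ (.inter ?_ ?_)) <;>
      exact isClosed_eq (by fun_prop) continuous_const
  exact (hclosed.closure_subset_iff (s := {0}ᶜ)).2 h (dense_compl_singleton 0 0)

end CrossTraces

end TraceIdentities

section Separation
variable {K V : Type*} [Field K] [AddCommGroup V] [Module K V]

lemma exists_apply_eq_zero_apply_eq_one_of_notMem_span {f g : Module.Dual K V}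
    (h : g ∉ Submodule.span K {f}) : ∃ ρ, f ρ = 0 ∧ g ρ = 1 := by
  have hker : ¬ LinearMap.ker f ≤ LinearMap.ker g := fun hk => h <| by
    simpa using mem_span_of_iInf_ker_le_ker (L := fun _ : Unit => f) (by simpa using hk)
  obtain ⟨z, hfz, hgz⟩ := SetLike.not_le_iff_exists.1 hker
  rw [LinearMap.mem_ker] at hfz hgz
  exact ⟨(g z)⁻¹ • z, by simp [hfz], by simp [hgz]⟩

lemma exists_eq_zero_eq_one_of_notMem_span {V' : Type*} [AddCommGroup V'] [Module K V']
    {B : V' →ₗ[K] V →ₗ[K] K} (hB : B.SeparatingRight) {v w : V}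
    (h : v ∉ Submodule.span K {w}) : ∃ f, B f w = 0 ∧ B f v = 1 := by
  refine exists_apply_eq_zero_apply_eq_one_of_notMem_span (f := B.flip w) (g := B.flip v)
    fun hv => h ?_
  obtain ⟨c, hc⟩ := Submodule.mem_span_singleton.1 hv
  refine Submodule.mem_span_singleton.2 ⟨c, LinearMap.separatingRight_iff_flip_ker_eq_bot.1 hB |>
    LinearMap.ker_eq_bot.1 <| ?_⟩
  rw [map_smul, hc]

lemma notMem_span_add_smul {θ η η₀ : V} (hθ : θ ≠ 0) (hη : θ ∈ Submodule.span K {η})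
    (hη₀ : η₀ ∉ Submodule.span K {θ}) {ε : K} (hε : ε ≠ 0) :
    θ ∉ Submodule.span K {η + ε • η₀} := by
  have mem_comm {w : V} (h : θ ∈ Submodule.span K {w}) : w ∈ Submodule.span K {θ} := by
    obtain ⟨c, hc⟩ := Submodule.mem_span_singleton.1 h
    have hc₀ : c ≠ 0 := by
      rintro rfl
      exact hθ (by rw [← hc, zero_smul])
    exact Submodule.mem_span_singleton.2 ⟨c⁻¹, by rw [← hc, inv_smul_smul₀ hc₀]⟩
  intro h
  have hmem := mem_comm h
  rw [Submodule.add_mem_iff_right _ (mem_comm hη), Submodule.smul_mem_iff _ hε] at hmem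
  exact hη₀ hmem

lemma exists_notMem_span_singleton (h : 1 < Module.rank K V) (v : V) :
    ∃ w, w ∉ Submodule.span K {v} := by
  have hlt : Module.rank K (Submodule.span K {v}) < Module.rank K V :=
    (rank_span_le {v}).trans_lt (by rwa [Cardinal.mk_singleton])
  obtain ⟨w, hw⟩ := Submodule.exists_smul_notMem_of_rank_lt hlt
  exact ⟨w, by simpa using hw 1 one_ne_zero⟩

end Separation

section Scaling
variable {E : Type*} [NormedAddCommGroup E] [NormedSpace ℂ E] [CompleteSpace E]

lemma exists_scaling_family {A : Subalgebra ℂ (E →L[ℂ] E)}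
    (hA : IsClosed (A : Set (E →L[ℂ] E)))
    (hirr : ∀ ζ : E, ζ ≠ 0 → ∀ η : E, ∃ a ∈ A, a ζ = η) {S : Set E} (hS : S.Finite)
    {f g : Module.Dual ℂ E} {θ η : E} (hgθ : g θ = 0)
    (h : f θ = 0 ∧ θ ∉ Submodule.span ℂ {η} ∨ g η = 0 ∧ g ∉ Submodule.span ℂ {f}) :
    ∃ r ≠ ∞, ∀ s : ℂ, s ≠ 0 → ∃ x ∈ A, spectralRadius ℂ x = r ∧
      ∀ w ∈ S, x w = f w • η + (s * g w) • θ := by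
  let L : E →ₗ[ℂ] E := f.smulRight η + g.smulRight θ
  rcases h with ⟨hfθ, hθ⟩ | ⟨hgη, hg⟩
  · obtain ⟨h, hη, hhθ⟩ := exists_eq_zero_eq_one_of_notMem_span
      (B := (LinearMap.id : Module.Dual ℂ E →ₗ[ℂ] E →ₗ[ℂ] ℂ))
      (fun z hz => (Module.forall_dual_apply_eq_zero_iff ℂ z).1 hz) hθ
    obtain ⟨r, hr, hx⟩ := exists_spectralRadius_eq_eqOn_conj hA hirr hS L hhθ
    refine ⟨r, hr, fun s hs => (hx s hs).imp fun x ⟨hxA, hxr, hxS⟩ => ⟨hxA, hxr, fun w hw => ?_⟩⟩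
    simp only [LinearMap.id_apply] at hη hhθ
    simp [hxS hw, L, LinearMap.transvection, hη, hhθ, hfθ, hgθ]
    module
  · obtain ⟨ρ, hfρ, hgρ⟩ := exists_apply_eq_zero_apply_eq_one_of_notMem_span hg
    obtain ⟨r, hr, hx⟩ := exists_spectralRadius_eq_eqOn_conj hA hirr hS L hgρ
    refine ⟨r, hr, fun s hs => (hx s⁻¹ (inv_ne_zero hs)).imp
      fun x ⟨hxA, hxr, hxS⟩ => ⟨hxA, hxr, fun w hw => ?_⟩⟩
    simp [hxS hw, L, LinearMap.transvection, hfρ, hgρ, hgη, hgθ]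
    module

end Scaling

section Coefficients
variable {E ι : Type*} [NormedAddCommGroup E] [NormedSpace ℂ E]

/-- The matrix of coefficients `f (v i (u j θ))`, as a bilinear function of the functional `f` and
the vector `θ`. For `u v : ι → B(E)` it represents the family of all products `v i u j`. -/
def coeffMatrix (u v : ι → E →L[ℂ] E) : Module.Dual ℂ E →ₗ[ℂ] E →ₗ[ℂ] Matrix ι ι ℂ :=
  LinearMap.mk₂ ℂ (fun f θ => Matrix.of fun i j => f (v i (u j θ)))
    (by intros; ext; simp) (by intros; ext; simp) (by intros; ext; simp) (by intros; ext; simp)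

lemma coeffMatrix_apply (u v : ι → E →L[ℂ] E) (f : Module.Dual ℂ E) (θ : E) (i j : ι) :
    coeffMatrix u v f θ i j = f (v i (u j θ)) := rfl

variable {u v : ι → E →L[ℂ] E} [Fintype ι] [CompleteSpace E]

lemma mem_spectrum_sum_of_mem_spectrum_fromBlocks [DecidableEq ι] {x : E →L[ℂ] E}
    {f g : Module.Dual ℂ E} {θ η : E}
    (hxη : ∀ i j, x (v i (u j η)) = f (v i (u j η)) • η + g (v i (u j η)) • θ)
    (hxθ : ∀ i j, x (v i (u j θ)) = f (v i (u j θ)) • η + g (v i (u j θ)) • θ)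
    {μ : ℂ} (hμ₀ : μ ≠ 0) (hμ : μ ∈ spectrum ℂ (fromBlocks (coeffMatrix u v f η)
      (coeffMatrix u v f θ) (coeffMatrix u v g η) (coeffMatrix u v g θ))) :
    μ ∈ spectrum ℂ (∑ i, u i * x * v i) := by
  let p : ι ⊕ ι → E := Sum.elim (fun j => u j η) fun j => u j θ
  let q : ι ⊕ ι → Module.Dual ℂ E :=
    Sum.elim (fun i => f ∘ₗ (v i).toLinearMap) fun i => g ∘ₗ (v i).toLinearMap
  have hblocks : fromBlocks (coeffMatrix u v f η) (coeffMatrix u v f θ)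
      (coeffMatrix u v g η) (coeffMatrix u v g θ) = Matrix.of fun l k => q l (p k) := by
    ext (i | i) (j | j) <;> rfl
  have hx (i : ι) : ∀ k, x (v i (p k)) = f (v i (p k)) • η + g (v i (p k)) • θ
    | .inl j => hxη i j
    | .inr j => hxθ i j
  have hT (k : ι ⊕ ι) :
      (∑ i, u i * x * v i : E →L[ℂ] E).toLinearMap (p k) = ∑ l, q l (p k) • p l := by
    simp only [ContinuousLinearMap.coe_coe, _root_.sum_apply, mul_apply_eq_comp, hx, map_add,
      map_smul, Finset.sum_add_distrib, Fintype.sum_sum_type]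
    rfl
  rw [ContinuousLinearMap.spectrum_eq]
  exact (hasEigenvalue_of_mem_spectrum_matrix hT hμ₀ (hblocks ▸ hμ)).mem_spectrum

lemma exists_norm_trace_pow_le [DecidableEq ι] {A : Subalgebra ℂ (E →L[ℂ] E)}
    (hA : IsClosed (A : Set (E →L[ℂ] E)))
    (hirr : ∀ ζ : E, ζ ≠ 0 → ∀ η : E, ∃ a ∈ A, a ζ = η) {M : ℝ≥0}
    (hM : ∀ x : A, spectralRadius ℂ (∑ i, u i * (x : E →L[ℂ] E) * v i) ≤
      M * spectralRadius ℂ (x : E →L[ℂ] E))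
    {f g : Module.Dual ℂ E} {θ η : E} (hgθ : g θ = 0)
    (h : f θ = 0 ∧ θ ∉ Submodule.span ℂ {η} ∨ g η = 0 ∧ g ∉ Submodule.span ℂ {f})
    {k : ℕ} (hk : 0 < k) : ∃ C : ℝ, ∀ s : ℂ, s ≠ 0 →
      ‖(fromBlocks (coeffMatrix u v f η) (s • coeffMatrix u v f θ)
        (coeffMatrix u v g η) (s • coeffMatrix u v g θ) ^ k).trace‖ ≤ C := by
  obtain ⟨r, hr, hx⟩ := exists_scaling_family hA hirr (((Set.finite_range
    fun p : ι × ι => v p.1 (u p.2 η))).union (Set.finite_range fun p : ι × ι => v p.1 (u p.2 θ)))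
    hgθ h
  refine ⟨_, fun s hs => norm_trace_pow_le (R := (M * r).toReal) (fun μ hμ => ?_) hk⟩
  obtain ⟨x, hxA, hxr, hxS⟩ := hx s hs
  rcases eq_or_ne μ 0 with rfl | hμ₀
  · exact norm_zero.trans_le ENNReal.toReal_nonneg
  have hμT : μ ∈ spectrum ℂ (∑ i, u i * x * v i) := by
    simp only [← map_smul] at hμ
    refine mem_spectrum_sum_of_mem_spectrum_fromBlocks (fun i j => ?_) (fun i j => ?_) hμ₀ hμ
    · rw [hxS _ (.inl ⟨(i, j), rfl⟩)]
      module
    · simp only [map_smul, hxS _ (.inr ⟨(i, j), rfl⟩), smul_eq_mul]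
      module
  have hle := (le_iSup₂ (f := fun (z : ℂ) (_ : z ∈ spectrum ℂ (∑ i, u i * x * v i)) =>
    (‖z‖₊ : ℝ≥0∞)) μ hμT).trans (hM ⟨x, hxA⟩)
  rw [hxr] at hle
  simpa only [ENNReal.coe_toReal, coe_nnnorm] using
    ENNReal.toReal_mono (ENNReal.mul_ne_top ENNReal.coe_ne_top hr) hle

lemma coeffMatrix_trace_eq_zero_and_crossTraces {A : Subalgebra ℂ (E →L[ℂ] E)}
    (hA : IsClosed (A : Set (E →L[ℂ] E)))
    (hirr : ∀ ζ : E, ζ ≠ 0 → ∀ η : E, ∃ a ∈ A, a ζ = η) {M : ℝ≥0}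
    (hM : ∀ x : A, spectralRadius ℂ (∑ i, u i * (x : E →L[ℂ] E) * v i) ≤
      M * spectralRadius ℂ (x : E →L[ℂ] E))
    {f g : Module.Dual ℂ E} {θ η : E} (hgθ : g θ = 0)
    (h : f θ = 0 ∧ θ ∉ Submodule.span ℂ {η} ∨ g η = 0 ∧ g ∉ Submodule.span ℂ {f}) :
    (coeffMatrix u v g θ).trace = 0 ∧ CrossTraces (coeffMatrix u v f θ) (coeffMatrix u v g θ)
      (coeffMatrix u v f η) (coeffMatrix u v g η) := by
  classical
  exact trace_eq_zero_and_crossTraces fun _ hk => exists_norm_trace_pow_le hA hirr hM hgθ h hk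

lemma trace_coeffMatrix_eq_zero {A : Subalgebra ℂ (E →L[ℂ] E)}
    (hA : IsClosed (A : Set (E →L[ℂ] E)))
    (hirr : ∀ ζ : E, ζ ≠ 0 → ∀ η : E, ∃ a ∈ A, a ζ = η) {M : ℝ≥0}
    (hM : ∀ x : A, spectralRadius ℂ (∑ i, u i * (x : E →L[ℂ] E) * v i) ≤
      M * spectralRadius ℂ (x : E →L[ℂ] E))
    {g : Module.Dual ℂ E} {θ : E} (hgθ : g θ = 0) : (coeffMatrix u v g θ).trace = 0 := by
  rcases eq_or_ne θ 0 with rfl | hθ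
  · rw [map_zero, Matrix.trace_zero]
  · exact (coeffMatrix_trace_eq_zero_and_crossTraces hA hirr hM (f := 0) (η := 0) hgθ
      (.inl ⟨rfl, by simpa using hθ⟩)).1

lemma crossTraces_coeffMatrix (hE : 1 < Module.rank ℂ E)
    (hE' : 1 < Module.rank ℂ (Module.Dual ℂ E))
    {A : Subalgebra ℂ (E →L[ℂ] E)} (hA : IsClosed (A : Set (E →L[ℂ] E)))
    (hirr : ∀ ζ : E, ζ ≠ 0 → ∀ η : E, ∃ a ∈ A, a ζ = η) {M : ℝ≥0}
    (hM : ∀ x : A, spectralRadius ℂ (∑ i, u i * (x : E →L[ℂ] E) * v i) ≤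
      M * spectralRadius ℂ (x : E →L[ℂ] E))
    {f g : Module.Dual ℂ E} {θ η : E} (hgθ : g θ = 0) (h : f θ = 0 ∨ g η = 0) :
    CrossTraces (coeffMatrix u v f θ) (coeffMatrix u v g θ)
      (coeffMatrix u v f η) (coeffMatrix u v g η) := by
  have cross {f' : Module.Dual ℂ E} {η' : E} (h : f' θ = 0 ∧ θ ∉ Submodule.span ℂ {η'} ∨
      g η' = 0 ∧ g ∉ Submodule.span ℂ {f'}) :=
    (coeffMatrix_trace_eq_zero_and_crossTraces hA hirr hM hgθ h).2
  rcases h with hfθ | hgη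
  · rcases eq_or_ne θ 0 with rfl | hθ
    · simp [CrossTraces]
    by_cases hη : θ ∈ Submodule.span ℂ {η}
    · obtain ⟨η₀, hη₀⟩ := exists_notMem_span_singleton hE θ
      simpa using CrossTraces.of_continuous (X := fun _ => coeffMatrix u v f θ)
        (Y := fun _ => coeffMatrix u v g θ)
        (Z := fun ε => coeffMatrix u v f η + ε • coeffMatrix u v f η₀)
        (W := fun ε => coeffMatrix u v g η + ε • coeffMatrix u v g η₀)
        (by fun_prop) (by fun_prop) (by fun_prop) (by fun_prop) fun ε hε => by
          simpa only [map_add, map_smul] using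
            cross (.inl ⟨hfθ, notMem_span_add_smul hθ hη hη₀ hε⟩)
    · exact cross (.inl ⟨hfθ, hη⟩)
  · rcases eq_or_ne g 0 with rfl | hg
    · simp [CrossTraces]
    by_cases hf : g ∈ Submodule.span ℂ {f}
    · obtain ⟨f₀, hf₀⟩ := exists_notMem_span_singleton hE' g
      simpa using CrossTraces.of_continuous
        (X := fun ε => coeffMatrix u v f θ + ε • coeffMatrix u v f₀ θ)
        (Y := fun _ => coeffMatrix u v g θ)
        (Z := fun ε => coeffMatrix u v f η + ε • coeffMatrix u v f₀ η)
        (W := fun _ => coeffMatrix u v g η)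
        (by fun_prop) (by fun_prop) (by fun_prop) (by fun_prop) fun ε hε => by
          simpa only [map_add, map_smul, LinearMap.add_apply, LinearMap.smul_apply] using
            cross (.inr ⟨hgη, notMem_span_add_smul hg hf hf₀ hε⟩)
    · exact cross (.inr ⟨hgη, hf⟩)

end Coefficients

section NormalForms

lemma exists_units_conj_eq {n K : Type*} [Fintype n] [DecidableEq n] [Field K] {X Y : Matrix n n K}
    {b : n → n → K} (hb : LinearIndependent K b) (h : ∀ j, X *ᵥ b j = ∑ i, Y i j • b i) :
    ∃ P : GL n K, P.val * X * P⁻¹.val = Y := by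
  obtain ⟨Q, hQ⟩ := linearIndependent_cols_iff_isUnit.1
    (show LinearIndependent K (of b)ᵀ.col from hb)
  have hXQ : X * Q.val = Q.val * Y := by
    rw [hQ]
    ext k j
    simpa [mul_apply, mulVec, dotProduct, mul_comm] using congrFun (h j) k
  refine ⟨Q⁻¹, ?_⟩
  rw [inv_inv, Matrix.mul_assoc, hXQ, ← Matrix.mul_assoc, ← Units.val_mul, inv_mul_cancel,
    Units.val_one, Matrix.one_mul]

lemma mul_mul_self_eq_zero_of_trace_eq_zero {X : Matrix (Fin 3) (Fin 3) ℂ} (h₁ : X.trace = 0)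
    (h₂ : (X * X).trace = 0) (h₃ : (X * X * X).trace = 0) : X * X * X = 0 := by
  have cayley_hamilton : X * X * X = X.trace • (X * X) -
      ((X.trace ^ 2 - (X * X).trace) / 2) • X +
        ((X.trace ^ 3 - 3 * X.trace * (X * X).trace + 2 * (X * X * X).trace) / 6) • 1 := by
    ext i j
    fin_cases i <;> fin_cases j <;>
      simp [trace_fin_three, mul_apply, Fin.sum_univ_three] <;> ring
  rw [cayley_hamilton, h₁, h₂, h₃]
  simp

lemma exists_mulVec_ne_zero {m n K : Type*} [Fintype n] [Field K] {X : Matrix m n K}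
    (h : X ≠ 0) : ∃ w, X *ᵥ w ≠ 0 := by
  classical
  by_contra! hX
  exact h (Matrix.ext_of_mulVec_single fun i => by rw [hX, zero_mulVec])

lemma exists_units_conj_eq_jordan {K : Type*} [Field K] {X : Matrix (Fin 3) (Fin 3) K}
    (h₃ : X * X * X = 0) (h₂ : X * X ≠ 0) :
    ∃ P : GL (Fin 3) K, P.val * X * P⁻¹.val = !![0, 1, 0; 0, 0, 1; 0, 0, 0] := by
  obtain ⟨w, hw⟩ := exists_mulVec_ne_zero h₂
  have hw₃ : X *ᵥ (X *ᵥ (X *ᵥ w)) = 0 := by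
    rw [mulVec_mulVec, mulVec_mulVec, h₃, zero_mulVec]
  rw [← mulVec_mulVec] at hw
  refine exists_units_conj_eq (b := ![X *ᵥ (X *ᵥ w), X *ᵥ w, w]) ?_ ?_
  · refine Fintype.linearIndependent_iff.2 fun c hc => ?_
    simp only [Fin.sum_univ_three, cons_val_zero, cons_val_one, cons_val_two, tail_cons,
      head_cons] at hc
    have hXc := congrArg (X *ᵥ ·) hc
    have hXXc := congrArg (X *ᵥ ·) hXc
    simp only [mulVec_add, mulVec_smul, hw₃, mulVec_zero, smul_zero, zero_add] at hXc hXXc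
    have hc₂ : c 2 = 0 := (smul_eq_zero.1 hXXc).resolve_right hw
    rw [hc₂, zero_smul, add_zero] at hXc hc
    have hc₁ : c 1 = 0 := (smul_eq_zero.1 hXc).resolve_right hw
    rw [hc₁, zero_smul, add_zero] at hc
    have hc₀ : c 0 = 0 := (smul_eq_zero.1 hc).resolve_right hw
    exact Fin.forall_fin_succ.2 ⟨hc₀, Fin.forall_fin_two.2 ⟨hc₁, hc₂⟩⟩
  · intro j
    fin_cases j <;> simp [-mulVec_mulVec, Fin.sum_univ_three, hw₃]

lemma exists_units_conj_eq_single {K : Type*} [Field K] {X : Matrix (Fin 3) (Fin 3) K}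
    (h₂ : X * X = 0) (h₁ : X ≠ 0) :
    ∃ P : GL (Fin 3) K, P.val * X * P⁻¹.val = !![0, 0, 1; 0, 0, 0; 0, 0, 0] := by
  obtain ⟨w, hw⟩ := exists_mulVec_ne_zero h₁
  have hX (z) : X *ᵥ (X *ᵥ z) = 0 := by rw [mulVec_mulVec, h₂, zero_mulVec]
  obtain ⟨k, hk, hkw⟩ : ∃ k, X *ᵥ k = 0 ∧ k ∉ Submodule.span K {X *ᵥ w} := by
    have hrange : LinearMap.range X.mulVecLin ≤ LinearMap.ker X.mulVecLin := by
      rintro _ ⟨z, rfl⟩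
      exact hX z
    have hnot : ¬ LinearMap.ker X.mulVecLin ≤ Submodule.span K {X *ᵥ w} := fun hle => by
      have h₁ := Submodule.finrank_mono hle
      have h₂ := Submodule.finrank_mono hrange
      have h₃ := LinearMap.finrank_range_add_finrank_ker X.mulVecLin
      rw [finrank_span_singleton hw] at h₁
      rw [Module.finrank_fin_fun] at h₃
      omega
    exact SetLike.not_le_iff_exists.1 hnot
  refine exists_units_conj_eq (b := ![X *ᵥ w, k, w]) ?_ ?_
  · refine Fintype.linearIndependent_iff.2 fun c hc => ?_
    simp only [Fin.sum_univ_three, cons_val_zero, cons_val_one, cons_val_two, tail_cons,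
      head_cons] at hc
    have hXc := congrArg (X *ᵥ ·) hc
    simp only [mulVec_add, mulVec_smul, hX, hk, mulVec_zero, smul_zero, zero_add] at hXc
    have hc₂ : c 2 = 0 := (smul_eq_zero.1 hXc).resolve_right hw
    rw [hc₂, zero_smul, add_zero] at hc
    have hc₁ : c 1 = 0 := by
      by_contra hne
      refine hkw ((Submodule.smul_mem_iff _ hne).1 ?_)
      rw [eq_neg_of_add_eq_zero_right hc]
      exact neg_mem (Submodule.smul_mem _ _ (Submodule.mem_span_singleton_self _))
    rw [hc₁, zero_smul, add_zero] at hc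
    have hc₀ : c 0 = 0 := (smul_eq_zero.1 hc).resolve_right hw
    exact Fin.forall_fin_succ.2 ⟨hc₀, Fin.forall_fin_two.2 ⟨hc₁, hc₂⟩⟩
  · intro j
    fin_cases j <;> simp [-mulVec_mulVec, Fin.sum_univ_three, hX, hk]

end NormalForms

section TraceSystem
variable {n V V' : Type*} [AddCommGroup V] [Module ℂ V] [AddCommGroup V'] [Module ℂ V']

/-- The dual of a bilinear family of matrices: its arguments are exchanged and its values are
transposed. -/
def dualFamily (N : V' →ₗ[ℂ] V →ₗ[ℂ] Matrix n n ℂ) : V →ₗ[ℂ] V' →ₗ[ℂ] Matrix n n ℂ :=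
  N.flip.compr₂ (transposeLinearEquiv n n ℂ ℂ).toLinearMap

lemma dualFamily_apply (N : V' →ₗ[ℂ] V →ₗ[ℂ] Matrix n n ℂ) (θ : V) (f : V') :
    dualFamily N θ f = (N f θ)ᵀ := rfl

/-- The bilinear form given by one entry of a bilinear family of matrices. -/
def entry (N : V' →ₗ[ℂ] V →ₗ[ℂ] Matrix n n ℂ) (i j : n) : V' →ₗ[ℂ] V →ₗ[ℂ] ℂ :=
  N.compr₂ (entryLinearMap ℂ ℂ i j)

lemma entry_apply (N : V' →ₗ[ℂ] V →ₗ[ℂ] Matrix n n ℂ) (i j : n) (f : V') (θ : V) :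
    entry N i j f θ = N f θ i j := rfl

variable [Fintype n]

/-- What spectral boundedness says about the matrices `N f θ = (f (v i (u j θ)))` of an elementary
operator, `B` being the evaluation pairing. The notion is self-dual. -/
structure IsTraceSystem (B : V' →ₗ[ℂ] V →ₗ[ℂ] ℂ) (N : V' →ₗ[ℂ] V →ₗ[ℂ] Matrix n n ℂ) :
    Prop where
  nondegenerate : B.Nondegenerate
  three_lt_rank : 3 < Module.rank ℂ V
  three_lt_rank' : 3 < Module.rank ℂ V'
  trace_eq_zero {f θ} : B f θ = 0 → (N f θ).trace = 0
  crossTraces {f g θ η} : B g θ = 0 → (B f θ = 0 ∨ B g η = 0) →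
    CrossTraces (N f θ) (N g θ) (N f η) (N g η)

variable {B : V' →ₗ[ℂ] V →ₗ[ℂ] ℂ} {N : V' →ₗ[ℂ] V →ₗ[ℂ] Matrix n n ℂ}

lemma IsTraceSystem.dual (hN : IsTraceSystem B N) : IsTraceSystem B.flip (dualFamily N) where
  nondegenerate := LinearMap.flip_nondegenerate.2 hN.nondegenerate
  three_lt_rank := hN.three_lt_rank'
  three_lt_rank' := hN.three_lt_rank
  trace_eq_zero h := by rw [dualFamily_apply, trace_transpose, hN.trace_eq_zero h]
  crossTraces {f g θ η} h h' := by
    obtain ⟨h₁, h₂, h₃, h₄⟩ := hN.crossTraces (f := η) (g := θ) (θ := g) (η := f) h h'.symm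
    simp only [CrossTraces, dualFamily_apply, ← transpose_mul, trace_transpose]
    refine ⟨h₁, ?_, ?_, ?_⟩
    · rwa [← Matrix.mul_assoc, trace_mul_cycle]
    · rwa [← Matrix.mul_assoc]
    · rw [← h₄]
      simp only [Matrix.mul_assoc]
      rw [trace_mul_comm (N η f)]
      simp only [Matrix.mul_assoc]

lemma IsTraceSystem.exists_eq_zero_eq_one (hN : IsTraceSystem B N) {v w : V}
    (h : v ∉ Submodule.span ℂ {w}) : ∃ f, B f w = 0 ∧ B f v = 1 :=
  exists_eq_zero_eq_one_of_notMem_span hN.nondegenerate.2 h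

lemma IsTraceSystem.exists_apply_eq_one (hN : IsTraceSystem B N) {v : V} (h : v ≠ 0) :
    ∃ f, B f v = 1 := by
  obtain ⟨f, -, hf⟩ := hN.exists_eq_zero_eq_one (v := v) (w := 0) (by simpa using h)
  exact ⟨f, hf⟩

lemma IsTraceSystem.exists_add_eq (hN : IsTraceSystem B N) {θ₁ θ₂ : V}
    (h : θ₁ ∉ Submodule.span ℂ {θ₂}) (g : V') :
    ∃ g₁ g₂, g₁ + g₂ = g ∧ B g₁ θ₁ = 0 ∧ B g₂ θ₂ = 0 := by
  obtain ⟨g₀, h₂, h₁⟩ := hN.exists_eq_zero_eq_one h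
  exact ⟨g - B g θ₁ • g₀, B g θ₁ • g₀, sub_add_cancel _ _, by simp [h₁], by simp [h₂]⟩

lemma exists_ne_zero_forall_eq_zero {K W : Type*} [Field K] [AddCommGroup W] [Module K W] {k : ℕ}
    (h : k < Module.rank K W) (l : Fin k → Module.Dual K W) : ∃ v ≠ 0, ∀ i, l i v = 0 := by
  have hker : LinearMap.ker (LinearMap.pi l) ≠ ⊥ := fun hbot => h.not_ge <| by
    simpa using LinearMap.lift_rank_le_of_injective (LinearMap.pi l) (LinearMap.ker_eq_bot.1 hbot)
  obtain ⟨v, hv, hne⟩ := Submodule.exists_mem_ne_zero_of_ne_bot hker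
  exact ⟨v, hne, fun i => congrFun hv i⟩

lemma IsTraceSystem.exists_eq_smul {W : Type*} [AddCommGroup W] [Module ℂ W]
    (hN : IsTraceSystem B N) {F : V' →ₗ[ℂ] V →ₗ[ℂ] W}
    (h : ∀ f θ, B f θ = 0 → F f θ = 0) : ∃ m : W, ∀ f θ, F f θ = B f θ • m := by
  obtain ⟨θ₀, hθ₀, -⟩ := exists_ne_zero_forall_eq_zero hN.three_lt_rank 0
  obtain ⟨f₀, hf₀⟩ := hN.exists_apply_eq_one hθ₀
  have eq_smul_of_apply_eq_one {f₁ θ₁} (h₁ : B f₁ θ₁ = 1) (f θ) (hθ : B f₁ θ = 1) :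
      F f θ = B f θ • F f₁ θ₁ := by
    have hl := h (f - B f θ • f₁) θ (by simp [hθ])
    have hr := h f₁ (θ - θ₁) (by simp [h₁, hθ])
    simp only [map_sub, map_smul, LinearMap.sub_apply, LinearMap.smul_apply, sub_eq_zero] at hl hr
    rw [hl, hr]
  refine ⟨F f₀ θ₀, fun f θ => ?_⟩
  have hθ := eq_smul_of_apply_eq_one hf₀ f (θ + (1 - B f₀ θ) • θ₀) (by simp [hf₀])
  have hθ₀ := eq_smul_of_apply_eq_one hf₀ f θ₀ hf₀
  simp only [map_add, map_smul, hθ₀, smul_eq_mul, add_smul, mul_smul] at hθ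
  exact add_right_cancel hθ

variable {f g : V'} {θ : V}

lemma IsTraceSystem.trace_mul_mul_eq_zero_right (hN : IsTraceSystem B N) (hf : B f θ = 0)
    (hg : B g θ = 0) (η : V) : (N f θ * N g θ * N g η).trace = 0 :=
  (hN.crossTraces hg (.inl hf)).2.2.1

lemma IsTraceSystem.trace_mul_mul_add_eq_zero (hN : IsTraceSystem B N) (hf : B f θ = 0)
    (hg : B g θ = 0) (η : V) :
    (N f θ * N f θ * N g η).trace + (N f θ * N g θ * N f η).trace = 0 := by
  have hfg : B (f + g) θ = 0 := by simp [hf, hg]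
  have h := hN.trace_mul_mul_eq_zero_right hf hfg η
  have hff := hN.trace_mul_mul_eq_zero_right hf hf η
  have hfgg := hN.trace_mul_mul_eq_zero_right hf hg η
  simp only [map_add, LinearMap.add_apply, Matrix.add_mul, Matrix.mul_add, trace_add] at h
  linear_combination h - hff - hfgg

lemma IsTraceSystem.trace_mul_mul_add_eq_zero' (hN : IsTraceSystem B N) (hf : B f θ = 0)
    (hg : B g θ = 0) (η : V) :
    (N f θ * N g η * N g η).trace + (N f η * N g θ * N g η).trace = 0 := by
  have hfg : B (f + g) θ = 0 := by simp [hf, hg]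
  have h := (hN.crossTraces (η := η) hg (.inl hfg)).2.1
  have hfg' := (hN.crossTraces (η := η) hg (.inl hf)).2.1
  have hgg := (hN.crossTraces (η := η) hg (.inl hg)).2.1
  simp only [map_add, LinearMap.add_apply, Matrix.add_mul, Matrix.mul_add, trace_add] at h
  rw [trace_mul_cycle (N f θ)]
  linear_combination h - hfg' - hgg

lemma IsTraceSystem.trace_mul_eq_zero (hN : IsTraceSystem B N) (hf : B f θ = 0)
    (hg : B g θ = 0) (η : V) : (N f θ * N g η).trace = 0 :=
  (hN.crossTraces hg (.inl hf)).1

end TraceSystem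

section Conjugation
variable {n V V' : Type*} [Fintype n] [DecidableEq n] [AddCommGroup V] [Module ℂ V]
  [AddCommGroup V'] [Module ℂ V']

/-- The family `f, θ ↦ P * N f θ * P⁻¹`. -/
def conjFamily (P : GL n ℂ) (N : V' →ₗ[ℂ] V →ₗ[ℂ] Matrix n n ℂ) :
    V' →ₗ[ℂ] V →ₗ[ℂ] Matrix n n ℂ :=
  N.compr₂ (LinearMap.mulLeftRight ℂ (P.val, P⁻¹.val))

lemma conjFamily_apply (P : GL n ℂ) (N : V' →ₗ[ℂ] V →ₗ[ℂ] Matrix n n ℂ) (f : V') (θ : V) :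
    conjFamily P N f θ = P.val * N f θ * P⁻¹.val := rfl

lemma conjFamily_conjFamily (P Q : GL n ℂ) (N : V' →ₗ[ℂ] V →ₗ[ℂ] Matrix n n ℂ) :
    conjFamily Q (conjFamily P N) = conjFamily (Q * P) N := by
  ext1 f
  ext1 θ
  simp only [conjFamily_apply, _root_.mul_inv_rev, Units.val_mul, Matrix.mul_assoc]

lemma exists_dualFamily_conjFamily_eq (P : GL n ℂ) (N : V' →ₗ[ℂ] V →ₗ[ℂ] Matrix n n ℂ) :
    ∃ Q : GL n ℂ, dualFamily (conjFamily Q N) = conjFamily P (dualFamily N) := by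
  refine ⟨⟨P⁻¹.valᵀ, P.valᵀ, ?_, ?_⟩, ?_⟩
  · rw [← transpose_mul, Units.mul_inv, transpose_one]
  · rw [← transpose_mul, Units.inv_mul, transpose_one]
  · ext1 θ
    ext1 f
    simp only [conjFamily_apply, dualFamily_apply, Units.inv_mk, transpose_mul,
      transpose_transpose, Matrix.mul_assoc]

lemma conj_mul_conj (P : GL n ℂ) (X Y : Matrix n n ℂ) :
    (P.val * X * P⁻¹.val) * (P.val * Y * P⁻¹.val) = P.val * (X * Y) * P⁻¹.val := by
  simp only [Matrix.mul_assoc, Units.inv_mul_cancel_left]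

lemma conj_eq_zero_iff (P : GL n ℂ) {X : Matrix n n ℂ} :
    P.val * X * P⁻¹.val = 0 ↔ X = 0 := by
  rw [Units.mul_left_eq_zero, Units.mul_right_eq_zero]

variable {B : V' →ₗ[ℂ] V →ₗ[ℂ] ℂ} {N : V' →ₗ[ℂ] V →ₗ[ℂ] Matrix n n ℂ}

lemma IsTraceSystem.conj (hN : IsTraceSystem B N) (P : GL n ℂ) :
    IsTraceSystem B (conjFamily P N) where
  nondegenerate := hN.nondegenerate
  three_lt_rank := hN.three_lt_rank
  three_lt_rank' := hN.three_lt_rank'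
  trace_eq_zero h := by rw [conjFamily_apply, trace_units_conj, hN.trace_eq_zero h]
  crossTraces h h' := by
    simpa only [CrossTraces, conjFamily_apply, conj_mul_conj, trace_units_conj]
      using hN.crossTraces h h'

end Conjugation

lemma IsTraceSystem.mul_mul_self_eq_zero {V V' : Type*} [AddCommGroup V] [Module ℂ V]
    [AddCommGroup V'] [Module ℂ V'] {B : V' →ₗ[ℂ] V →ₗ[ℂ] ℂ}
    {N : V' →ₗ[ℂ] V →ₗ[ℂ] Matrix (Fin 3) (Fin 3) ℂ} (hN : IsTraceSystem B N) {f : V'} {θ : V}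
    (hf : B f θ = 0) : N f θ * N f θ * N f θ = 0 :=
  mul_mul_self_eq_zero_of_trace_eq_zero (hN.trace_eq_zero hf) (hN.trace_mul_eq_zero hf hf θ)
    (hN.trace_mul_mul_eq_zero_right hf hf θ)

section Triangularizable
variable {V V' : Type*} [AddCommGroup V] [Module ℂ V] [AddCommGroup V'] [Module ℂ V']

/-- The matrices of the family `N` are simultaneously upper triangular in some basis. -/
def Triangularizable {n : Type*} [Fintype n] [DecidableEq n] [LT n]
    (N : V' →ₗ[ℂ] V →ₗ[ℂ] Matrix n n ℂ) : Prop :=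
  ∃ P : GL n ℂ, ∀ f θ, (conjFamily P N f θ).IsUpperTriangular

section Conj
variable {n : Type*} [Fintype n] [DecidableEq n] [LT n] {N : V' →ₗ[ℂ] V →ₗ[ℂ] Matrix n n ℂ}

lemma Triangularizable.of_isUpperTriangular (h : ∀ f θ, (N f θ).IsUpperTriangular) :
    Triangularizable N :=
  ⟨1, fun f θ => by simpa [conjFamily_apply] using h f θ⟩

lemma Triangularizable.of_conj {P : GL n ℂ} (h : Triangularizable (conjFamily P N)) :
    Triangularizable N := by
  obtain ⟨Q, hQ⟩ := h
  exact ⟨Q * P, fun f θ => by simpa only [conjFamily_conjFamily] using hQ f θ⟩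

lemma exists_units_conj_eq_submatrix {K n : Type*} [Field K] [Fintype n] [DecidableEq n]
    (σ : Equiv.Perm n) :
    ∃ P : GL n K, ∀ X : Matrix n n K, P.val * X * P⁻¹.val = X.submatrix σ σ := by
  refine ⟨⟨σ.permMatrix K, σ⁻¹.permMatrix K, ?_, ?_⟩, fun X => ?_⟩
  · rw [← Matrix.permMatrix_mul, inv_mul_cancel, Matrix.permMatrix_one]
  · rw [← Matrix.permMatrix_mul, mul_inv_cancel, Matrix.permMatrix_one]
  · rw [Units.inv_mk, PEquiv.toMatrix_toPEquiv_mul, PEquiv.mul_toMatrix_toPEquiv]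
    rfl

lemma Triangularizable.of_submatrix {σ : Equiv.Perm n}
    (h : ∀ f θ, ((N f θ).submatrix σ σ).IsUpperTriangular) : Triangularizable N := by
  obtain ⟨P, hP⟩ := exists_units_conj_eq_submatrix (K := ℂ) σ
  exact ⟨P, fun f θ => by simpa only [conjFamily_apply, hP] using h f θ⟩

end Conj

lemma Triangularizable.of_dual {n : ℕ} {N : V' →ₗ[ℂ] V →ₗ[ℂ] Matrix (Fin n) (Fin n) ℂ}
    (h : Triangularizable (dualFamily N)) : Triangularizable N := by
  obtain ⟨P, hP⟩ := h
  obtain ⟨Q, hQ⟩ := exists_dualFamily_conjFamily_eq P N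
  rw [← hQ] at hP
  exact .of_conj (P := Q) (.of_submatrix (σ := Fin.revPerm) fun f θ _ _ hij =>
    hP θ f (Fin.rev_lt_rev.2 hij))

lemma isUpperTriangular_fin_three {R : Type*} [Zero R] {X : Matrix (Fin 3) (Fin 3) R} :
    X.IsUpperTriangular ↔ X 1 0 = 0 ∧ X 2 0 = 0 ∧ X 2 1 = 0 := by
  simp [IsUpperTriangular, BlockTriangular, Fin.forall_fin_succ]

lemma Triangularizable.of_shear {N : V' →ₗ[ℂ] V →ₗ[ℂ] Matrix (Fin 3) (Fin 3) ℂ}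
    (hcol : ∀ f θ, N f θ 1 0 = 0 ∧ N f θ 2 0 = 0) {t : ℂ}
    (ht : ∀ f θ, N f θ 2 1 + t * (N f θ 2 2 - N f θ 1 1) - t ^ 2 * N f θ 1 2 = 0) :
    Triangularizable N := by
  refine ⟨⟨!![1, 0, 0; 0, 1, 0; 0, -t, 1], !![1, 0, 0; 0, 1, 0; 0, t, 1], ?_, ?_⟩, fun f θ => ?_⟩
  · simp [one_fin_three]
  · simp [one_fin_three]
  · rw [isUpperTriangular_fin_three, conjFamily_apply, Units.inv_mk]
    have hX := ht f θ
    obtain ⟨h₁, h₂⟩ := hcol f θ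
    refine ⟨?_, ?_, ?_⟩ <;> simp [mul_apply, Fin.sum_univ_three, vecMul, dotProduct, h₁, h₂]
    linear_combination hX

lemma Triangularizable.of_entry_one_two_eq_zero {N : V' →ₗ[ℂ] V →ₗ[ℂ] Matrix (Fin 3) (Fin 3) ℂ}
    (hcol : ∀ f θ, N f θ 1 0 = 0 ∧ N f θ 2 0 = 0) (h : ∀ f θ, N f θ 1 2 = 0) :
    Triangularizable N :=
  .of_submatrix (σ := Equiv.swap 1 2) fun f θ =>
    isUpperTriangular_fin_three.2 ⟨(hcol f θ).2, (hcol f θ).1, h f θ⟩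

end Triangularizable

section FirstColumn
variable {V V' : Type*} [AddCommGroup V] [Module ℂ V] [AddCommGroup V'] [Module ℂ V']
  {B : V' →ₗ[ℂ] V →ₗ[ℂ] ℂ} {N : V' →ₗ[ℂ] V →ₗ[ℂ] Matrix (Fin 3) (Fin 3) ℂ}

lemma IsTraceSystem.triangularizable_of_block_eq_zero (hN : IsTraceSystem B N)
    (hcol : ∀ f θ, N f θ 1 0 = 0 ∧ N f θ 2 0 = 0)
    (h : ∀ f θ, B f θ = 0 → ∀ i j : Fin 2, N f θ i.succ j.succ = 0) : Triangularizable N := by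
  choose m hm using fun i j : Fin 2 =>
    hN.exists_eq_smul (F := entry N i.succ j.succ) fun f θ hf => h f θ hf i j
  have h₁₁ f θ : N f θ 1 1 = B f θ * m 0 0 := hm 0 0 f θ
  have h₁₂ f θ : N f θ 1 2 = B f θ * m 0 1 := hm 0 1 f θ
  have h₂₁ f θ : N f θ 2 1 = B f θ * m 1 0 := hm 1 0 f θ
  have h₂₂ f θ : N f θ 2 2 = B f θ * m 1 1 := hm 1 1 f θ
  by_cases hm₀₁ : m 0 1 = 0
  · exact .of_entry_one_two_eq_zero hcol fun f θ => by rw [h₁₂, hm₀₁, mul_zero]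
  · obtain ⟨t, ht⟩ := exists_quadratic_eq_zero (b := m 1 1 - m 0 0) (c := m 1 0)
      (neg_ne_zero.2 hm₀₁) (IsAlgClosed.exists_eq_mul_self _)
    refine .of_shear hcol (t := t) fun f θ => ?_
    rw [h₁₁, h₁₂, h₂₁, h₂₂]
    linear_combination B f θ * ht

lemma IsTraceSystem.triangularizable_of_trace_mul_eq_zero (hN : IsTraceSystem B N)
    (hcol : ∀ f θ, N f θ 1 0 = 0 ∧ N f θ 2 0 = 0)
    (htr : ∀ f θ, B f θ = 0 → ∀ g η, (N f θ * N g η).trace = 0) : Triangularizable N := by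
  by_cases hblock : ∀ f θ, B f θ = 0 → ∀ i j : Fin 2, N f θ i.succ j.succ = 0
  · exact hN.triangularizable_of_block_eq_zero hcol hblock
  push Not at hblock
  obtain ⟨f, θ, hf, hne⟩ := hblock
  obtain ⟨h₁₀, h₂₀⟩ := hcol f θ
  have h₀₀ : N f θ 0 0 = 0 := by
    simpa [mul_apply, Fin.sum_univ_three, h₁₀, h₂₀]
      using congrFun (congrFun (hN.mul_mul_self_eq_zero hf) 0) 0
  have h₂₂ : N f θ 2 2 = -N f θ 1 1 := by
    have := hN.trace_eq_zero hf
    rw [trace_fin_three, h₀₀] at this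
    linear_combination this
  have hdet : N f θ 1 1 ^ 2 + N f θ 1 2 * N f θ 2 1 = 0 := by
    have := hN.trace_mul_eq_zero hf hf θ
    simp only [trace_fin_three, mul_apply, Fin.sum_univ_three, h₀₀, h₁₀, h₂₀, h₂₂] at this
    linear_combination this / 2
  have hrel g η : N f θ 1 1 * (N g η 1 1 - N g η 2 2) + N f θ 1 2 * N g η 2 1 +
      N f θ 2 1 * N g η 1 2 = 0 := by
    have := htr f θ hf g η
    simp only [trace_fin_three, mul_apply, Fin.sum_univ_three, h₀₀, h₁₀, h₂₀, h₂₂, hcol] at this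
    linear_combination this
  by_cases h₁₂ : N f θ 1 2 = 0
  · have h₁₁ : N f θ 1 1 = 0 := by simpa [h₁₂] using hdet
    have h₂₁ : N f θ 2 1 ≠ 0 := fun h₂₁ => by
      obtain ⟨i, j, hij⟩ := hne
      fin_cases i <;> fin_cases j <;> simp [h₁₁, h₁₂, h₂₁, h₂₂] at hij
    exact .of_entry_one_two_eq_zero hcol fun g η => by simpa [h₁₁, h₁₂, h₂₁] using hrel g η
  · refine .of_shear hcol (t := -N f θ 1 1 / N f θ 1 2) fun g η => ?_
    field_simp
    linear_combination N f θ 1 2 * hrel g η - N g η 1 2 * hdet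

end FirstColumn

section SquareZero
variable {V V' : Type*} [AddCommGroup V] [Module ℂ V] [AddCommGroup V'] [Module ℂ V']

/-- The matrices `N f θ` with `B f θ = 0` have square zero. -/
def SquareZero {n : Type*} [Fintype n] (B : V' →ₗ[ℂ] V →ₗ[ℂ] ℂ)
    (N : V' →ₗ[ℂ] V →ₗ[ℂ] Matrix n n ℂ) : Prop :=
  ∀ ⦃f θ⦄, B f θ = 0 → N f θ * N f θ = 0

lemma SquareZero.conj {n : Type*} [Fintype n] [DecidableEq n] {B : V' →ₗ[ℂ] V →ₗ[ℂ] ℂ}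
    {N : V' →ₗ[ℂ] V →ₗ[ℂ] Matrix n n ℂ} (h : SquareZero B N) (P : GL n ℂ) :
    SquareZero B (conjFamily P N) := fun f θ hf => by
  rw [conjFamily_apply, conj_mul_conj, h hf, Matrix.mul_zero, Matrix.zero_mul]

lemma SquareZero.dual {n : Type*} [Fintype n] {B : V' →ₗ[ℂ] V →ₗ[ℂ] ℂ}
    {N : V' →ₗ[ℂ] V →ₗ[ℂ] Matrix n n ℂ} (h : SquareZero B N) :
    SquareZero B.flip (dualFamily N) := fun θ f hf => by
  rw [dualFamily_apply, ← transpose_mul, h hf, transpose_zero]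

lemma forall_eq_zero_or_forall_eq_zero {K : Type*} [Field K] {W : Type*} [AddCommGroup W]
    [Module K W] (p : Submodule K W) (l₁ l₂ : Module.Dual K W) (h : ∀ v ∈ p, l₁ v * l₂ v = 0) :
    (∀ v ∈ p, l₁ v = 0) ∨ (∀ v ∈ p, l₂ v = 0) := by
  by_contra! ⟨⟨a, ha, ha'⟩, b, hb, hb'⟩
  have h₁ := (mul_eq_zero.1 (h a ha)).resolve_left ha'
  have h₂ := (mul_eq_zero.1 (h b hb)).resolve_right hb'
  simpa [h₁, h₂, ha', hb'] using h (a + b) (p.add_mem ha hb)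

lemma forall₂_eq_zero_or_forall₂_eq_zero {K : Type*} [Field K] {W W' : Type*} [AddCommGroup W]
    [Module K W] [AddCommGroup W'] [Module K W'] (p : Submodule K W')
    (b₁ b₂ : W' →ₗ[K] W →ₗ[K] K) (h : ∀ g ∈ p, ∀ v, b₁ g v * b₂ g v = 0) :
    (∀ g ∈ p, ∀ v, b₁ g v = 0) ∨ (∀ g ∈ p, ∀ v, b₂ g v = 0) := by
  have hg : ∀ g ∈ p, (∀ v, b₁ g v = 0) ∨ (∀ v, b₂ g v = 0) := fun g hg => by
    simpa using forall_eq_zero_or_forall_eq_zero ⊤ (b₁ g) (b₂ g) fun v _ => h g hg v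
  by_contra! ⟨⟨a, ha, v, hv⟩, b, hb, w, hw⟩
  have h₁ := (hg a ha).resolve_left fun h => hv (h v)
  have h₂ := (hg b hb).resolve_right fun h => hw (h w)
  rcases hg (a + b) (p.add_mem ha hb) with h | h
  · exact hv (by simpa [h₂] using h v)
  · exact hw (by simpa [h₁] using h w)

lemma eq_of_single_add_mul_self_eq_zero {K : Type*} [Field K] {Z : Matrix (Fin 3) (Fin 3) K}
    (hZ : Z * Z = 0)
    (h : (!![0, 0, 1; 0, 0, 0; 0, 0, 0] + Z) * (!![0, 0, 1; 0, 0, 0; 0, 0, 0] + Z) = 0) :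
    Z = !![0, Z 0 1, Z 0 2; 0, 0, Z 1 2; 0, 0, 0] ∧ Z 0 1 * Z 1 2 = 0 := by
  have hEE : (!![0, 0, 1; 0, 0, 0; 0, 0, 0] * !![0, 0, 1; 0, 0, 0; 0, 0, 0] :
      Matrix (Fin 3) (Fin 3) K) = 0 := by
    ext i j
    fin_cases i <;> fin_cases j <;> simp
  rw [Matrix.add_mul, Matrix.mul_add, Matrix.mul_add, hEE, hZ, zero_add, add_zero] at h
  have entry_h i j := congrFun (congrFun h i) j
  have entry_sq i j := congrFun (congrFun hZ i) j
  simp only [mul_apply, Fin.sum_univ_three, Matrix.zero_apply] at entry_sq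
  have h₂₀ : Z 2 0 = 0 := by
    simpa [mul_apply, vecMul, dotProduct, Fin.sum_univ_three] using entry_h 0 0
  have h₂₁ : Z 2 1 = 0 := by
    simpa [mul_apply, vecMul, dotProduct, Fin.sum_univ_three] using entry_h 0 1
  have h₁₀ : Z 1 0 = 0 := by
    simpa [mul_apply, vecMul, dotProduct, Fin.sum_univ_three] using entry_h 1 2
  have h₀₀ : Z 0 0 = 0 := by simpa [h₁₀, h₂₀] using entry_sq 0 0
  have h₁₁ : Z 1 1 = 0 := by simpa [h₁₀, h₂₁] using entry_sq 1 1
  have h₂₂ : Z 2 2 = 0 := by simpa [h₂₀, h₂₁] using entry_sq 2 2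
  refine ⟨?_, by simpa [h₀₀, h₂₂] using entry_sq 0 2⟩
  ext i j
  fin_cases i <;> fin_cases j <;> simp [*]

end SquareZero

section SquareZeroCase
variable {V V' : Type*} [AddCommGroup V] [Module ℂ V] [AddCommGroup V'] [Module ℂ V']
  {B : V' →ₗ[ℂ] V →ₗ[ℂ] ℂ} {N : V' →ₗ[ℂ] V →ₗ[ℂ] Matrix (Fin 3) (Fin 3) ℂ}

lemma add_smul_notMem_span_add_smul {K V W : Type*} [Field K] [AddCommGroup V] [Module K V]
    [AddCommGroup W] [Module K W] (l : V →ₗ[K] W) {θ η : V} (hθ : l θ ≠ 0) (hη₀ : η ≠ 0)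
    (hη : l η = 0) {a b : K} (hab : a ≠ b) : θ + a • η ∉ Submodule.span K {θ + b • η} := by
  rw [Submodule.mem_span_singleton]
  rintro ⟨c, hc⟩
  have hlc : c • l θ = l θ := by simpa [hη] using congrArg l hc
  have hc₁ : c = 1 := smul_left_injective K hθ (by simpa using hlc)
  rw [hc₁, one_smul] at hc
  exact hab (smul_left_injective K hη₀ (add_left_cancel hc)).symm

lemma IsTraceSystem.exists_apply_eq_zero_of_eq_single (hN : IsTraceSystem B N)
    (hsq : SquareZero B N) {f : V'} {θ : V} (hf : B f θ = 0)
    (hX : N f θ = !![0, 0, 1; 0, 0, 0; 0, 0, 0]) : ∃ η ≠ 0, B f η = 0 ∧ N f η = 0 := by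
  have shape η (hη : B f η = 0) : N f η = !![0, N f η 0 1, N f η 0 2; 0, 0, N f η 1 2; 0, 0, 0] ∧
      N f η 0 1 * N f η 1 2 = 0 := by
    refine eq_of_single_add_mul_self_eq_zero (hsq hη) ?_
    rw [← hX, ← map_add]
    exact hsq (by rw [map_add, hf, hη, add_zero])
  suffices exists_of_form : ∀ l : Module.Dual ℂ V,
      (∀ η, B f η = 0 → l η = 0 → N f η 0 1 = 0 ∧ N f η 1 2 = 0) →
      ∃ η ≠ 0, B f η = 0 ∧ N f η = 0 by
    rcases forall_eq_zero_or_forall_eq_zero (LinearMap.ker (B f)) (entry N 0 1 f) (entry N 1 2 f)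
      fun η hη => (shape η hη).2 with h | h
    · exact exists_of_form (entry N 1 2 f) fun η hη h₁₂ => ⟨h η hη, h₁₂⟩
    · exact exists_of_form (entry N 0 1 f) fun η hη h₀₁ => ⟨h₀₁, h η hη⟩
  intro l hl
  obtain ⟨η, hη₀, hη⟩ :=
    exists_ne_zero_forall_eq_zero hN.three_lt_rank ![B f, l, entry N 0 2 f]
  have hBη : B f η = 0 := hη 0
  have h₀₂ : N f η 0 2 = 0 := hη 2
  obtain ⟨h₀₁, h₁₂⟩ := hl η hBη (hη 1)
  refine ⟨η, hη₀, hBη, ?_⟩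
  rw [(shape η hBη).1, h₀₁, h₀₂, h₁₂]
  ext i j
  fin_cases i <;> fin_cases j <;> rfl

lemma IsTraceSystem.exists_apply_eq_zero (hN : IsTraceSystem B N) (hsq : SquareZero B N)
    {f : V'} {θ : V} (hf : B f θ = 0) (hne : N f θ ≠ 0) : ∃ η ≠ 0, B f η = 0 ∧ N f η = 0 := by
  obtain ⟨P, hP⟩ := exists_units_conj_eq_single (hsq hf) hne
  obtain ⟨η, hη₀, hBη, hη⟩ :=
    (hN.conj P).exists_apply_eq_zero_of_eq_single (hsq.conj P) hf hP
  exact ⟨η, hη₀, hBη, (conj_eq_zero_iff P).1 hη⟩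

lemma IsTraceSystem.trace_mul_eq_zero_of_squareZero (hN : IsTraceSystem B N)
    (hsq : SquareZero B N) (f : V') (θ : V) (hf : B f θ = 0) (g : V') (η : V) :
    (N f θ * N g η).trace = 0 := by
  by_cases hne : N f θ = 0
  · rw [hne, Matrix.zero_mul, trace_zero]
  obtain ⟨η₀, hη₀, hBη₀, hNη₀⟩ := hN.exists_apply_eq_zero hsq hf hne
  obtain ⟨g₁, g₂, rfl, hg₁, hg₂⟩ := hN.exists_add_eq
    (add_smul_notMem_span_add_smul (N f) hne hη₀ hNη₀ (zero_ne_one' ℂ)) g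
  rw [zero_smul, add_zero] at hg₁
  rw [one_smul] at hg₂
  have h₁ := hN.trace_mul_eq_zero hf hg₁ η
  have h₂ := hN.trace_mul_eq_zero (θ := θ + η₀) (by rw [map_add, hf, hBη₀, add_zero]) hg₂ η
  rw [map_add, hNη₀, add_zero] at h₂
  rw [map_add, LinearMap.add_apply, Matrix.mul_add, trace_add, h₁, h₂, add_zero]

lemma IsTraceSystem.entry_eq_zero_or_of_eq_single (hN : IsTraceSystem B N) (hsq : SquareZero B N)
    {f : V'} {θ : V} (hf : B f θ = 0) (hX : N f θ = !![0, 0, 1; 0, 0, 0; 0, 0, 0])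
    (h₂₀ : ∀ g η, N g η 2 0 = 0) :
    (∀ g, B g θ = 0 → ∀ η, N g η 1 0 = 0) ∨ (∀ g, B g θ = 0 → ∀ η, N g η 2 1 = 0) := by
  have shape g (hg : B g θ = 0) : N g θ = !![0, N g θ 0 1, N g θ 0 2; 0, 0, N g θ 1 2; 0, 0, 0] ∧
      N g θ 0 1 * N g θ 1 2 = 0 := by
    refine eq_of_single_add_mul_self_eq_zero (hsq hg) ?_
    rw [← hX, ← LinearMap.add_apply, ← map_add]
    exact hsq (by rw [map_add, LinearMap.add_apply, hf, hg, add_zero])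
  have trace_eq g (hg : B g θ = 0) k η :
      N g θ 0 1 * N k η 1 0 + N g θ 1 2 * N k η 2 1 = 0 := by
    have := hN.trace_mul_eq_zero_of_squareZero hsq g θ hg k η
    rw [(shape g hg).1] at this
    simpa [trace_fin_three, vecMul, dotProduct, Fin.sum_univ_three, h₂₀] using this
  by_cases h₀₁ : ∃ g, B g θ = 0 ∧ N g θ 0 1 ≠ 0
  · obtain ⟨g, hg, hne⟩ := h₀₁
    have h₁₂ := (mul_eq_zero.1 (shape g hg).2).resolve_left hne
    exact .inl fun k _ η => by simpa [h₁₂, hne] using trace_eq g hg k η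
  by_cases h₁₂ : ∃ g, B g θ = 0 ∧ N g θ 1 2 ≠ 0
  · obtain ⟨g, hg, hne⟩ := h₁₂
    push Not at h₀₁
    exact .inr fun k _ η => by simpa [h₀₁ g hg, hne] using trace_eq g hg k η
  push Not at h₀₁ h₁₂
  have product_eq_zero g (hg : B g θ = 0) η :
      N g η 2 1 * (N g η 1 0 + N g θ 0 2 * N f η 1 0) = 0 := by
    have := hN.trace_mul_mul_add_eq_zero' hf hg η
    rw [hX, (shape g hg).1, h₀₁ g hg, h₁₂ g hg] at this
    simp only [trace_fin_three, mul_apply, Fin.sum_univ_three, of_apply, cons_val', cons_val_zero,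
      cons_val_one, cons_val, h₂₀] at this
    linear_combination this
  rcases forall₂_eq_zero_or_forall₂_eq_zero (LinearMap.ker (B.flip θ)) (entry N 2 1)
    (entry N 1 0 + ((entry N 0 2).flip θ).smulRight (entry N 1 0 f)) product_eq_zero with h | h
  · exact .inr h
  · have h_f η : N f η 1 0 = 0 := by simpa [entry_apply, hX] using h f hf η
    exact .inl fun g hg η => by simpa [entry_apply, h_f] using h g hg η

lemma IsTraceSystem.forall_entry_eq_zero_of_eq_single (hN : IsTraceSystem B N)
    (hsq : SquareZero B N) {f : V'} {θ : V} (hf : B f θ = 0)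
    (hX : N f θ = !![0, 0, 1; 0, 0, 0; 0, 0, 0]) (h₂₀ : ∀ g η, N g η 2 0 = 0) :
    (∀ g η, N g η 1 0 = 0) ∨ (∀ g η, N g η 2 1 = 0) := by
  have hne : N f θ ≠ 0 := fun h => by simpa [hX] using congrFun (congrFun h 0) 2
  obtain ⟨η₀, hη₀, hBη₀, hNη₀⟩ := hN.exists_apply_eq_zero hsq hf hne
  have alternative (δ : ℂ) := hN.entry_eq_zero_or_of_eq_single hsq (f := f)
    (θ := θ + δ • η₀) (by simp [hf, hBη₀]) (by simp [hNη₀, hX]) h₂₀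
  have extend {i j : Fin 3} {δ ε : ℂ} (hδε : δ ≠ ε)
      (hδ : ∀ g, B g (θ + δ • η₀) = 0 → ∀ η, N g η i j = 0)
      (hε : ∀ g, B g (θ + ε • η₀) = 0 → ∀ η, N g η i j = 0) g η : N g η i j = 0 := by
    obtain ⟨g₁, g₂, rfl, hg₁, hg₂⟩ := hN.exists_add_eq
      (add_smul_notMem_span_add_smul (N f) hne hη₀ hNη₀ hδε) g
    rw [map_add, LinearMap.add_apply, Matrix.add_apply, hδ g₁ hg₁, hε g₂ hg₂, add_zero]
  -- Two of the infinitely many `δ` fall under the same alternative.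
  obtain ⟨δ, ε, hδε, h⟩ := Finite.exists_ne_map_eq_of_infinite
    fun δ : ℂ => ∀ g, B g (θ + δ • η₀) = 0 → ∀ η, N g η 1 0 = 0
  by_cases hδ : ∀ g, B g (θ + δ • η₀) = 0 → ∀ η, N g η 1 0 = 0
  · exact .inl (extend hδε hδ (h.mp hδ))
  · exact .inr (extend hδε ((alternative δ).resolve_left hδ)
      ((alternative ε).resolve_left fun hε => hδ (h.mpr hε)))

lemma exists_units_conj_apply_zero_eq_zero (m : Matrix (Fin 3) (Fin 3) ℂ) :
    ∃ P : GL (Fin 3) ℂ, (P.val * m * P⁻¹.val) 1 0 = 0 ∧ (P.val * m * P⁻¹.val) 2 0 = 0 := by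
  obtain ⟨μ, hμ⟩ := Module.End.exists_eigenvalue m.toLin'
  obtain ⟨w, hw⟩ := hμ.exists_hasEigenvector
  have hmw : m *ᵥ w = μ • w := by simpa using hw.apply_eq_smul
  obtain ⟨A, hA⟩ := SeparatingDual.exists_continuousLinearEquiv_apply_eq (R := ℂ)
    (Pi.single_ne_zero_iff (i := (0 : Fin 3)).2 one_ne_zero) hw.2
  let e : (Fin 3 → ℂ) ≃ₗ[ℂ] (Fin 3 → ℂ) := A.toLinearEquiv
  let P : GL (Fin 3) ℂ := ⟨e.symm.toLinearMap.toMatrix', e.toLinearMap.toMatrix',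
    by rw [← LinearMap.toMatrix'_comp]; simp, by rw [← LinearMap.toMatrix'_comp]; simp⟩
  have hPw : P⁻¹.val *ᵥ Pi.single 0 1 = w := by
    rw [← hA]
    exact LinearMap.toMatrix'_mulVec _ _
  have hcol : (P.val * m * P⁻¹.val) *ᵥ Pi.single 0 1 = μ • Pi.single 0 1 := by
    rw [← mulVec_mulVec, ← mulVec_mulVec, hPw, hmw, mulVec_smul, ← hPw, mulVec_mulVec,
      Units.mul_inv, one_mulVec]
  rw [mulVec_single_one] at hcol
  exact ⟨P, by simpa using congrFun hcol 1, by simpa using congrFun hcol 2⟩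

theorem IsTraceSystem.triangularizable_of_squareZero (hN : IsTraceSystem B N)
    (hsq : SquareZero B N) : Triangularizable N := by
  by_cases hz : ∀ f θ, B f θ = 0 → N f θ = 0
  · obtain ⟨m, hm⟩ := hN.exists_eq_smul hz
    obtain ⟨P, h₁₀, h₂₀⟩ := exists_units_conj_apply_zero_eq_zero m
    refine .of_conj (P := P) ((hN.conj P).triangularizable_of_trace_mul_eq_zero (fun g η => ?_)
      ((hN.conj P).trace_mul_eq_zero_of_squareZero (hsq.conj P)))
    rw [conjFamily_apply, hm, Matrix.mul_smul, Matrix.smul_mul]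
    simp only [Matrix.smul_apply, h₁₀, h₂₀, smul_zero, and_self]
  push Not at hz
  obtain ⟨f, θ, hf, hne⟩ := hz
  obtain ⟨P, hP⟩ := exists_units_conj_eq_single (hsq hf) hne
  suffices of_eq_single : ∀ N', IsTraceSystem B N' → SquareZero B N' →
      N' f θ = !![0, 0, 1; 0, 0, 0; 0, 0, 0] → Triangularizable N' from
    .of_conj (of_eq_single _ (hN.conj P) (hsq.conj P) hP)
  intro N' hN' hsq' hX
  have h₂₀ g η : N' g η 2 0 = 0 := by
    have := hN'.trace_mul_eq_zero_of_squareZero hsq' f θ hf g η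
    rw [hX] at this
    simpa [trace_fin_three, vecMul, dotProduct, Fin.sum_univ_three] using this
  rcases hN'.forall_entry_eq_zero_of_eq_single hsq' hf hX h₂₀ with h | h
  · exact hN'.triangularizable_of_trace_mul_eq_zero (fun g η => ⟨h g η, h₂₀ g η⟩)
      (hN'.trace_mul_eq_zero_of_squareZero hsq')
  · obtain ⟨R, hR⟩ := exists_units_conj_eq_submatrix (K := ℂ) (Fin.revPerm (n := 3))
    refine .of_dual (.of_conj (P := R) ((hN'.dual.conj R).triangularizable_of_trace_mul_eq_zero
      (fun η g => ?_) ((hN'.dual.conj R).trace_mul_eq_zero_of_squareZero (hsq'.dual.conj R))))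
    rw [conjFamily_apply, hR]
    exact ⟨h g η, h₂₀ g η⟩

end SquareZeroCase

section StrictlyUpperTriangular

/-- The submodule of strictly upper triangular matrices. -/
def strictlyUpperTriangular (R n : Type*) [Semiring R] [LE n] : Submodule R (Matrix n n R) where
  carrier := {X | ∀ i j, j ≤ i → X i j = 0}
  add_mem' hX hY i j hij := by rw [Matrix.add_apply, hX i j hij, hY i j hij, add_zero]
  zero_mem' _ _ _ := rfl
  smul_mem' c X hX i j hij := by rw [Matrix.smul_apply, hX i j hij, smul_zero]

lemma mem_strictlyUpperTriangular {R n : Type*} [Semiring R] [LE n] {X : Matrix n n R} :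
    X ∈ strictlyUpperTriangular R n ↔ ∀ i j, j ≤ i → X i j = 0 := Iff.rfl

lemma mem_strictlyUpperTriangular_fin_three {R : Type*} [Semiring R]
    {X : Matrix (Fin 3) (Fin 3) R} : X ∈ strictlyUpperTriangular R (Fin 3) ↔
      X 0 0 = 0 ∧ X 1 0 = 0 ∧ X 1 1 = 0 ∧ X 2 0 = 0 ∧ X 2 1 = 0 ∧ X 2 2 = 0 := by
  simp [mem_strictlyUpperTriangular, Fin.forall_fin_succ, and_assoc]

lemma mul_mul_eq_zero_of_mem_strictlyUpperTriangular {R : Type*} [Semiring R]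
    {X Y Z : Matrix (Fin 3) (Fin 3) R} (hX : X ∈ strictlyUpperTriangular R (Fin 3))
    (hY : Y ∈ strictlyUpperTriangular R (Fin 3)) (hZ : Z ∈ strictlyUpperTriangular R (Fin 3)) :
    X * Y * Z = 0 := by
  rw [mem_strictlyUpperTriangular_fin_three] at hX hY hZ
  ext i j
  fin_cases i <;> fin_cases j <;> simp [mul_apply, Fin.sum_univ_three, hX, hY, hZ]

lemma mem_strictlyUpperTriangular_of_trace_eq_zero {K : Type*} [Field K]
    {X Y : Matrix (Fin 3) (Fin 3) K} (hX : X ∈ strictlyUpperTriangular K (Fin 3))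
    (hX₀₁ : X 0 1 ≠ 0) (hX₁₂ : X 1 2 ≠ 0) (hXY : (X * Y).trace = 0)
    (hXXY : (X * X * Y).trace = 0) (hYYY : Y * Y * Y = 0)
    (hword : X * X * Y * X = 0 ∨ X * Y * X * X = 0) : Y ∈ strictlyUpperTriangular K (Fin 3) := by
  rw [mem_strictlyUpperTriangular_fin_three] at hX ⊢
  have h₂₀ : Y 2 0 = 0 := by
    simpa [trace_fin_three, mul_apply, Fin.sum_univ_three, hX, hX₀₁, hX₁₂] using hXXY
  have htr : X 0 1 * Y 1 0 + X 1 2 * Y 2 1 = 0 := by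
    simpa [trace_fin_three, mul_apply, Fin.sum_univ_three, hX, h₂₀] using hXY
  have hor : Y 1 0 = 0 ∨ Y 2 1 = 0 := hword.symm.imp
    (fun h => by simpa [mul_apply, Fin.sum_univ_three, hX, h₂₀, hX₀₁, hX₁₂]
      using congrFun (congrFun h 0) 2)
    (fun h => by simpa [mul_apply, Fin.sum_univ_three, hX, h₂₀, hX₀₁, hX₁₂]
      using congrFun (congrFun h 0) 2)
  obtain ⟨h₁₀, h₂₁⟩ : Y 1 0 = 0 ∧ Y 2 1 = 0 := by
    rcases hor with h | h <;> simpa [h, hX₀₁, hX₁₂] using htr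
  have diagonal i := congrFun (congrFun hYYY i) i
  exact ⟨by simpa [mul_apply, Fin.sum_univ_three, h₁₀, h₂₀] using diagonal 0, h₁₀,
    by simpa [mul_apply, Fin.sum_univ_three, h₁₀, h₂₀, h₂₁] using diagonal 1, h₂₀, h₂₁,
    by simpa [mul_apply, Fin.sum_univ_three, h₂₀, h₂₁] using diagonal 2⟩

lemma isUpperTriangular_of_trace_eq_zero {K : Type*} [Field K] [NeZero (2 : K)]
    {X W : Matrix (Fin 3) (Fin 3) K} (hX : X ∈ strictlyUpperTriangular K (Fin 3))
    (hX₀₁ : X 0 1 ≠ 0) (hX₁₂ : X 1 2 ≠ 0) (hXW : (X * W).trace = 0)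
    (hXXW : (X * X * W).trace = 0) (hXWXW : (X * W * X * W).trace = 0) :
    W.IsUpperTriangular := by
  rw [mem_strictlyUpperTriangular_fin_three] at hX
  have h₂₀ : W 2 0 = 0 := by
    simpa [trace_fin_three, mul_apply, Fin.sum_univ_three, hX, hX₀₁, hX₁₂] using hXXW
  have htr : X 0 1 * W 1 0 + X 1 2 * W 2 1 = 0 := by
    simpa [trace_fin_three, mul_apply, Fin.sum_univ_three, hX, h₂₀] using hXW
  simp only [trace_fin_three, mul_apply, Fin.sum_univ_three, hX, h₂₀] at hXWXW
  have h₁₀ : W 1 0 = 0 := by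
    have : 2 * (X 0 1 * W 1 0) ^ 2 = 0 := by
      linear_combination hXWXW + (X 0 1 * W 1 0 - X 1 2 * W 2 1) * htr
    simpa [hX₀₁, two_ne_zero] using this
  exact isUpperTriangular_fin_three.2 ⟨h₁₀, h₂₀, by simpa [h₁₀, hX₁₂] using htr⟩

end StrictlyUpperTriangular

section WordCondition
variable {V V' : Type*} [AddCommGroup V] [Module ℂ V] [AddCommGroup V'] [Module ℂ V']

/-- The words `X * X * Y * X` vanish on the matrices `N f θ` with `B f θ = 0` and fixed `θ`.
Together with its dual, this condition separates the triangularizable families from the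
exceptional ones. -/
def WordCondition {n : Type*} [Fintype n] (B : V' →ₗ[ℂ] V →ₗ[ℂ] ℂ)
    (N : V' →ₗ[ℂ] V →ₗ[ℂ] Matrix n n ℂ) : Prop :=
  ∀ ⦃f g θ⦄, B f θ = 0 → B g θ = 0 → N f θ * N f θ * N g θ * N f θ = 0

lemma WordCondition.conj {n : Type*} [Fintype n] [DecidableEq n] {B : V' →ₗ[ℂ] V →ₗ[ℂ] ℂ}
    {N : V' →ₗ[ℂ] V →ₗ[ℂ] Matrix n n ℂ} (h : WordCondition B N) (P : GL n ℂ) :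
    WordCondition B (conjFamily P N) := fun f g θ hf hg => by
  simp only [conjFamily_apply, conj_mul_conj, h hf hg, Matrix.mul_zero, Matrix.zero_mul]

variable {B : V' →ₗ[ℂ] V →ₗ[ℂ] ℂ} {N : V' →ₗ[ℂ] V →ₗ[ℂ] Matrix (Fin 3) (Fin 3) ℂ}

/-- The matrix `N f θ` is strictly upper triangular of rank two and `B f θ = 0`. -/
structure IsRegularAt (B : V' →ₗ[ℂ] V →ₗ[ℂ] ℂ) (N : V' →ₗ[ℂ] V →ₗ[ℂ] Matrix (Fin 3) (Fin 3) ℂ)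
    (f : V') (θ : V) : Prop where
  apply_eq_zero : B f θ = 0
  mem : N f θ ∈ strictlyUpperTriangular ℂ (Fin 3)
  ne₀₁ : N f θ 0 1 ≠ 0
  ne₁₂ : N f θ 1 2 ≠ 0

variable {f g : V'} {θ η : V}

lemma IsRegularAt.mem_left (hr : IsRegularAt B N f θ) (hN : IsTraceSystem B N)
    (hw : WordCondition B N) (hg : B g θ = 0) : N g θ ∈ strictlyUpperTriangular ℂ (Fin 3) :=
  mem_strictlyUpperTriangular_of_trace_eq_zero hr.mem hr.ne₀₁ hr.ne₁₂
    (hN.trace_mul_eq_zero hr.apply_eq_zero hg θ)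
    ((trace_mul_cycle _ _ _).trans
      (hN.trace_mul_mul_eq_zero_right hg hr.apply_eq_zero θ))
    (hN.mul_mul_self_eq_zero hg) (.inl (hw hr.apply_eq_zero hg))

lemma IsRegularAt.mem_right (hr : IsRegularAt B N f θ) (hN : IsTraceSystem B N)
    (hw : WordCondition B.flip (dualFamily N)) (hη : B f η = 0) :
    N f η ∈ strictlyUpperTriangular ℂ (Fin 3) := by
  have hword : N f θ * N f η * N f θ * N f θ = 0 := by
    simpa only [dualFamily_apply, ← transpose_mul, transpose_eq_zero, Matrix.mul_assoc]
      using hw (f := θ) (g := η) (θ := f) hr.apply_eq_zero hη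
  exact mem_strictlyUpperTriangular_of_trace_eq_zero hr.mem hr.ne₀₁ hr.ne₁₂
    (hN.trace_mul_eq_zero hr.apply_eq_zero hr.apply_eq_zero η)
    (hN.trace_mul_mul_eq_zero_right hr.apply_eq_zero hr.apply_eq_zero η)
    (hN.mul_mul_self_eq_zero hη) (.inr hword)

lemma IsRegularAt.isUpperTriangular_of_eq_zero (hr : IsRegularAt B N f θ)
    (hN : IsTraceSystem B N) (hw : WordCondition B N) (hw' : WordCondition B.flip (dualFamily N))
    (hg : B g θ = 0) (hη : B f η = 0) : (N g η).IsUpperTriangular := by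
  have hY := hr.mem_left hN hw hg
  have hZ := hr.mem_right hN hw' hη
  have hXXW := hN.trace_mul_mul_add_eq_zero hr.apply_eq_zero hg η
  have hXWXW := (hN.crossTraces (η := η) hg (.inl hr.apply_eq_zero)).2.2.2
  rw [mul_mul_eq_zero_of_mem_strictlyUpperTriangular hr.mem hY hZ, trace_zero, add_zero] at hXXW
  rw [mul_mul_eq_zero_of_mem_strictlyUpperTriangular hZ hr.mem hY, Matrix.zero_mul, trace_zero,
    mul_zero, add_zero] at hXWXW
  exact isUpperTriangular_of_trace_eq_zero hr.mem hr.ne₀₁ hr.ne₁₂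
    (hN.trace_mul_eq_zero hr.apply_eq_zero hg η) hXXW hXWXW

lemma IsRegularAt.exists_notMem_span_left (hr : IsRegularAt B N f θ) (hN : IsTraceSystem B N)
    (hw : WordCondition B N) : ∃ f', f ∉ Submodule.span ℂ {f'} ∧ IsRegularAt B N f' θ := by
  obtain ⟨g, hg₀, hg⟩ := exists_ne_zero_forall_eq_zero hN.three_lt_rank'
    ![B.flip θ, (entry N 0 1).flip θ, (entry N 1 2).flip θ]
  have hBg : B g θ = 0 := hg 0
  have h₀₁ : N g θ 0 1 = 0 := hg 1
  have h₁₂ : N g θ 1 2 = 0 := hg 2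
  refine ⟨f + g, ?_, by simp [hr.apply_eq_zero, hBg], ?_, by simpa [h₀₁] using hr.ne₀₁,
    by simpa [h₁₂] using hr.ne₁₂⟩
  · simpa using add_smul_notMem_span_add_smul ((entry N 0 1).flip θ) (θ := f) hr.ne₀₁ hg₀ h₀₁
      (zero_ne_one' ℂ)
  · rw [map_add, LinearMap.add_apply]
    exact add_mem hr.mem (hr.mem_left hN hw hBg)

lemma IsRegularAt.exists_notMem_span_right (hr : IsRegularAt B N f θ) (hN : IsTraceSystem B N)
    (hw : WordCondition B.flip (dualFamily N)) :
    ∃ θ', θ ∉ Submodule.span ℂ {θ'} ∧ IsRegularAt B N f θ' := by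
  obtain ⟨η, hη₀, hη⟩ := exists_ne_zero_forall_eq_zero hN.three_lt_rank
    ![B f, entry N 0 1 f, entry N 1 2 f]
  have hBη : B f η = 0 := hη 0
  have h₀₁ : N f η 0 1 = 0 := hη 1
  have h₁₂ : N f η 1 2 = 0 := hη 2
  refine ⟨θ + η, ?_, by simp [hr.apply_eq_zero, hBη], ?_, by simpa [h₀₁] using hr.ne₀₁,
    by simpa [h₁₂] using hr.ne₁₂⟩
  · simpa using add_smul_notMem_span_add_smul (entry N 0 1 f) (θ := θ) hr.ne₀₁ hη₀ h₀₁
      (zero_ne_one' ℂ)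
  · rw [map_add]
    exact add_mem hr.mem (hr.mem_right hN hw hBη)

lemma IsRegularAt.isUpperTriangular (hr : IsRegularAt B N f θ) (hN : IsTraceSystem B N)
    (hw : WordCondition B N) (hw' : WordCondition B.flip (dualFamily N)) (g : V') (η : V) :
    (N g η).IsUpperTriangular := by
  have of_apply_eq_zero {g θ} (hr : IsRegularAt B N f θ) (hg : B g θ = 0) :
      (N g η).IsUpperTriangular := by
    obtain ⟨f', hff', hr'⟩ := hr.exists_notMem_span_left hN hw
    obtain ⟨η₁, η₂, rfl, hη₁, hη₂⟩ := hN.dual.exists_add_eq hff' η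
    rw [map_add]
    exact (hr.isUpperTriangular_of_eq_zero hN hw hw' hg hη₁).add
      (hr'.isUpperTriangular_of_eq_zero hN hw hw' hg hη₂)
  obtain ⟨θ', hθθ', hr'⟩ := hr.exists_notMem_span_right hN hw'
  obtain ⟨g₁, g₂, rfl, hg₁, hg₂⟩ := hN.exists_add_eq hθθ' g
  rw [map_add, LinearMap.add_apply]
  exact (of_apply_eq_zero hr hg₁).add (of_apply_eq_zero hr' hg₂)

theorem IsTraceSystem.triangularizable_of_wordCondition (hN : IsTraceSystem B N)
    (hw : WordCondition B N) (hw' : WordCondition B.flip (dualFamily N))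
    (hsq : ¬ SquareZero B N) : Triangularizable N := by
  simp only [SquareZero, not_forall] at hsq
  obtain ⟨f, θ, hf, hne⟩ := hsq
  obtain ⟨P, hP⟩ := exists_units_conj_eq_jordan (hN.mul_mul_self_eq_zero hf) hne
  have hX : conjFamily P N f θ = !![0, 1, 0; 0, 0, 1; 0, 0, 0] := hP
  have hr : IsRegularAt B (conjFamily P N) f θ := ⟨hf,
    mem_strictlyUpperTriangular_fin_three.2 (by simp [hX]), by simp [hX], by simp [hX]⟩
  obtain ⟨Q, hQ⟩ := exists_dualFamily_conjFamily_eq P (dualFamily N)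
  have hQ' : dualFamily (conjFamily P N) = conjFamily Q (dualFamily N) :=
    congrArg dualFamily hQ.symm
  exact .of_conj (.of_isUpperTriangular (hr.isUpperTriangular (hN.conj P) (hw.conj P)
    (hQ' ▸ hw'.conj Q)))

end WordCondition

section ExceptionalNormalForm

lemma entries_of_trace_eq_zero {K : Type*} [Field K] {Y : Matrix (Fin 3) (Fin 3) K}
    (hXY : (exceptionalTable 0 0 1 * Y).trace = 0)
    (hXXY : (exceptionalTable 0 0 1 * exceptionalTable 0 0 1 * Y).trace = 0)
    (hXYY : (exceptionalTable 0 0 1 * Y * Y).trace = 0) :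
    Y 2 0 = 0 ∧ Y 2 1 = -Y 1 0 ∧ Y 1 0 * (Y 0 0 - Y 2 2) = 0 := by
  simp only [exceptionalTable, trace_fin_three, mul_apply, Fin.sum_univ_three, of_apply, cons_val',
    cons_val_zero, cons_val_one, cons_val] at hXY hXXY hXYY
  have h₂₀ : Y 2 0 = 0 := by linear_combination hXXY
  have h₂₁ : Y 2 1 = -Y 1 0 := by linear_combination hXY
  rw [h₂₀, h₂₁] at hXYY
  exact ⟨h₂₀, h₂₁, by linear_combination hXYY⟩

lemma exists_units_conj_apply_zero_zero_eq_zero {K : Type*} [Field K]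
    {Y : Matrix (Fin 3) (Fin 3) K} (h₁₀ : Y 1 0 ≠ 0) (h₂₀ : Y 2 0 = 0) :
    ∃ P : GL (Fin 3) K,
      P.val * exceptionalTable 0 0 1 * P⁻¹.val = exceptionalTable 0 0 1 ∧
        (P.val * Y * P⁻¹.val) 0 0 = 0 ∧ (P.val * Y * P⁻¹.val) 1 0 = Y 1 0 := by
  obtain ⟨ε, hε⟩ : ∃ ε, Y 0 0 + ε * Y 1 0 = 0 := ⟨-Y 0 0 / Y 1 0, by field_simp; ring⟩
  refine ⟨⟨!![1, ε, 0; 0, 1, ε; 0, 0, 1], !![1, -ε, ε ^ 2; 0, 1, -ε; 0, 0, 1], ?_, ?_⟩, ?_, ?_, ?_⟩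
  · simp [one_fin_three, pow_two]
  · simp [one_fin_three, pow_two]
  · ext i j
    fin_cases i <;> fin_cases j <;>
      simp [exceptionalTable, mul_apply, Fin.sum_univ_three, pow_two]
  · simpa [mul_apply, vecMul, dotProduct, Fin.sum_univ_three, h₂₀] using hε
  · simp [mul_apply, vecMul, dotProduct, Fin.sum_univ_three, h₂₀]

lemma eq_exceptionalTable_of_trace_eq_zero {K : Type*} [Field K] [CharZero K]
    {Y : Matrix (Fin 3) (Fin 3) K} (h₀₀ : Y 0 0 = 0) (h₁₀ : Y 1 0 ≠ 0) (hY : Y.trace = 0)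
    (hYY : (Y * Y).trace = 0) (hYYY : (Y * Y * Y).trace = 0)
    (hXY : (exceptionalTable 0 0 1 * Y).trace = 0)
    (hXXY : (exceptionalTable 0 0 1 * exceptionalTable 0 0 1 * Y).trace = 0)
    (hXYY : (exceptionalTable 0 0 1 * Y * Y).trace = 0) :
    Y = exceptionalTable 0 (Y 1 0) (Y 0 1) := by
  obtain ⟨h₂₀, h₂₁, h₂₂⟩ := entries_of_trace_eq_zero hXY hXXY hXYY
  replace h₂₂ : Y 2 2 = 0 := by simpa [h₀₀, h₁₀] using h₂₂
  have h₁₁ : Y 1 1 = 0 := by simpa [trace_fin_three, h₀₀, h₂₂] using hY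
  simp only [trace_fin_three, mul_apply, Fin.sum_univ_three, h₀₀, h₁₁, h₂₀, h₂₁, h₂₂] at hYY hYYY
  have h₁₂ : Y 1 2 = Y 0 1 := by
    have : Y 1 0 * (Y 1 2 - Y 0 1) = 0 := by linear_combination -hYY / 2
    exact sub_eq_zero.1 ((mul_eq_zero.1 this).resolve_left h₁₀)
  have h₀₂ : Y 0 2 = 0 := by
    have : Y 1 0 ^ 2 * Y 0 2 = 0 := by linear_combination -hYYY / 3
    exact (mul_eq_zero.1 this).resolve_left (pow_ne_zero _ h₁₀)
  exact eq_exceptionalTable_iff.2 ⟨h₀₀, h₁₁, h₂₂, rfl, h₀₂, rfl, h₁₂, h₂₀, h₂₁⟩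

end ExceptionalNormalForm

section ExceptionalPair
variable {V V' : Type*} [AddCommGroup V] [Module ℂ V] [AddCommGroup V'] [Module ℂ V']
  {B : V' →ₗ[ℂ] V →ₗ[ℂ] ℂ} {N : V' →ₗ[ℂ] V →ₗ[ℂ] Matrix (Fin 3) (Fin 3) ℂ}

/-- The vector `θ` is annihilated by `f` and `g`, and the matrices `N f θ` and `N g θ` are the two
generators of the exceptional tables. -/
structure IsExceptionalPair (B : V' →ₗ[ℂ] V →ₗ[ℂ] ℂ)
    (N : V' →ₗ[ℂ] V →ₗ[ℂ] Matrix (Fin 3) (Fin 3) ℂ) (f g : V') (θ : V) : Prop where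
  left_eq_zero : B f θ = 0
  right_eq_zero : B g θ = 0
  left_eq : N f θ = exceptionalTable 0 0 1
  right_eq : N g θ = exceptionalTable 0 1 0

lemma IsTraceSystem.exists_conjFamily_eq (hN : IsTraceSystem B N) (hw : ¬ WordCondition B N) :
    ∃ (P : GL (Fin 3) ℂ) (f g : V') (θ : V), B f θ = 0 ∧ B g θ = 0 ∧
      conjFamily P N f θ = exceptionalTable 0 0 1 ∧ conjFamily P N g θ 1 0 ≠ 0 ∧
        conjFamily P N g θ 2 0 = 0 := by
  simp only [WordCondition, not_forall] at hw
  obtain ⟨f, g, θ, hf, hg, hne⟩ := hw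
  have hXX : N f θ * N f θ ≠ 0 := fun h => hne (by rw [h, Matrix.zero_mul, Matrix.zero_mul])
  obtain ⟨P, hP⟩ := exists_units_conj_eq_jordan (hN.mul_mul_self_eq_zero hf) hXX
  have hX : conjFamily P N f θ = exceptionalTable 0 0 1 := by
    rw [conjFamily_apply, hP, exceptionalTable, neg_zero]
  obtain ⟨h₂₀, h₂₁, -⟩ := entries_of_trace_eq_zero
    (hX ▸ (hN.conj P).trace_mul_eq_zero hf hg θ)
    (hX ▸ (trace_mul_cycle _ _ _).trans ((hN.conj P).trace_mul_mul_eq_zero_right hg hf θ))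
    (hX ▸ (hN.conj P).trace_mul_mul_eq_zero_right hf hg θ)
  refine ⟨P, f, g, θ, hf, hg, hX, fun h₁₀ => hne ?_, h₂₀⟩
  rw [← conj_eq_zero_iff P, ← conj_mul_conj, ← conj_mul_conj, ← conj_mul_conj]
  simp only [← conjFamily_apply, hX]
  ext i j
  fin_cases i <;> fin_cases j <;>
    simp [exceptionalTable, mul_apply, vecMul, dotProduct, Fin.sum_univ_three, h₂₀, h₂₁, h₁₀]

lemma IsTraceSystem.exists_isExceptionalPair (hN : IsTraceSystem B N) (hw : ¬ WordCondition B N) :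
    ∃ (P : GL (Fin 3) ℂ) (f g : V') (θ : V), IsExceptionalPair B (conjFamily P N) f g θ := by
  obtain ⟨P, f, g, θ, hf, hg, hX, h₁₀, h₂₀⟩ := hN.exists_conjFamily_eq hw
  obtain ⟨Q, hQX, hQ₀₀, hQ₁₀⟩ := exists_units_conj_apply_zero_zero_eq_zero h₁₀ h₂₀
  simp only [← hX, ← conjFamily_apply, conjFamily_conjFamily] at hQX hQ₀₀ hQ₁₀
  rw [hX] at hQX
  rw [← hQ₁₀] at h₁₀
  have hN' := hN.conj (Q * P)
  set N' := conjFamily (Q * P) N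
  have hY : N' g θ = exceptionalTable 0 (N' g θ 1 0) (N' g θ 0 1) :=
    eq_exceptionalTable_of_trace_eq_zero hQ₀₀ h₁₀ (hN'.trace_eq_zero hg)
      (hN'.trace_mul_eq_zero hg hg θ) (hN'.trace_mul_mul_eq_zero_right hg hg θ)
      (hQX ▸ hN'.trace_mul_eq_zero hf hg θ)
      (hQX ▸ (trace_mul_cycle _ _ _).trans (hN'.trace_mul_mul_eq_zero_right hg hf θ))
      (hQX ▸ hN'.trace_mul_mul_eq_zero_right hf hg θ)
  refine ⟨Q * P, f, (N' g θ 1 0)⁻¹ • (g - N' g θ 0 1 • f), θ, hf, by simp [hf, hg], hQX, ?_⟩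
  change N' _ _ = _
  simp only [map_smul, map_sub, LinearMap.smul_apply, LinearMap.sub_apply, hQX]
  rw [hY, eq_exceptionalTable_iff]
  simp [exceptionalTable, h₁₀]

lemma IsTraceSystem.trace_mul_mul_mul_add_eq_zero {f' : V'} (hN : IsTraceSystem B N)
    (hf : B f θ = 0) (hf' : B f' θ = 0) (hg : B g θ = 0) (η : V) :
    (N f θ * N g η * N f' θ * N g η).trace + (N f η * N f' θ * N g θ * N g η).trace +
      (N f' η * N f θ * N g θ * N g η).trace = 0 := by
  have h := (hN.crossTraces (f := f + f') (η := η) hg (.inl (by simp [hf, hf']))).2.2.2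
  have hfg := (hN.crossTraces (η := η) hg (.inl hf)).2.2.2
  have hfg' := (hN.crossTraces (η := η) hg (.inl hf')).2.2.2
  simp only [map_add, LinearMap.add_apply, Matrix.add_mul, Matrix.mul_add, trace_add] at h
  have hcomm : (N f' θ * N g η * N f θ * N g η).trace =
      (N f θ * N g η * N f' θ * N g η).trace := by
    rw [Matrix.mul_assoc, trace_mul_comm, ← Matrix.mul_assoc]
  linear_combination (h - hfg - hfg' - hcomm) / 2

namespace IsExceptionalPair

lemma apply_eq_exceptionalTable_zero (hfg : IsExceptionalPair B N f g θ) (hN : IsTraceSystem B N)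
    {h : V'} (hh : B h θ = 0) : N h θ = exceptionalTable 0 (N h θ 1 0) (N h θ 0 1) := by
  obtain ⟨hf, hg, hX, hY⟩ := hfg
  have hU := hN.trace_eq_zero hh
  have hUU := hN.trace_mul_eq_zero hh hh θ
  have hXU := hX ▸ hN.trace_mul_eq_zero hf hh θ
  have hXXU := hX ▸ hN.trace_mul_mul_eq_zero_right hh hf θ
  have hYU := hY ▸ hN.trace_mul_eq_zero hg hh θ
  have hYYU := hY ▸ hN.trace_mul_mul_eq_zero_right hh hg θ
  have hXUU := hX ▸ hN.trace_mul_mul_eq_zero_right hf hh θ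
  have hXUYUY := hX ▸ hN.trace_mul_mul_eq_zero_right hf (g := h + g) (by simp [hh, hg]) θ
  simp only [map_add, LinearMap.add_apply, hY] at hXUYUY
  generalize N h θ = U at *
  simp only [exceptionalTable, trace_fin_three, mul_apply, Matrix.add_apply, Fin.sum_univ_three,
    of_apply, cons_val', cons_val_zero, cons_val_one, cons_val] at *
  have h₂₀ : U 2 0 = 0 := by linear_combination hXXU
  have h₂₁ : U 2 1 = -U 1 0 := by linear_combination hXU
  have h₁₂ : U 1 2 = U 0 1 := by linear_combination -hYU
  have h₀₂ : U 0 2 = 0 := by linear_combination -hYYU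
  have h₂₂ : U 2 2 = U 0 0 := by linear_combination hXUU - hXUYUY
  have h₁₁ : U 1 1 = -2 * U 0 0 := by linear_combination hU - h₂₂
  have h₀₀ : U 0 0 = 0 := by
    simp only [h₂₀, h₂₁, h₁₂, h₀₂, h₂₂, h₁₁] at hUU
    exact pow_eq_zero_iff two_ne_zero |>.1 (by linear_combination hUU / 6)
  rw [h₀₀] at h₂₂ h₁₁
  exact eq_exceptionalTable_iff.2
    ⟨h₀₀, by simpa using h₁₁, h₂₂, rfl, h₀₂, rfl, h₁₂, h₂₀, h₂₁⟩

lemma linear_relations (hfg : IsExceptionalPair B N f g θ) (hN : IsTraceSystem B N) (η : V) :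
    N f η = !![N f η 0 0, N f η 0 1, N g η 0 0 - N g η 2 2;
      N f η 1 0, N f η 1 1, N f η 0 1; 0, -N f η 1 0, N f η 1 1] ∧
    N g η = !![N g η 0 0, N g η 0 1, 0; N g η 1 0, N g η 0 0, N g η 0 1;
      N f η 1 1 - N f η 0 0, -N g η 1 0, N g η 2 2] := by
  obtain ⟨hf, hg, hX, hY⟩ := hfg
  have hXZ := hX ▸ hN.trace_mul_eq_zero hf hf η
  have hYZ := hY ▸ hN.trace_mul_eq_zero hg hf η
  have hXW := hX ▸ hN.trace_mul_eq_zero hf hg η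
  have hYW := hY ▸ hN.trace_mul_eq_zero hg hg η
  have hXXZ := hX ▸ hN.trace_mul_mul_eq_zero_right hf hf η
  have hYXZ := hN.trace_mul_mul_eq_zero_right hg hf η
  have hXYW := hN.trace_mul_mul_eq_zero_right hf hg η
  have hYYW := hY ▸ hN.trace_mul_mul_eq_zero_right hg hg η
  have hXXW := hN.trace_mul_mul_add_eq_zero hf hg η
  have hYYZ := hN.trace_mul_mul_add_eq_zero hg hf η
  simp only [hX, hY] at hYXZ hXYW hXXW hYYZ
  generalize N f η = Z at *
  generalize N g η = W at *
  simp only [exceptionalTable, trace_fin_three, mul_apply, Fin.sum_univ_three, of_apply, cons_val',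
    cons_val_zero, cons_val_one, cons_val] at *
  have hW₁₁ : W 1 1 = W 0 0 := by linear_combination -hXYW
  constructor <;> ext i j <;> fin_cases i <;> fin_cases j <;>
    simp only [of_apply, cons_val', cons_val_zero, cons_val_one, cons_val, Fin.mk_one, Fin.zero_eta,
      Fin.reduceFinMk]
  · linear_combination -hYYZ + hW₁₁
  · linear_combination -hYZ
  · linear_combination hXXZ
  · linear_combination hXZ
  · linear_combination -hYXZ
  · linear_combination -hYYW
  · exact hW₁₁
  · linear_combination -hYW
  · linear_combination hXXW
  · linear_combination hXW

lemma quadratic_relations (hfg : IsExceptionalPair B N f g θ) (hN : IsTraceSystem B N) (η : V) :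
    N g η 1 0 ^ 2 - N g η 1 0 * N f η 0 1 + 2 * (N f η 1 0 * N g η 0 1) = 0 ∧
      N g η 0 1 * (N g η 1 0 + N f η 0 1) = 0 ∧ N f η 1 0 * (N g η 1 0 + N f η 0 1) = 0 := by
  obtain ⟨hZ, hW⟩ := hfg.linear_relations hN η
  obtain ⟨hf, hg, hX, hY⟩ := hfg
  have hffg := hN.trace_mul_mul_mul_add_eq_zero hf hf hg η
  have hfgg := hN.trace_mul_mul_mul_add_eq_zero hf hg hg η
  have hfgf := hN.trace_mul_mul_mul_add_eq_zero hf hg hf η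
  rw [hX, hY] at hffg hfgg hfgf
  generalize N f η = Z at *
  generalize N g η = W at *
  rw [hZ, hW] at hffg hfgg hfgf
  simp only [exceptionalTable, trace_fin_three, mul_apply, Fin.sum_univ_three, of_apply, cons_val',
    cons_val_zero, cons_val_one, cons_val] at hffg hfgg hfgf
  refine ⟨?_, ?_, ?_⟩
  · linear_combination hffg / 2
  · linear_combination -hfgg
  · linear_combination -hfgf

lemma exists_apply_eq (hfg : IsExceptionalPair B N f g θ) (hN : IsTraceSystem B N) (η : V) :
    ∃ a b c d q, N f η = !![a, q, c - d; 0, b, q; 0, 0, b] ∧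
      N g η = !![c, 0, 0; q, c, 0; b - a, -q, d] := by
  obtain ⟨hZ, hW⟩ := hfg.linear_relations hN η
  obtain ⟨h, hl, hr⟩ := hfg.quadratic_relations hN η
  obtain ⟨h', hl', hr'⟩ := hfg.quadratic_relations hN (η + θ)
  simp only [map_add, hfg.left_eq, hfg.right_eq, Matrix.add_apply, exceptionalTable, of_apply,
    cons_val', cons_val_zero, cons_val_one, add_zero] at h' hl' hr'
  have h₁₀ : N g η 1 0 = N f η 0 1 := by linear_combination h' - h
  have hW₀₁ : N g η 0 1 = 0 := by linear_combination (hl' - hl) / 2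
  have hZ₁₀ : N f η 1 0 = 0 := by linear_combination (hr' - hr) / 2
  rw [hZ₁₀, neg_zero] at hZ
  rw [hW₀₁, h₁₀] at hW
  exact ⟨_, _, _, _, _, hZ, hW⟩

lemma add_left {h : V'} (hfg : IsExceptionalPair B N f g θ) (hh : B h θ = 0) (hNh : N h θ = 0) :
    IsExceptionalPair B N (f + h) g θ :=
  ⟨by simp [hfg.left_eq_zero, hh], hfg.right_eq_zero, by simp [hfg.left_eq, hNh], hfg.right_eq⟩

lemma add_right {h : V'} (hfg : IsExceptionalPair B N f g θ) (hh : B h θ = 0) (hNh : N h θ = 0) :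
    IsExceptionalPair B N f (g + h) θ :=
  ⟨hfg.left_eq_zero, by simp [hfg.right_eq_zero, hh], hfg.left_eq, by simp [hfg.right_eq, hNh]⟩

lemma exists_apply_eq_smul_one {h : V'} (hfg : IsExceptionalPair B N f g θ)
    (hN : IsTraceSystem B N) (hh : B h θ = 0) (hNh : N h θ = 0) (η : V) :
    ∃ μ : ℂ, N h η = μ • 1 := by
  obtain ⟨a, b, c, d, q, hZ, hW⟩ := hfg.exists_apply_eq hN η
  obtain ⟨a', b', c', d', q', hZ', hW'⟩ := (hfg.add_left hh hNh).exists_apply_eq hN η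
  have hWW := hW.symm.trans hW'
  have hc : c = c' := by simpa using congr_fun₂ hWW 0 0
  have hd : d = d' := by simpa using congr_fun₂ hWW 2 2
  have hq : q = q' := by simpa using congr_fun₂ hWW 1 0
  have hab : b - a = b' - a' := by simpa using congr_fun₂ hWW 2 0
  refine ⟨a' - a, ?_⟩
  rw [map_add, LinearMap.add_apply, hZ, ← hc, ← hd, ← hq] at hZ'
  rw [eq_sub_of_add_eq' hZ', show b' = b + (a' - a) by linear_combination -hab]
  ext i j
  fin_cases i <;> fin_cases j <;> simp

lemma exists_apply_eq_smul {h : V'} (hfg : IsExceptionalPair B N f g θ) (hN : IsTraceSystem B N)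
    (hh : B h θ = 0) (hNh : N h θ = 0) (h₀ : h ≠ 0) :
    ∃ lam : ℂ, ∀ η, N h η = (lam * B h η) • 1 := by
  obtain ⟨η₀, hη₀⟩ := hN.dual.exists_apply_eq_one h₀
  rw [LinearMap.flip_apply] at hη₀
  obtain ⟨lam, hlam⟩ := hfg.exists_apply_eq_smul_one hN hh hNh η₀
  refine ⟨lam, fun η => ?_⟩
  have hker : B h (η - B h η • η₀) = 0 := by simp [hη₀]
  obtain ⟨μ, hμ⟩ := hfg.exists_apply_eq_smul_one hN hh hNh (η - B h η • η₀)
  have hμ₀ : μ = 0 := by simpa [hμ] using hN.trace_eq_zero hker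
  rw [hμ₀, zero_smul, map_sub, map_smul, hlam, sub_eq_zero, smul_smul, mul_comm] at hμ
  exact hμ

lemma left_diag_eq_zero (hfg : IsExceptionalPair B N f g θ) (hN : IsTraceSystem B N) {η : V}
    (hη : B f η = 0) : N f η 0 0 = 0 ∧ N f η 1 1 = 0 := by
  obtain ⟨a, b, c, d, q, hZ, -⟩ := hfg.exists_apply_eq hN η
  have h := hN.trace_eq_zero hη
  have h' := hN.trace_mul_eq_zero hη hη η
  simp only [hZ, trace_fin_three, mul_apply, Fin.sum_univ_three, of_apply, cons_val',
    cons_val_zero, cons_val_one, cons_val] at h h' ⊢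
  have hb : b = 0 :=
    (pow_eq_zero_iff two_ne_zero).1 (by linear_combination h' / 6 - (a - 2 * b) / 6 * h)
  exact ⟨by linear_combination h - 2 * hb, hb⟩

lemma right_diag_eq_zero (hfg : IsExceptionalPair B N f g θ) (hN : IsTraceSystem B N) {η : V}
    (hη : B g η = 0) : N g η 0 0 = 0 ∧ N g η 2 2 = 0 := by
  obtain ⟨a, b, c, d, q, -, hW⟩ := hfg.exists_apply_eq hN η
  have h := hN.trace_eq_zero hη
  have h' := hN.trace_mul_eq_zero hη hη η
  simp only [hW, trace_fin_three, mul_apply, Fin.sum_univ_three, of_apply, cons_val',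
    cons_val_zero, cons_val_one, cons_val] at h h' ⊢
  have hc : c = 0 :=
    (pow_eq_zero_iff two_ne_zero).1 (by linear_combination h' / 6 - (d - 2 * c) / 6 * h)
  exact ⟨hc, by linear_combination h - 2 * hc⟩

end IsExceptionalPair

lemma eq_zero_of_forall_apply_ne_zero {K W W' : Type*} [Field K] [AddCommGroup W] [Module K W]
    [AddCommGroup W'] [Module K W'] {l : Module.Dual K W} (hl : l ≠ 0) {F : W →ₗ[K] W'}
    (h : ∀ v, l v ≠ 0 → F v = 0) : F = 0 := by
  obtain ⟨w, hw⟩ : ∃ w, l w ≠ 0 := by simpa using DFunLike.ne_iff.1 hl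
  ext v
  by_cases hv : l v = 0
  · simpa [h w hw] using h (v + w) (by simpa [hv] using hw)
  · exact h v hv

namespace IsExceptionalPair

lemma diag_eq {h : V'} (hfg : IsExceptionalPair B N f g θ) (hN : IsTraceSystem B N)
    (hh : B h θ = 0) {lam : ℂ} (hlam : ∀ η, N h η = (lam * B h η) • 1) {η : V} (hη : B h η ≠ 0) :
    N f η 0 0 = lam * B f η ∧ N f η 1 1 = lam * B f η ∧
      N g η 0 0 = lam * B g η ∧ N g η 2 2 = lam * B g η := by
  have shift (c : ℂ) : B (c • h) θ = 0 ∧ N (c • h) θ = 0 := by simp [hh, hlam]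
  have hl := (hfg.add_left (shift _).1 (shift _).2).left_diag_eq_zero hN
    (η := η) (show B (f + -(B f η / B h η) • h) η = 0 by simp [hη])
  have hr := (hfg.add_right (shift _).1 (shift _).2).right_diag_eq_zero hN
    (η := η) (show B (g + -(B g η / B h η) • h) η = 0 by simp [hη])
  simp only [map_add, map_smul, LinearMap.add_apply, LinearMap.smul_apply, hlam, Matrix.add_apply,
    Matrix.smul_apply, one_apply_eq, smul_eq_mul] at hl hr
  field_simp at hl hr
  refine ⟨?_, ?_, ?_, ?_⟩
  · linear_combination hl.1
  · linear_combination hl.2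
  · linear_combination hr.1
  · linear_combination hr.2

lemma apply_eq_exceptionalTable {h : V'} (hfg : IsExceptionalPair B N f g θ)
    (hN : IsTraceSystem B N) (hh : B h θ = 0) (h₀ : h ≠ 0) {lam : ℂ}
    (hlam : ∀ η, N h η = (lam * B h η) • 1) (η : V) :
    N f η = exceptionalTable (lam * B f η) 0 (N f η 0 1) ∧
      N g η = exceptionalTable (lam * B g η) (N f η 0 1) 0 := by
  have hBh : B h ≠ 0 := fun hB => h₀ ((LinearMap.ker_eq_bot'.1
    (LinearMap.separatingLeft_iff_ker_eq_bot.1 hN.nondegenerate.1)) h hB)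
  have eq_lam (i : Fin 3) (k : V') (hk : ∀ η, B h η ≠ 0 → N k η i i = lam * B k η) (η : V) :
      N k η i i = lam * B k η := by
    have := eq_zero_of_forall_apply_ne_zero hBh (F := entry N i i k - lam • B k)
      fun η hη => by simpa [entry_apply, sub_eq_zero] using hk η hη
    simpa [entry_apply, sub_eq_zero] using congr($this η)
  have hf₀ := eq_lam 0 f (fun _ hη => (hfg.diag_eq hN hh hlam hη).1) η
  have hf₁ := eq_lam 1 f (fun _ hη => (hfg.diag_eq hN hh hlam hη).2.1) η
  have hg₀ := eq_lam 0 g (fun _ hη => (hfg.diag_eq hN hh hlam hη).2.2.1) η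
  have hg₂ := eq_lam 2 g (fun _ hη => (hfg.diag_eq hN hh hlam hη).2.2.2) η
  obtain ⟨a, b, c, d, q, hZ, hW⟩ := hfg.exists_apply_eq hN η
  simp only [hZ, hW, of_apply, cons_val', cons_val_zero, cons_val_one, cons_val] at hf₀ hf₁ hg₀ hg₂
  rw [hZ, hW]
  rw [hf₀, hf₁, hg₀, hg₂, eq_exceptionalTable_iff, eq_exceptionalTable_iff]
  simp

lemma exists_forall_apply_eq (hfg : IsExceptionalPair B N f g θ) (hN : IsTraceSystem B N) :
    ∃ lam : ℂ, ∀ k, B k θ = 0 → ∀ η, N k η =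
      exceptionalTable (lam * B k η) (N f η 0 1 * N k θ 1 0) (N f η 0 1 * N k θ 0 1) := by
  obtain ⟨h₀, hh₀, hker⟩ := exists_ne_zero_forall_eq_zero (k := 3) hN.three_lt_rank'
    ![B.flip θ, (entry N 0 1).flip θ, (entry N 1 0).flip θ]
  have hB : B h₀ θ = 0 := hker 0
  have h₀₁ : N h₀ θ 0 1 = 0 := hker 1
  have h₁₀ : N h₀ θ 1 0 = 0 := hker 2
  have hNh₀ : N h₀ θ = 0 := by
    rw [hfg.apply_eq_exceptionalTable_zero hN hB, h₀₁, h₁₀, eq_comm, eq_exceptionalTable_iff]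
    simp
  obtain ⟨lam, hlam⟩ := hfg.exists_apply_eq_smul hN hB hNh₀ hh₀
  refine ⟨lam, fun k hk η => ?_⟩
  obtain ⟨h, hh⟩ : ∃ h, k = h + N k θ 0 1 • f + N k θ 1 0 • g :=
    ⟨k - N k θ 0 1 • f - N k θ 1 0 • g, by abel⟩
  have hBh : B h θ = 0 := by
    rw [hh] at hk
    simpa [hfg.left_eq_zero, hfg.right_eq_zero] using hk
  have hNh : N h θ = 0 := by
    have hNk := hfg.apply_eq_exceptionalTable_zero hN hk
    generalize N k θ 0 1 = s, N k θ 1 0 = t at hh hNk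
    simp only [hh, map_add, map_smul, LinearMap.add_apply, LinearMap.smul_apply, hfg.left_eq,
      hfg.right_eq, add_assoc] at hNk
    rw [eq_sub_of_add_eq hNk]
    ext i j
    fin_cases i <;> fin_cases j <;> simp [exceptionalTable]
  obtain ⟨hf, hg⟩ := hfg.apply_eq_exceptionalTable hN hB hh₀ hlam η
  obtain ⟨hf', hg'⟩ := (hfg.add_left hBh hNh).apply_eq_exceptionalTable hN hB hh₀ hlam η
  have hb : N f η 0 1 = N (f + h) η 0 1 := by
    simpa [exceptionalTable] using congr_fun₂ (hg.symm.trans hg') 1 0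
  rw [← hb, map_add, LinearMap.add_apply, hf] at hf'
  generalize N f η 0 1 = b, N k θ 0 1 = s, N k θ 1 0 = t at *
  simp only [hh, map_add, map_smul, LinearMap.add_apply, LinearMap.smul_apply, hf, hg,
    eq_sub_of_add_eq' hf']
  ext i j
  fin_cases i <;> fin_cases j <;> simp [exceptionalTable] <;> ring

end IsExceptionalPair

/-- In some basis, all matrices of the family `N` are exceptional tables with diagonal `lam * B`
whose remaining entries depend on the second argument through a single functional `b`. -/
def Exceptional (B : V' →ₗ[ℂ] V →ₗ[ℂ] ℂ) (N : V' →ₗ[ℂ] V →ₗ[ℂ] Matrix (Fin 3) (Fin 3) ℂ) : Prop :=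
  ∃ (P : GL (Fin 3) ℂ) (lam : ℂ) (b : Module.Dual ℂ V), ∀ k, ∃ s t, ∀ η,
    conjFamily P N k η = exceptionalTable (lam * B k η) (b η * t) (b η * s)

lemma IsExceptionalPair.exists_isExceptionalPair_add (hfg : IsExceptionalPair B N f g θ)
    (hN : IsTraceSystem B N) :
    ∃ η ≠ 0, N f η 0 1 = 0 ∧ IsExceptionalPair B N f g (θ + η) := by
  obtain ⟨lam, hlam⟩ := hfg.exists_forall_apply_eq hN
  obtain ⟨η, hη, hker⟩ := exists_ne_zero_forall_eq_zero (k := 3) hN.three_lt_rank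
    ![B f, B g, entry N 0 1 f]
  have hf : B f η = 0 := hker 0
  have hg : B g η = 0 := hker 1
  have h₀₁ : N f η 0 1 = 0 := hker 2
  have apply_eq_zero {k} (hk : B k θ = 0) (hkη : B k η = 0) : N k η = 0 := by
    rw [hlam k hk, hkη, h₀₁, eq_comm, eq_exceptionalTable_iff]
    simp
  refine ⟨η, hη, h₀₁, by simp [hfg.left_eq_zero, hf], by simp [hfg.right_eq_zero, hg], ?_, ?_⟩
  · rw [map_add, apply_eq_zero hfg.left_eq_zero hf, hfg.left_eq, add_zero]
  · rw [map_add, apply_eq_zero hfg.right_eq_zero hg, hfg.right_eq, add_zero]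

theorem IsTraceSystem.exceptional_of_not_wordCondition (hN : IsTraceSystem B N)
    (hw : ¬ WordCondition B N) : Exceptional B N := by
  obtain ⟨P, f, g, θ, hfg⟩ := hN.exists_isExceptionalPair hw
  replace hN := hN.conj P
  refine ⟨P, ?_⟩
  generalize conjFamily P N = N' at *
  obtain ⟨η, hη, hη₀₁, hfg'⟩ := hfg.exists_isExceptionalPair_add hN
  obtain ⟨lam, hlam⟩ := hfg.exists_forall_apply_eq hN
  obtain ⟨lam', hlam'⟩ := hfg'.exists_forall_apply_eq hN
  have hf₀ : f ≠ 0 := by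
    rintro rfl
    simpa [exceptionalTable] using congr_fun₂ hfg.left_eq 0 1
  obtain ⟨v, hv⟩ := hN.dual.exists_apply_eq_one hf₀
  rw [LinearMap.flip_apply] at hv
  obtain rfl : lam = lam' := by
    simpa [exceptionalTable, hv] using congr_fun₂
      ((hlam f hfg.left_eq_zero v).symm.trans (hlam' f hfg'.left_eq_zero v)) 0 0
  have hθ : N' f θ 0 1 ≠ 0 := by simp [hfg.left_eq, exceptionalTable]
  refine ⟨lam, entry N' 0 1 f, fun k => ?_⟩
  obtain ⟨k₁, k₂, rfl, h₁, h₂⟩ := hN.exists_add_eq (θ₁ := θ) (θ₂ := θ + η)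
    (by simpa using add_smul_notMem_span_add_smul (entry N' 0 1 f) hθ hη hη₀₁ zero_ne_one) k
  refine ⟨N' k₁ θ 0 1 + N' k₂ (θ + η) 0 1, N' k₁ θ 1 0 + N' k₂ (θ + η) 1 0, fun ξ => ?_⟩
  rw [map_add, LinearMap.add_apply, hlam k₁ h₁, hlam' k₂ h₂]
  ext i j
  fin_cases i <;> fin_cases j <;> simp [exceptionalTable, entry_apply] <;> ring

end ExceptionalPair

section Trichotomy
variable {V V' : Type*} [AddCommGroup V] [Module ℂ V] [AddCommGroup V'] [Module ℂ V']
  {B : V' →ₗ[ℂ] V →ₗ[ℂ] ℂ} {N : V' →ₗ[ℂ] V →ₗ[ℂ] Matrix (Fin 3) (Fin 3) ℂ}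

theorem IsTraceSystem.triangularizable_or_exceptional (hN : IsTraceSystem B N) :
    Triangularizable N ∨ Exceptional B N ∨ Exceptional B.flip (dualFamily N) := by
  by_cases hsq : SquareZero B N
  · exact .inl (hN.triangularizable_of_squareZero hsq)
  by_cases hw : WordCondition B N
  · by_cases hw' : WordCondition B.flip (dualFamily N)
    · exact .inl (hN.triangularizable_of_wordCondition hw hw' hsq)
    · exact .inr (.inr (hN.dual.exceptional_of_not_wordCondition hw'))
  · exact .inr (.inl (hN.exceptional_of_not_wordCondition hw))

lemma exists_conj_transpose_exceptionalTable (R : Type*) [CommRing R] : ∃ D : GL (Fin 3) R,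
    ∀ a p q : R, D.val * (exceptionalTable a p q)ᵀ * D⁻¹.val = exceptionalTable a q p := by
  have hD : diagonal ![1, 1, (-1 : R)] * diagonal ![1, 1, -1] = 1 := by
    rw [diagonal_mul_diagonal, ← diagonal_one, diagonal_eq_diagonal_iff]
    simp [Fin.forall_fin_succ]
  refine ⟨⟨_, _, hD, hD⟩, fun a p q => ?_⟩
  rw [Units.inv_mk]
  ext i j
  fin_cases i <;> fin_cases j <;> simp [exceptionalTable]

lemma exists_conjFamily_eq_of_exceptional_dualFamily
    (h : Exceptional B.flip (dualFamily N)) :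
    ∃ (P : GL (Fin 3) ℂ) (lam : ℂ) (b : Module.Dual ℂ V'), ∀ η, ∃ s t, ∀ k,
      conjFamily P N k η = exceptionalTable (lam * B k η) (b k * t) (b k * s) := by
  obtain ⟨P, lam, b, h⟩ := h
  obtain ⟨Q, hQ⟩ := exists_dualFamily_conjFamily_eq P N
  obtain ⟨D, hD⟩ := exists_conj_transpose_exceptionalTable ℂ
  refine ⟨D * Q, lam, b, fun η => ?_⟩
  obtain ⟨s, t, h⟩ := h η
  refine ⟨t, s, fun k => ?_⟩
  have hk : conjFamily Q N k η = (exceptionalTable (lam * B k η) (b k * t) (b k * s))ᵀ := by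
    rw [← transpose_transpose (conjFamily Q N k η), ← dualFamily_apply, hQ, h k,
      LinearMap.flip_apply]
  rw [← conjFamily_conjFamily, conjFamily_apply, hk, hD]

end Trichotomy

lemma lift_rank_le_rank_dual.{u, v} (K : Type u) (V : Type v) [Field K] [AddCommGroup V]
    [Module K V] :
    Cardinal.lift.{u} (Module.rank K V) ≤ Module.rank K (Module.Dual K V) := by
  classical
  have h := LinearMap.lift_rank_le_of_injective _ (Module.Basis.ofVectorSpace K V).toDual_injective
  rwa [Cardinal.lift_umax.{v, u}, Cardinal.lift_id'.{v, u}] at h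

section Representations
variable {E : Type*} [NormedAddCommGroup E] [NormedSpace ℂ E]

lemma isTraceSystem_coeffMatrix {ι : Type*} [Fintype ι] [CompleteSpace E]
    (hdim : 3 < Module.rank ℂ E)
    {A : Subalgebra ℂ (E →L[ℂ] E)} (hA : IsClosed (A : Set (E →L[ℂ] E)))
    (hirr : ∀ ζ : E, ζ ≠ 0 → ∀ η : E, ∃ a ∈ A, a ζ = η) {M : ℝ≥0} {u v : ι → E →L[ℂ] E}
    (hM : ∀ x : A, spectralRadius ℂ (∑ i, u i * (x : E →L[ℂ] E) * v i) ≤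
      M * spectralRadius ℂ (x : E →L[ℂ] E)) :
    IsTraceSystem (LinearMap.id : Module.Dual ℂ E →ₗ[ℂ] E →ₗ[ℂ] ℂ) (coeffMatrix u v) := by
  have hdim' : 3 < Module.rank ℂ (Module.Dual ℂ E) :=
    hdim.trans_le (by simpa using lift_rank_le_rank_dual ℂ E)
  have one_lt_three : (1 : Cardinal) < 3 := by norm_num
  exact ⟨LinearMap.id_nondegenerate, hdim, hdim', trace_coeffMatrix_eq_zero hA hirr hM,
    crossTraces_coeffMatrix (one_lt_three.trans hdim) (one_lt_three.trans hdim') hA hirr hM⟩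

lemma ext_dual {a b : E →L[ℂ] E} (h : ∀ (f : Module.Dual ℂ E) θ, f (a θ) = f (b θ)) :
    a = b :=
  ContinuousLinearMap.ext fun θ => sub_eq_zero.1 <|
    (Module.forall_dual_apply_eq_zero_iff ℂ _).1 fun f => by rw [map_sub, h, sub_self]

lemma exists_coeffMatrix_eq_conjFamily {ι : Type*} [Fintype ι] [DecidableEq ι]
    (u v : ι → E →L[ℂ] E) (P : GL ι ℂ) : ∃ u' v' : ι → E →L[ℂ] E,
      (∀ x, ∑ i, u' i * x * v' i = ∑ i, u i * x * v i) ∧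
        coeffMatrix u' v' = conjFamily P (coeffMatrix u v) := by
  refine ⟨fun j => ∑ k, P⁻¹.val k j • u k, fun i => ∑ k, P.val i k • v k, fun x => ?_, ?_⟩
  · calc ∑ i, (∑ k, P⁻¹.val k i • u k) * x * ∑ l, P.val i l • v l
        = ∑ k, ∑ l, (P⁻¹.val * P.val) k l • (u k * x * v l) := by
          simp only [mul_apply, Finset.sum_mul, Finset.mul_sum, Finset.smul_sum, mul_smul_comm,
            smul_mul_assoc, smul_smul, Finset.sum_smul]
          rw [Finset.sum_comm_cycle]
          refine Finset.sum_congr rfl fun k _ => Finset.sum_comm.trans ?_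
          simp only [mul_comm]
      _ = ∑ k, u k * x * v k := by simp [one_apply]
  · ext f θ i j
    simp [conjFamily_apply, coeffMatrix_apply, mul_apply, Finset.mul_sum, mul_comm]

lemma exists_eq_smulRight_of_apply_eq_mul {ι : Type*} {a : ι → E →L[ℂ] E} {b : E → ℂ}
    (h : ∀ f : Module.Dual ℂ E, ∃ s : ι → ℂ, ∀ η i, f (a i η) = b η * s i) :
    ∃ (ζ : ι → E) (g : E →L[ℂ] ℂ), ∀ i, a i = g.smulRight (ζ i) := by
  by_cases ha : ∀ i θ, a i θ = 0
  · exact ⟨0, 0, fun i => by ext θ; simp [ha i θ]⟩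
  push Not at ha
  obtain ⟨j, θ, hθ⟩ := ha
  obtain ⟨φ, hφ⟩ := SeparatingDual.exists_eq_one (R := ℂ) hθ
  refine ⟨fun i => a i θ, φ.comp (a j), fun i => ext_dual fun f η => ?_⟩
  obtain ⟨s, hs⟩ := h f
  obtain ⟨t, ht⟩ := h φ
  have hθt : b θ * t j = 1 := (ht θ j).symm.trans hφ
  calc f (a i η) = b η * s i := hs η i
    _ = b η * t j * (b θ * s i) := by linear_combination -b η * s i * hθt
    _ = f ((φ.comp (a j)).smulRight (a i θ) η) := by simp [← hs θ i, ← ht η j]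

lemma exists_eq_smulRight_of_apply_eq_mul' {ι : Type*} {a : ι → E →L[ℂ] E}
    {b : Module.Dual ℂ E → ℂ} (h : ∀ η, ∃ s : ι → ℂ, ∀ f i, f (a i η) = b f * s i) :
    ∃ (ζ : E) (g : ι → E →L[ℂ] ℂ), ∀ i, a i = (g i).smulRight ζ := by
  by_cases ha : ∀ i θ, a i θ = 0
  · exact ⟨0, 0, fun i => by ext θ; simp [ha i θ]⟩
  push Not at ha
  obtain ⟨j, θ, hθ⟩ := ha
  obtain ⟨φ, hφ⟩ := SeparatingDual.exists_eq_one (R := ℂ) hθ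
  refine ⟨a j θ, fun i => φ.comp (a i), fun i => ext_dual fun f η => ?_⟩
  obtain ⟨s, hs⟩ := h η
  obtain ⟨t, ht⟩ := h θ
  have hφt : b φ * t j = 1 := (ht φ j).symm.trans hφ
  calc f (a i η) = b f * s i := hs f i
    _ = b φ * s i * (b f * t j) := by linear_combination -b f * s i * hφt
    _ = f ((φ.comp (a i)).smulRight (a j θ) η) := by simp [← hs φ i, ← ht f j]

variable {u v : Fin 3 → E →L[ℂ] E}

lemma vecMulVec_eq_exceptionalTable {lam : ℂ}
    (h : ∀ f θ, ∃ x y, coeffMatrix u v f θ = exceptionalTable (lam * f θ) x y) :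
    vecMulVec v u = exceptionalTable (lam • 1) (v 1 * u 0) (v 0 * u 1) := by
  rw [eq_exceptionalTable_iff]
  simp only [vecMulVec_apply, true_and]
  refine ⟨?_, ?_, ?_, ?_, ?_, ?_, ?_⟩ <;> refine ext_dual fun f θ => ?_ <;>
    obtain ⟨x, y, hxy⟩ := h f θ <;>
    obtain ⟨h₀₀, h₁₁, h₂₂, h₀₁, h₀₂, h₁₀, h₁₂, h₂₀, h₂₁⟩ := eq_exceptionalTable_iff.1 hxy <;>
    simp_all [coeffMatrix_apply]

lemma exists_vecMulVec_eq_of_apply_eq_mul_left {lam : ℂ} {b : E → ℂ}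
    (h : ∀ f, ∃ s t, ∀ η,
      coeffMatrix u v f η = exceptionalTable (lam * f η) (b η * t) (b η * s)) :
    ∃ (ζ₀ ζ₁ : E) (f : E →L[ℂ] ℂ),
      vecMulVec v u = exceptionalTable (lam • 1) (f.smulRight ζ₀) (f.smulRight ζ₁) := by
  obtain ⟨ζ, g, hg⟩ := exists_eq_smulRight_of_apply_eq_mul (a := ![v 1 * u 0, v 0 * u 1])
    (b := b) fun f => by
      obtain ⟨s, t, h⟩ := h f
      refine ⟨![t, s], fun η => Fin.forall_fin_two.2 ⟨?_, ?_⟩⟩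
      · exact congr_fun₂ (h η) 1 0
      · exact congr_fun₂ (h η) 0 1
  refine ⟨ζ 0, ζ 1, g, ?_⟩
  rw [← hg 0, ← hg 1]
  exact vecMulVec_eq_exceptionalTable fun f θ =>
    let ⟨s, t, h⟩ := h f
    ⟨_, _, h θ⟩

lemma exists_vecMulVec_eq_of_apply_eq_mul_right {lam : ℂ} {b : Module.Dual ℂ E → ℂ}
    (h : ∀ η, ∃ s t, ∀ f,
      coeffMatrix u v f η = exceptionalTable (lam * f η) (b f * t) (b f * s)) :
    ∃ (ζ₀ : E) (f g : E →L[ℂ] ℂ),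
      vecMulVec v u = exceptionalTable (lam • 1) (f.smulRight ζ₀) (g.smulRight ζ₀) := by
  obtain ⟨ζ, g, hg⟩ := exists_eq_smulRight_of_apply_eq_mul' (a := ![v 1 * u 0, v 0 * u 1])
    (b := b) fun η => by
      obtain ⟨s, t, h⟩ := h η
      refine ⟨![t, s], fun f => Fin.forall_fin_two.2 ⟨?_, ?_⟩⟩
      · exact congr_fun₂ (h f) 1 0
      · exact congr_fun₂ (h f) 0 1
  refine ⟨ζ, g 0, g 1, ?_⟩
  rw [← hg 0, ← hg 1]
  exact vecMulVec_eq_exceptionalTable fun f θ =>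
    let ⟨s, t, h⟩ := h θ
    ⟨_, _, h f⟩

lemma IsTraceSystem.diagonal_apply_eq_zero {V V' : Type*} [AddCommGroup V] [Module ℂ V]
    [AddCommGroup V'] [Module ℂ V'] {B : V' →ₗ[ℂ] V →ₗ[ℂ] ℂ}
    {N : V' →ₗ[ℂ] V →ₗ[ℂ] Matrix (Fin 3) (Fin 3) ℂ} (hN : IsTraceSystem B N) {f : V'} {θ : V}
    (hf : B f θ = 0) (hup : (N f θ).IsUpperTriangular) (i : Fin 3) : N f θ i i = 0 := by
  obtain ⟨h₁₀, h₂₀, h₂₁⟩ := isUpperTriangular_fin_three.1 hup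
  have hcube := congr_fun₂ (hN.mul_mul_self_eq_zero hf) i i
  fin_cases i <;> simpa [mul_apply, Fin.sum_univ_three, h₁₀, h₂₀, h₂₁] using hcube

lemma mul_eq_zero_and_exists_mul_eq_smul_one
    (hN : IsTraceSystem (LinearMap.id : Module.Dual ℂ E →ₗ[ℂ] E →ₗ[ℂ] ℂ) (coeffMatrix u v))
    (hup : ∀ f θ, (coeffMatrix u v f θ).IsUpperTriangular) :
    (∀ i j, j < i → v i * u j = 0) ∧ ∀ i, ∃ c : ℂ, v i * u i = c • 1 := by
  refine ⟨fun i j hij => ext_dual fun f θ => ?_, fun i => ?_⟩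
  · simpa [coeffMatrix_apply] using hup f θ hij
  · obtain ⟨c, hc⟩ := hN.exists_eq_smul (F := entry (coeffMatrix u v) i i) fun f θ hf =>
      hN.diagonal_apply_eq_zero hf (hup f θ) i
    refine ⟨c, ext_dual fun f θ => ?_⟩
    simpa [entry_apply, coeffMatrix_apply, mul_comm] using hc f θ

end Representations

theorem exists_triangular_or_exceptionalTable {E : Type*} [NormedAddCommGroup E]
    [NormedSpace ℂ E] [CompleteSpace E] (hdim : 3 < Module.rank ℂ E)
    {A : Subalgebra ℂ (E →L[ℂ] E)} (hA : IsClosed (A : Set (E →L[ℂ] E)))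
    (hirr : ∀ ζ : E, ζ ≠ 0 → ∀ η : E, ∃ a ∈ A, a ζ = η) {M : ℝ≥0} {u v : Fin 3 → E →L[ℂ] E}
    (hM : ∀ x : A, spectralRadius ℂ (∑ i, u i * (x : E →L[ℂ] E) * v i) ≤
      M * spectralRadius ℂ (x : E →L[ℂ] E)) :
    ∃ u' v' : Fin 3 → E →L[ℂ] E, (∀ x, ∑ i, u' i * x * v' i = ∑ i, u i * x * v i) ∧
      (((∀ i j, j < i → v' i * u' j = 0) ∧ ∀ i, ∃ c : ℂ, v' i * u' i = c • 1) ∨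
        (∃ (lam : ℂ) (ζ₀ ζ₁ : E) (f : E →L[ℂ] ℂ),
          vecMulVec v' u' = exceptionalTable (lam • 1) (f.smulRight ζ₀) (f.smulRight ζ₁)) ∨
        ∃ (lam : ℂ) (ζ₀ : E) (f g : E →L[ℂ] ℂ),
          vecMulVec v' u' = exceptionalTable (lam • 1) (f.smulRight ζ₀) (g.smulRight ζ₀)) := by
  have hN := isTraceSystem_coeffMatrix hdim hA hirr hM
  rcases hN.triangularizable_or_exceptional with ⟨P, hP⟩ | ⟨P, lam, b, hP⟩ | hdual
  · obtain ⟨u', v', hsum, hconj⟩ := exists_coeffMatrix_eq_conjFamily u v P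
    replace hN := hN.conj P
    rw [← hconj] at hP hN
    exact ⟨u', v', hsum, .inl (mul_eq_zero_and_exists_mul_eq_smul_one hN hP)⟩
  · obtain ⟨u', v', hsum, hconj⟩ := exists_coeffMatrix_eq_conjFamily u v P
    rw [← hconj] at hP
    exact ⟨u', v', hsum, .inr (.inl ⟨lam, exists_vecMulVec_eq_of_apply_eq_mul_left hP⟩)⟩
  · obtain ⟨P, lam, b, hP⟩ := exists_conjFamily_eq_of_exceptional_dualFamily hdual
    obtain ⟨u', v', hsum, hconj⟩ := exists_coeffMatrix_eq_conjFamily u v P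
    rw [← hconj] at hP
    exact ⟨u', v', hsum, .inr (.inr ⟨lam, exists_vecMulVec_eq_of_apply_eq_mul_right hP⟩)⟩

end ElementaryOperator

theorem length_three_elementary_operator_spectrally_bounded_iff_general
    {E : Type*} [NormedAddCommGroup E] [NormedSpace ℂ E] [CompleteSpace E]
    (hdim : 4 ≤ Module.rank ℂ E)
    (A : Subalgebra ℂ (E →L[ℂ] E)) (hA : IsClosed (A : Set (E →L[ℂ] E)))
    (hirr : ∀ ζ : E, ζ ≠ 0 → ∀ η : E, ∃ a ∈ A, a ζ = η)
    (S : A → (E →L[ℂ] E))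
    (hrep : ∃ u v : Fin 3 → (E →L[ℂ] E),
      ∀ x : A, S x = ∑ i, u i * (x : E →L[ℂ] E) * v i) :
    (∃ M : ℝ≥0, ∀ x : A,
        spectralRadius ℂ (S x) ≤ (M : ℝ≥0∞) * spectralRadius ℂ (x : E →L[ℂ] E)) ↔
      ∃ u v : Fin 3 → (E →L[ℂ] E),
        (∀ x : A, S x = ∑ i, u i * (x : E →L[ℂ] E) * v i) ∧
        (((∀ i j : Fin 3, j < i → v i * u j = 0) ∧
            (∀ i : Fin 3, ∃ c : ℂ, v i * u i = c • (1 : E →L[ℂ] E))) ∨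
          (∃ (lam : ℂ) (ζ₀ ζ₁ : E) (f : E →L[ℂ] ℂ), Matrix.vecMulVec v u =
            ElementaryOperator.exceptionalTable (lam • 1) (f.smulRight ζ₀) (f.smulRight ζ₁)) ∨
          (∃ (lam : ℂ) (ζ₀ : E) (f g : E →L[ℂ] ℂ), Matrix.vecMulVec v u =
            ElementaryOperator.exceptionalTable (lam • 1) (f.smulRight ζ₀) (g.smulRight ζ₀))) := by
  constructor
  · rintro ⟨M, hM⟩
    obtain ⟨u, v, hS⟩ := hrep
    simp only [hS] at hM ⊢
    obtain ⟨u', v', hsum, hcases⟩ := ElementaryOperator.exists_triangular_or_exceptionalTable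
      (lt_of_lt_of_le (by norm_num) hdim) hA hirr hM
    exact ⟨u', v', fun x => (hsum x).symm, hcases⟩
  · rintro ⟨u, v, hS, ⟨hlt, hdiag⟩ | ⟨lam, ζ₀, ζ₁, f, huv⟩ | ⟨lam, ζ₀, f, g, huv⟩⟩ <;>
      simp only [hS]
    · choose c hc using hdiag
      exact ⟨_, fun x => ElementaryOperator.spectralRadius_sum_le_of_triangular hlt hc x⟩
    · exact ⟨_, fun x => ElementaryOperator.spectralRadius_sum_le_of_exceptional (.inl rfl) huv x⟩
    · exact ⟨_, fun x => ElementaryOperator.spectralRadius_sum_le_of_exceptional (.inr rfl) huv x⟩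

/-- **Theorem 4.3.** Let `E` be a complex Banach space with `dim E ≥ 4` and let
`A` be a closed irreducible subalgebra of `B(E)`.  Let `S : A → B(E)` be an
elementary operator of length `3`.  Then `S` is spectrally bounded if and only
if `S` admits a representation `Sx = Σ_{i=1}^3 u_i x v_i` with
`u_i, v_i ∈ B(E)` such that one of the three cases (i), (ii), (iii) below
occurs. -/
theorem length_three_elementary_operator_spectrally_bounded_iff
    {E : Type*} [NormedAddCommGroup E] [NormedSpace ℂ E] [CompleteSpace E]
    (hdim : 4 ≤ Module.rank ℂ E)
    (A : Subalgebra ℂ (E →L[ℂ] E)) (hA : IsClosed (A : Set (E →L[ℂ] E)))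
    (hirr : ∀ ζ : E, ζ ≠ 0 → ∀ η : E, ∃ a ∈ A, a ζ = η)
    (S : A → (E →L[ℂ] E))
    (hrep : ∃ u v : Fin 3 → (E →L[ℂ] E),
      ∀ x : A, S x = ∑ i, u i * (x : E →L[ℂ] E) * v i)
    (hlen : ∀ (m : ℕ) (u v : Fin m → (E →L[ℂ] E)),
      (∀ x : A, S x = ∑ i, u i * (x : E →L[ℂ] E) * v i) → 3 ≤ m) :
    (∃ M : ℝ≥0, ∀ x : A,
        spectralRadius ℂ (S x) ≤ (M : ℝ≥0∞) * spectralRadius ℂ (x : E →L[ℂ] E)) ↔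
      ∃ u v : Fin 3 → (E →L[ℂ] E),
        (∀ x : A, S x = ∑ i, u i * (x : E →L[ℂ] E) * v i) ∧
        (((∀ i j : Fin 3, j < i → v i * u j = 0) ∧
            (∀ i : Fin 3, ∃ c : ℂ, v i * u i = c • (1 : E →L[ℂ] E))) ∨
          (∃ (lam : ℂ) (ζ₀ ζ₁ : E) (f : E →L[ℂ] ℂ),
            v 0 * u 0 = lam • (1 : E →L[ℂ] E) ∧
            v 1 * u 1 = lam • (1 : E →L[ℂ] E) ∧
            v 2 * u 2 = lam • (1 : E →L[ℂ] E) ∧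
            v 0 * u 1 = f.smulRight ζ₁ ∧
            v 0 * u 2 = 0 ∧
            v 1 * u 0 = f.smulRight ζ₀ ∧
            v 1 * u 2 = f.smulRight ζ₁ ∧
            v 2 * u 0 = 0 ∧
            v 2 * u 1 = -(f.smulRight ζ₀)) ∨
          (∃ (lam : ℂ) (ζ₀ : E) (f g : E →L[ℂ] ℂ),
            v 0 * u 0 = lam • (1 : E →L[ℂ] E) ∧
            v 1 * u 1 = lam • (1 : E →L[ℂ] E) ∧
            v 2 * u 2 = lam • (1 : E →L[ℂ] E) ∧
            v 0 * u 1 = g.smulRight ζ₀ ∧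
            v 0 * u 2 = 0 ∧
            v 1 * u 0 = f.smulRight ζ₀ ∧
            v 1 * u 2 = g.smulRight ζ₀ ∧
            v 2 * u 0 = 0 ∧
            v 2 * u 1 = -(f.smulRight ζ₀))) := by
  simpa only [ElementaryOperator.eq_exceptionalTable_iff, Matrix.vecMulVec_apply] using
    length_three_elementary_operator_spectrally_bounded_iff_general hdim A hA hirr S hrep
end
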